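/- If p and q are strictly positive probability vectors on finite alphabets with H(p) = H(q), then the Bernoulli schemes BS(p) and BS(q) are measurably isomorphic: there exists a homomorphism from BS(p) to BS(q) which is invertible after discarding sets of measure zero, whose inverse is also a homomorphism. -/

import Mathlib

open MeasureTheory ENNReal Filter

noncomputable section

/-- The left shift transformation on bi-infinite sequences: `(shift x) n = x (n+1)`. -/
def shift {A : Type*} : (ℤ → A) → (ℤ → A) := fun x n => x (n + 1)

/-- `φ` is a homomorphism (factor map) from the shift system `(ℤ → A, μ, shift)` to
`(ℤ → B, ν, shift)`, defined on the shift-invariant full-measure domain `D`. -/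
structure IsFactorMap {A B : Type*} [MeasurableSpace A] [MeasurableSpace B]
    (μ : Measure (ℤ → A)) (ν : Measure (ℤ → B))
    (D : Set (ℤ → A)) (φ : (ℤ → A) → (ℤ → B)) : Prop where
  measurable_map : Measurable φ
  dom_measurable : MeasurableSet D
  dom_shift_invariant : shift ⁻¹' D = D
  dom_full : μ D = 1
  pushforward : ν = μ.map φ
  equivariant : ∀ x ∈ D, φ (shift x) = shift (φ x)

/-- The window `[-q, r]` of `x` determines the zero coordinate of the image under `φ`
(among points of the domain `D`). -/
def DeterminesAt {A B : Type*} (D : Set (ℤ → A)) (φ : (ℤ → A) → (ℤ → B))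
    (q r : ℕ) (x : ℤ → A) : Prop :=
  ∀ y ∈ D, (∀ i : ℤ, -(q : ℤ) ≤ i → i ≤ (r : ℤ) → y i = x i) → φ y 0 = φ x 0

/-- A homomorphism `φ` with domain `D` is finitary if for almost every `x` in the domain
there are nonnegative integers `q`, `r` such that the coordinates `x_{-q}, …, x_r`
determine `(φ x)_0`. -/
def IsFinitary {A B : Type*} [MeasurableSpace A] [MeasurableSpace B]
    (μ : Measure (ℤ → A)) (D : Set (ℤ → A)) (φ : (ℤ → A) → (ℤ → B)) : Prop :=
  ∀ᵐ x ∂μ, x ∈ D → ∃ q r : ℕ, DeterminesAt D φ q r x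

/-- The code length `C(x) = q(x) + r(x)` with `q(x), r(x)` minimal such that the window
`[-q(x), r(x)]` determines the zero output coordinate (`⊤` if no finite window works). -/
def codeLength {A B : Type*} (D : Set (ℤ → A)) (φ : (ℤ → A) → (ℤ → B))
    (x : ℤ → A) : ℝ≥0∞ :=
  ⨅ (q : ℕ) (r : ℕ) (_ : DeterminesAt D φ q r x), ((q : ℝ≥0∞) + (r : ℝ≥0∞))

/-- `μ` is the Bernoulli (product) measure on `(ℤ → A)` given by the probability vector `p`. -/
def IsBernoulliMeasure {A : Type*} [MeasurableSpace A] (μ : Measure (ℤ → A)) (p : A → ℝ) : Prop :=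
  ∀ (F : Finset ℤ) (s : ℤ → A),
    μ {x | ∀ i ∈ F, x i = s i} = ENNReal.ofReal (∏ i ∈ F, p (s i))

/-- A strictly positive probability vector on a finite alphabet. -/
def IsProbVector {A : Type*} [Fintype A] (p : A → ℝ) : Prop :=
  (∀ i, 0 < p i) ∧ ∑ i, p i = 1

/-- The entropy `H(p) = -∑ p_i log p_i` of a probability vector. -/
def vecEntropy {A : Type*} [Fintype A] (p : A → ℝ) : ℝ := -∑ i, p i * Real.log (p i)

/-- A finitary isomorphism: a pair of mutually inverse finitary factor maps. -/
def IsFinitaryIsomorphism {A B : Type*} [MeasurableSpace A] [MeasurableSpace B]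
    (μ : Measure (ℤ → A)) (ν : Measure (ℤ → B))
    (D : Set (ℤ → A)) (E : Set (ℤ → B))
    (φ : (ℤ → A) → (ℤ → B)) (ψ : (ℤ → B) → (ℤ → A)) : Prop :=
  IsFactorMap μ ν D φ ∧ IsFactorMap ν μ E ψ ∧
  IsFinitary μ D φ ∧ IsFinitary ν E ψ ∧
  (∀ x ∈ D, φ x ∈ E ∧ ψ (φ x) = x) ∧ (∀ y ∈ E, ψ y ∈ D ∧ φ (ψ y) = y)

/-- A measurable isomorphism of shift systems: a pair of mutually inverse factor maps
(after discarding sets of measure zero). -/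
def IsMeasurableIsomorphism {A B : Type*} [MeasurableSpace A] [MeasurableSpace B]
    (μ : Measure (ℤ → A)) (ν : Measure (ℤ → B))
    (D : Set (ℤ → A)) (E : Set (ℤ → B))
    (φ : (ℤ → A) → (ℤ → B)) (ψ : (ℤ → B) → (ℤ → A)) : Prop :=
  IsFactorMap μ ν D φ ∧ IsFactorMap ν μ E ψ ∧
  (∀ x ∈ D, φ x ∈ E ∧ ψ (φ x) = x) ∧ (∀ y ∈ E, ψ y ∈ D ∧ φ (ψ y) = y)

namespace Ornstein

open ProbabilityTheory

set_option linter.unusedSectionVars false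

open Classical in
/-- The list of bits recording at which positions of a finite word the marker `w` occurs. -/
def sig {A : Type*} (w : List A) : List A → List Bool
  | [] => []
  | a :: l => decide (w <+: a :: l) :: sig w l

/-- No proper nonempty suffix of `w` is a prefix of `w`. -/
def NonOverlap {A : Type*} (w : List A) : Prop :=
  ∀ i, 0 < i → i < w.length → ¬ w.drop i <+: w

/-- `S` begins with `u` and contains no other occurrence of `u`. -/
def Ren {A : Type*} (u S : List A) : Prop :=
  u <+: S ∧ ∀ i, 0 < i → ¬ u <+: S.drop i

/-- A marker bit followed by `N - 1` non-marker bits. -/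
def gapWord (N : ℕ) : List Bool := true :: List.replicate (N - 1) false

section Words
variable {A : Type*} {w : List A}

@[simp] lemma sig_nil : sig w [] = [] := rfl

@[simp] lemma length_sig (v : List A) : (sig w v).length = v.length := by
  induction v with
  | nil => rfl
  | cons a l ih => simp [sig, ih]

lemma NonOverlap.prefix_append_iff (hw : NonOverlap w) {l v : List A} (hl : l ≠ [])
    (hv : w <+: v) : w <+: l ++ v ↔ w <+: l := by
  refine ⟨fun h => ?_, fun h => h.trans (List.prefix_append _ _)⟩
  rcases le_or_gt w.length l.length with h1 | h1
  · exact List.prefix_of_prefix_length_le h (List.prefix_append _ _) h1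
  · exfalso
    have h2 : l <+: w := List.prefix_of_prefix_length_le (List.prefix_append _ _) h h1.le
    obtain ⟨t, rfl⟩ := h2
    have h3 : t <+: v := (List.prefix_append_right_inj l).1 h
    have h4 : t <+: l ++ t := List.prefix_of_prefix_length_le h3 hv (by simp)
    have := hw l.length (List.length_pos_iff.2 hl) h1
    simp at this
    exact this h4

lemma sig_append (hw : NonOverlap w) {l v : List A} (hv : w <+: v) :
    sig w (l ++ v) = sig w l ++ sig w v := by
  induction l with
  | nil => rfl
  | cons a l ih =>
    have := hw.prefix_append_iff (l := a :: l) (by simp) hv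
    simp only [List.cons_append] at this
    simp [sig, ih, this]

lemma sig_flatten (hw : NonOverlap w) {V : List (List A)} (hV : ∀ v ∈ V, w <+: v) :
    sig w V.flatten = (V.map (sig w)).flatten := by
  induction V with
  | nil => rfl
  | cons v V ih =>
    have ih := ih (fun v hv => hV v (by simp [hv]))
    cases V with
    | nil => simp
    | cons v' V =>
      rw [List.flatten_cons, sig_append hw, ih]
      · simp
      · rw [List.flatten_cons]
        exact (hV v' (by simp)).trans (List.prefix_append _ _)

lemma prefix_of_head_sig {v : List A} (h : [true] <+: sig w v) : w <+: v := by
  cases v with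
  | nil => simp at h
  | cons a l => simpa [sig, List.cons_prefix_cons] using h

lemma sig_drop (v : List A) (n : ℕ) : sig w (v.drop n) = (sig w v).drop n := by
  induction v generalizing n with
  | nil => simp
  | cons a l ih => cases n with
    | zero => rfl
    | succ n => simp [sig, ih]

/-- Splitting a word according to a decomposition of its signature. -/
lemma exists_split (hw : NonOverlap w) {ss : List (List Bool)} (hs : ∀ s ∈ ss, [true] <+: s)
    {v : List A} (hv : sig w v = ss.flatten) :
    ∃ V : List (List A), V.map (sig w) = ss ∧ V.flatten = v := by
  induction ss generalizing v with
  | nil =>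
    have := congrArg List.length hv
    simp at this
    exact ⟨[], by simp [this]⟩
  | cons s ss ih =>
    have hlen := congrArg List.length hv
    rw [length_sig, List.flatten_cons, List.length_append] at hlen
    have h2 : sig w (v.drop s.length) = ss.flatten := by
      rw [sig_drop, hv]; simp
    obtain ⟨V, hV, hV'⟩ := ih (fun s' hs' => hs s' (by simp [hs'])) h2
    refine ⟨v.take s.length :: V, ?_, by simp [hV']⟩
    have h1 : sig w v = sig w (v.take s.length) ++ ss.flatten := by
      rcases ss with _ | ⟨s', ss⟩
      · have : v.take s.length = v := by
          apply List.take_of_length_le; simp at hlen; omega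
        simp [this]
      · conv_lhs => rw [← List.take_append_drop s.length v]
        rw [sig_append hw, h2]
        apply prefix_of_head_sig
        rw [h2, List.flatten_cons]
        exact (hs s' (by simp)).trans (List.prefix_append _ _)
    rw [hv, List.flatten_cons] at h1
    simp [hV, List.append_cancel_right h1.symm]

lemma flatten_injOn {V V' : List (List A)} (h : V.map List.length = V'.map List.length)
    (hf : V.flatten = V'.flatten) : V = V' := by
  induction V generalizing V' with
  | nil => cases V' <;> simp_all
  | cons v V ih =>
    cases V' with
    | nil => simp at h
    | cons v' V' =>
      simp only [List.map_cons, List.cons.injEq] at h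
      simp only [List.flatten_cons] at hf
      obtain ⟨h1, h2⟩ := List.append_inj hf h.1
      rw [h1, ih h.2 h2]

lemma gapWord_drop {N i : ℕ} (hi : 0 < i) :
    (gapWord N).drop i = List.replicate (N - 1 - (i - 1)) false := by
  obtain ⟨i, rfl⟩ := Nat.exists_eq_succ_of_ne_zero hi.ne'
  simp [gapWord]

lemma nonOverlap_gapWord (N : ℕ) : NonOverlap (gapWord N) := by
  intro i hi hi' h
  rw [gapWord_drop hi] at h
  have h1 : N - 1 - (i - 1) ≠ 0 := by
    simp [gapWord] at hi'; omega
  obtain ⟨m, hm⟩ := Nat.exists_eq_succ_of_ne_zero h1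
  rw [hm, List.replicate_succ, gapWord, List.cons_prefix_cons] at h
  simp at h

lemma length_gapWord {N : ℕ} (hN : 0 < N) : (gapWord N).length = N := by
  simp [gapWord]; omega

lemma gapWord_isPrefix {M N : ℕ} (h : M ≤ N) : gapWord M <+: gapWord N := by
  rw [gapWord, gapWord, List.cons_prefix_cons]
  refine ⟨rfl, ?_⟩
  obtain ⟨d, hd⟩ : ∃ d, N - 1 = (M - 1) + d := ⟨N - 1 - (M - 1), by omega⟩
  rw [hd, List.replicate_add]
  exact List.prefix_append _ _

lemma gapWord_ne_nil (N : ℕ) : gapWord N ≠ [] := by simp [gapWord]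

lemma head_of_gapWord_isPrefix {N : ℕ} {S : List Bool} (h : gapWord N <+: S) : [true] <+: S :=
  List.IsPrefix.trans (by simp [gapWord, List.cons_prefix_cons]) h

/-- A word beginning with the non-overlapping word `u` is a concatenation of words in which `u`
occurs exactly once, at the beginning. -/
lemma exists_factorization {u : List A} (hu : NonOverlap u) (hu0 : u ≠ []) {S : List A}
    (hS : u <+: S) : ∃ ss : List (List A), (∀ s ∈ ss, Ren u s) ∧ ss.flatten = S := by
  induction hn : S.length using Nat.strong_induction_on generalizing S with
  | _ n ih =>
  subst hn
  by_cases hex : ∃ i, 0 < i ∧ u <+: S.drop i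
  · classical
    set i := Nat.find hex with hi
    obtain ⟨hi0, hiu⟩ := Nat.find_spec hex
    rw [← hi] at hi0 hiu
    have hiS : i < S.length := by
      by_contra hcon
      rw [List.drop_eq_nil_of_le (by omega), List.prefix_nil] at hiu
      exact hu0 hiu
    obtain ⟨ss, hss, hf⟩ := ih (S.drop i).length (by simp; omega) hiu rfl
    refine ⟨S.take i :: ss, ?_, by simp [hf]⟩
    intro s hs
    rcases List.mem_cons.1 hs with rfl | hs
    · refine ⟨?_, ?_⟩
      · rw [← hu.prefix_append_iff _ hiu, List.take_append_drop]
        · exact hS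
        · intro h
          have : (S.take i).length = 0 := by rw [h]; rfl
          rw [List.length_take] at this
          omega
      · intro j hj hju
        rcases le_or_gt i j with hij | hij
        · rw [List.drop_eq_nil_of_le (by simp; omega), List.prefix_nil] at hju
          exact hu0 hju
        · refine Nat.find_min hex (hi ▸ hij) ⟨hj, hju.trans ?_⟩
          rw [List.drop_take]
          exact ⟨_, List.take_append_drop _ _⟩
    · exact hss s hs
  · push Not at hex
    exact ⟨[S], by simpa using ⟨hS, hex⟩, by simp⟩

end Words

section Acyclic
variable {U V : Type*}

/-- More edges than vertices force a nonzero circulation. -/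
lemma exists_circulation [DecidableEq U] [DecidableEq V] (E : Finset (U × V)) (U' : Finset U)
    (V' : Finset V) (hE : E ⊆ U' ×ˢ V') (hcard : U'.card + V'.card < E.card) :
    ∃ d : U × V → ℝ, (∀ e, e ∉ E → d e = 0) ∧ (∃ e, d e ≠ 0) ∧
      (∀ (u : U) (FV : Finset V), V' ⊆ FV → ∑ v ∈ FV, d (u, v) = 0) ∧
      (∀ (v : V) (FU : Finset U), U' ⊆ FU → ∑ u ∈ FU, d (u, v) = 0) := by
  classical
  let ext : (E → ℝ) → U × V → ℝ := fun f e => if h : e ∈ E then f ⟨e, h⟩ else 0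
  have ext_add : ∀ f g e, ext (f + g) e = ext f e + ext g e := by
    intro f g e; by_cases h : e ∈ E <;> simp [ext, h]
  have ext_smul : ∀ (c : ℝ) g e, ext (c • g) e = c * ext g e := by
    intro c g e; by_cases h : e ∈ E <;> simp [ext, h]
  let T : (E → ℝ) →ₗ[ℝ] ((U' → ℝ) × (V' → ℝ)) :=
    { toFun := fun f => (fun u => ∑ v ∈ V', ext f (u, v), fun v => ∑ u ∈ U', ext f (u, v))
      map_add' := by
        intro f g
        ext i <;> simp [ext_add, Finset.sum_add_distrib]
      map_smul' := by
        intro c f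
        ext i <;> simp [ext_smul, Finset.mul_sum] }
  have hker : LinearMap.ker T ≠ ⊥ := by
    apply LinearMap.ker_ne_bot_of_finrank_lt
    simpa using hcard
  obtain ⟨f, hf, hf0⟩ := Submodule.exists_mem_ne_zero_of_ne_bot hker
  rw [LinearMap.mem_ker] at hf
  have h1 : ∀ u ∈ U', ∑ v ∈ V', ext f (u, v) = 0 := fun u hu =>
    congrFun (congrArg Prod.fst hf) ⟨u, hu⟩
  have h2 : ∀ v ∈ V', ∑ u ∈ U', ext f (u, v) = 0 := fun v hv =>
    congrFun (congrArg Prod.snd hf) ⟨v, hv⟩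
  have hout : ∀ e, e ∉ E → ext f e = 0 := fun e he => by simp [ext, he]
  have houtU : ∀ u v, u ∉ U' → ext f (u, v) = 0 := fun u v hu =>
    hout _ fun h => hu (Finset.mem_product.1 (hE h)).1
  have houtV : ∀ u v, v ∉ V' → ext f (u, v) = 0 := fun u v hv =>
    hout _ fun h => hv (Finset.mem_product.1 (hE h)).2
  refine ⟨ext f, hout, ?_, ?_, ?_⟩
  · obtain ⟨e, he⟩ := Function.ne_iff.1 hf0
    exact ⟨e.1, by simpa [ext] using he⟩
  · intro u FV hFV
    rw [← Finset.sum_subset hFV (fun v _ hv => houtV u v hv)]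
    by_cases hu : u ∈ U'
    · exact h1 u hu
    · exact Finset.sum_eq_zero fun v _ => houtU u v hu
  · intro v FU hFU
    rw [← Finset.sum_subset hFU (fun u _ hu => houtU u v hu)]
    by_cases hv : v ∈ V'
    · exact h2 v hv
    · exact Finset.sum_eq_zero fun u _ => houtV u v hv

/-- Every finite coupling can be replaced by one with smaller support whose support graph has
few edges between any two sets of vertices. -/
lemma exists_acyclic_coupling (FU : Finset U) (FV : Finset V) (c : U × V → ℝ)
    (hc : ∀ e, 0 ≤ c e) :
    ∃ κ : U × V → ℝ, (∀ e, 0 ≤ κ e) ∧ (∀ e, κ e ≠ 0 → e.1 ∈ FU ∧ e.2 ∈ FV ∧ 0 < c e) ∧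
      (∀ u ∈ FU, ∑ v ∈ FV, κ (u, v) = ∑ v ∈ FV, c (u, v)) ∧
      (∀ v ∈ FV, ∑ u ∈ FU, κ (u, v) = ∑ u ∈ FU, c (u, v)) ∧
      ∀ (U' : Finset U) (V' : Finset V) (E : Finset (U × V)), E ⊆ U' ×ˢ V' →
        (∀ e ∈ E, κ e ≠ 0) → E.card ≤ U'.card + V'.card := by
  classical
  let Good : Set (U × V → ℝ) := {κ | (∀ e, 0 ≤ κ e) ∧
    (∀ e, κ e ≠ 0 → e.1 ∈ FU ∧ e.2 ∈ FV ∧ 0 < c e) ∧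
      (∀ u ∈ FU, ∑ v ∈ FV, κ (u, v) = ∑ v ∈ FV, c (u, v)) ∧
      (∀ v ∈ FV, ∑ u ∈ FU, κ (u, v) = ∑ u ∈ FU, c (u, v))}
  let supp : (U × V → ℝ) → Finset (U × V) := fun κ => {e ∈ FU ×ˢ FV | κ e ≠ 0}
  have hne : Good.Nonempty := by
    refine ⟨fun e => if e.1 ∈ FU ∧ e.2 ∈ FV then c e else 0, ?_, ?_, ?_, ?_⟩
    · intro e; dsimp only; split_ifs; exacts [hc e, le_rfl]
    · intro e he
      dsimp only at he
      split_ifs at he with h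
      · exact ⟨h.1, h.2, lt_of_le_of_ne (hc e) (Ne.symm he)⟩
      · exact absurd rfl he
    · intro u hu
      exact Finset.sum_congr rfl fun v hv => by simp [hu, hv]
    · intro v hv
      exact Finset.sum_congr rfl fun u hu => by simp [hu, hv]
  let κ := Function.argminOn (fun κ => (supp κ).card) Good hne
  have hκ : κ ∈ Good := Function.argminOn_mem _ _ _
  have hmin : ∀ κ' ∈ Good, (supp κ).card ≤ (supp κ').card := fun κ' h =>
    Function.argminOn_le (fun κ => (supp κ).card) Good h
  clear_value κ
  obtain ⟨hκ0, hκs, hκr, hκc⟩ := hκ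
  refine ⟨κ, hκ0, hκs, hκr, hκc, ?_⟩
  intro U' V' E hE hEκ
  by_contra hcon
  push Not at hcon
  have hUF : E ⊆ (U' ∩ FU) ×ˢ (V' ∩ FV) := by
    intro e he
    have h1 := Finset.mem_product.1 (hE he)
    have h2 := hκs e (hEκ e he)
    simp [h1.1, h1.2, h2.1, h2.2.1]
  obtain ⟨d, hd0, ⟨e0, he0⟩, hdr, hdc⟩ := exists_circulation E (U' ∩ FU) (V' ∩ FV) hUF
    (lt_of_le_of_lt (add_le_add (Finset.card_le_card Finset.inter_subset_left)
      (Finset.card_le_card Finset.inter_subset_left)) hcon)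
  have hdr' : ∀ u, ∑ v ∈ FV, d (u, v) = 0 := fun u => hdr u FV Finset.inter_subset_right
  have hdc' : ∀ v, ∑ u ∈ FU, d (u, v) = 0 := fun v => hdc v FU Finset.inter_subset_right
  have hdE : ∀ e, d e ≠ 0 → e ∈ E := fun e h => by
    by_contra h'; exact h (hd0 e h')
  have hneg : ({e ∈ E | d e < 0} : Finset (U × V)).Nonempty := by
    have he0E := hdE e0 he0
    rcases lt_or_gt_of_ne he0 with h | h
    · exact ⟨e0, by simp [he0E, h]⟩
    · have hv : e0.2 ∈ FV := (hκs e0 (hEκ e0 he0E)).2.1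
      by_contra hno
      rw [Finset.not_nonempty_iff_eq_empty, Finset.filter_eq_empty_iff] at hno
      have hnn : ∀ v ∈ FV, 0 ≤ d (e0.1, v) := by
        intro v _
        by_cases hh : (e0.1, v) ∈ E
        · exact not_lt.1 (hno hh)
        · exact (hd0 _ hh).ge
      have := (Finset.sum_eq_zero_iff_of_nonneg hnn).1 (hdr' e0.1) e0.2 hv
      exact he0 this
  obtain ⟨e1, he1, hmin1⟩ := Finset.exists_min_image _ (fun e => κ e / (- d e)) hneg
  simp only [Finset.mem_filter] at he1 hmin1
  set t := κ e1 / (- d e1) with ht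
  have hd1 : 0 < - d e1 := by linarith [he1.2]
  have ht0 : 0 ≤ t := div_nonneg (hκ0 _) hd1.le
  have hgood : (fun e => κ e + t * d e) ∈ Good := by
    refine ⟨?_, ?_, ?_, ?_⟩
    · intro e
      rcases lt_or_ge (d e) 0 with h | h
      · have := hmin1 e ⟨hdE e h.ne, h⟩
        rw [le_div_iff₀ (by linarith)] at this
        dsimp only
        linarith
      · exact add_nonneg (hκ0 e) (mul_nonneg ht0 h)
    · intro e he
      apply hκs
      intro h
      have : d e = 0 := hd0 e fun h' => hEκ e h' h
      simp [h, this] at he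
    · intro u hu
      rw [Finset.sum_add_distrib, ← Finset.mul_sum, hdr', hκr u hu]; ring
    · intro v hv
      rw [Finset.sum_add_distrib, ← Finset.mul_sum, hdc', hκc v hv]; ring
  have hlt : supp (fun e => κ e + t * d e) ⊂ supp κ := by
    rw [Finset.ssubset_iff_of_subset]
    · refine ⟨e1, ?_, ?_⟩
      · have := hκs e1 (hEκ e1 he1.1)
        simp [supp, this.1, this.2.1, hEκ e1 he1.1]
      · have : κ e1 + t * d e1 = 0 := by
          have : d e1 ≠ 0 := he1.2.ne
          rw [ht, div_neg, neg_mul, div_mul_cancel₀ _ this, add_neg_cancel]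
        simp [supp, this]
    · intro e he
      simp only [supp, Finset.mem_filter] at he ⊢
      refine ⟨he.1, fun h => he.2 ?_⟩
      have : d e = 0 := hd0 e fun h' => hEκ e h' h
      simp [h, this]
  exact absurd (hmin _ hgood) (not_le.2 (Finset.card_lt_card hlt))

/-- In a graph with few edges, few vertices on one side have two neighbours in a given set. -/
lemma card_two_partners_le {κ : U × V → ℝ} (h : ∀ (U' : Finset U) (V' : Finset V)
      (E : Finset (U × V)), E ⊆ U' ×ˢ V' → (∀ e ∈ E, κ e ≠ 0) → E.card ≤ U'.card + V'.card)
    (U' : Finset U) (V' : Finset V)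
    (hU : ∀ u ∈ U', ∃ v₁ ∈ V', ∃ v₂ ∈ V', v₁ ≠ v₂ ∧ κ (u, v₁) ≠ 0 ∧ κ (u, v₂) ≠ 0) :
    U'.card ≤ V'.card := by
  classical
  let E : Finset (U × V) := {e ∈ U' ×ˢ V' | κ e ≠ 0}
  have h1 : E.card ≤ U'.card + V'.card := h U' V' E (Finset.filter_subset _ _) (by simp [E])
  have h2 : U'.card * 2 ≤ E.card := by
    rw [Finset.card_eq_sum_card_fiberwise (f := Prod.fst) (s := E) (t := U')
      (fun e he => (Finset.mem_product.1 (Finset.mem_filter.1 he).1).1), ← smul_eq_mul]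
    refine Finset.card_nsmul_le_sum _ _ _ fun u hu => ?_
    obtain ⟨v₁, h₁, v₂, h₂, hne, hk₁, hk₂⟩ := hU u hu
    refine Finset.one_lt_card.2 ⟨(u, v₁), ?_, (u, v₂), ?_, by simp [hne]⟩ <;> simp [E, *]
  omega

end Acyclic

/-- Lists whose entries lie in prescribed finite fibers. -/
def fibl {S α : Type*} (F : S → Finset α) : List S → Finset (List α)
  | [] => {[]}
  | s :: ss => (F s ×ˢ fibl F ss).map
      ⟨fun z => z.1 :: z.2, fun _ _ h => Prod.ext (List.cons.inj h).1 (List.cons.inj h).2⟩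

/-- The product of a two-variable kernel along two lists of the same length. -/
def zipProd {X Y : Type*} (c : X → Y → ℝ) : List X → List Y → ℝ
  | [], [] => 1
  | x :: V, y :: W => c x y * zipProd c V W
  | _, _ => 0

section Lists
variable {S X Y M : Type*}

lemma mem_fibl_cons {F : S → Finset X} {s : S} {ss : List S} {V : List X} :
    V ∈ fibl F (s :: ss) ↔ ∃ x ∈ F s, ∃ V' ∈ fibl F ss, V = x :: V' := by
  simp [fibl]
  constructor
  · rintro ⟨x, V', ⟨h1, h2⟩, rfl⟩; exact ⟨x, h1, V', h2, rfl⟩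
  · rintro ⟨x, h1, V', h2, rfl⟩; exact ⟨x, V', ⟨h1, h2⟩, rfl⟩

lemma sum_fibl_cons (F : S → Finset X) (s : S) (ss : List S) (f : List X → ℝ) :
    ∑ V ∈ fibl F (s :: ss), f V = ∑ x ∈ F s, ∑ V ∈ fibl F ss, f (x :: V) := by
  rw [fibl, Finset.sum_map, Finset.sum_product]; rfl

@[simp] lemma sum_fibl_nil (F : S → Finset X) (f : List X → ℝ) :
    ∑ V ∈ fibl F [], f V = f [] := by simp [fibl]

lemma mem_fibl_iff {F : S → Finset X} {sx : X → S} (hF : ∀ s x, x ∈ F s ↔ sx x = s)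
    {ss : List S} {V : List X} : V ∈ fibl F ss ↔ V.map sx = ss := by
  induction ss generalizing V with
  | nil => simp [fibl]
  | cons s ss ih =>
    rw [mem_fibl_cons]
    constructor
    · rintro ⟨x, hx, V', hV', rfl⟩
      simp [(hF s x).1 hx, ih.1 hV']
    · intro h
      cases V with
      | nil => simp at h
      | cons x V' =>
        simp only [List.map_cons, List.cons.injEq] at h
        exact ⟨x, (hF s x).2 h.1, V', ih.2 h.2, rfl⟩

lemma zipProd_nonneg {c : X → Y → ℝ} (hc : ∀ x y, 0 ≤ c x y) (V : List X) (W : List Y) :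
    0 ≤ zipProd c V W := by
  induction V generalizing W with
  | nil => cases W <;> simp [zipProd]
  | cons x V ih => cases W with
    | nil => simp [zipProd]
    | cons y W => exact mul_nonneg (hc x y) (ih W)

lemma sum_zipProd_right {FX : S → Finset X} {FY : S → Finset Y} {c : X → Y → ℝ} {P : X → ℝ}
    {ss : List S} (h : ∀ s ∈ ss, ∀ x ∈ FX s, ∑ y ∈ FY s, c x y = P x) {V : List X}
    (hV : V ∈ fibl FX ss) : ∑ W ∈ fibl FY ss, zipProd c V W = (V.map P).prod := by
  induction ss generalizing V with
  | nil =>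
    rw [fibl, Finset.mem_singleton] at hV
    simp [hV, zipProd]
  | cons s ss ih =>
    obtain ⟨x, hx, V, hV1, rfl⟩ := mem_fibl_cons.1 hV
    rw [sum_fibl_cons]
    simp only [zipProd, ← Finset.mul_sum]
    rw [ih (fun s hs => h s (by simp [hs])) hV1, ← Finset.sum_mul, h s (by simp) x hx]
    simp

lemma sum_zipProd_left {FX : S → Finset X} {FY : S → Finset Y} {c : X → Y → ℝ} {Q : Y → ℝ}
    {ss : List S} (h : ∀ s ∈ ss, ∀ y ∈ FY s, ∑ x ∈ FX s, c x y = Q y) {W : List Y}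
    (hW : W ∈ fibl FY ss) : ∑ V ∈ fibl FX ss, zipProd c V W = (W.map Q).prod := by
  induction ss generalizing W with
  | nil =>
    rw [fibl, Finset.mem_singleton] at hW
    simp [hW, zipProd]
  | cons s ss ih =>
    obtain ⟨y, hy, W, hW1, rfl⟩ := mem_fibl_cons.1 hW
    rw [sum_fibl_cons]
    simp only [zipProd, ← Finset.mul_sum]
    rw [ih (fun s hs => h s (by simp [hs])) hW1, ← Finset.sum_mul, h s (by simp) y hy]
    simp

lemma sum_fibl_map {FY : S → Finset Y} {FM : S → Finset M} {mk : Y → M} {Q : Y → ℝ}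
    {R : M → ℝ} {ss : List S}
    (h : ∀ s ∈ ss, ∀ g : M → ℝ, ∑ y ∈ FY s, g (mk y) * Q y = ∑ m ∈ FM s, g m * R m)
    (g : List M → ℝ) :
    ∑ W ∈ fibl FY ss, g (W.map mk) * (W.map Q).prod
      = ∑ m ∈ fibl FM ss, g m * (m.map R).prod := by
  induction ss generalizing g with
  | nil => simp
  | cons s ss ih =>
    have ih := fun g => ih (fun s hs => h s (by simp [hs])) g
    rw [sum_fibl_cons, sum_fibl_cons]
    have h1 : ∀ y : Y, ∑ W ∈ fibl FY ss, g ((y :: W).map mk) * ((y :: W).map Q).prod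
        = (∑ m ∈ fibl FM ss, g (mk y :: m) * (m.map R).prod) * Q y := by
      intro y
      rw [← ih, Finset.sum_mul]
      refine Finset.sum_congr rfl fun W _ => ?_
      simp; ring
    simp only [h1]
    rw [h s (by simp) fun m' => ∑ m ∈ fibl FM ss, g (m' :: m) * (m.map R).prod]
    refine Finset.sum_congr rfl fun m' _ => ?_
    rw [Finset.sum_mul]
    refine Finset.sum_congr rfl fun W _ => ?_
    simp; ring

lemma map_mem_fibl {FY : S → Finset Y} {FM : S → Finset M} {mk : Y → M}
    (h : ∀ s, ∀ y ∈ FY s, mk y ∈ FM s) {ss : List S} {W : List Y} (hW : W ∈ fibl FY ss) :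
    W.map mk ∈ fibl FM ss := by
  induction ss generalizing W with
  | nil => simp_all [fibl]
  | cons s ss ih =>
    obtain ⟨y, hy, W, hW1, rfl⟩ := mem_fibl_cons.1 hW
    exact mem_fibl_cons.2 ⟨mk y, h s y hy, W.map mk, ih hW1, rfl⟩

open Classical in
/-- Forget the entries whose skeleton is `s₀`. -/
def maskEntry (sy : Y → S) (s₀ : S) (y : Y) : Option Y := if sy y = s₀ then none else some y

open Classical in
/-- Fibers after masking. -/
def maskFib (FY : S → Finset Y) (s₀ s : S) : Finset (Option Y) :=
  if s = s₀ then {none} else (FY s).map Function.Embedding.some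

/-- Weights after masking. -/
def maskWt (FY : S → Finset Y) (Q : Y → ℝ) (s₀ : S) : Option Y → ℝ
  | none => ∑ y ∈ FY s₀, Q y
  | some y => Q y

/-- The kernel after masking. -/
def maskKer (P : X → ℝ) (l : X → Y → ℝ) (x : X) : Option Y → ℝ
  | none => P x
  | some y => l x y

lemma list_prod_pos {Q : Y → ℝ} (hQ : ∀ y, 0 < Q y) (W : List Y) : 0 < (W.map Q).prod := by
  induction W with
  | nil => simp
  | cons y W ih => simpa using mul_pos (hQ y) ih

lemma forall₂_of_zipProd_mask {sx : X → S} {sy : Y → S} {FX : S → Finset X} {FY : S → Finset Y}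
    (hFX : ∀ s x, x ∈ FX s ↔ sx x = s) (hFY : ∀ s y, y ∈ FY s ↔ sy y = s)
    {P : X → ℝ} {l : X → Y → ℝ} (hl : ∀ x y, 0 ≤ l x y) {s₀ : S} {ss : List S} {V : List X}
    {W : List Y}
    (hV : V ∈ fibl FX ss) (hW : W ∈ fibl FY ss)
    (h : zipProd (maskKer P l) V (W.map (maskEntry sy s₀)) ≠ 0) :
    List.Forall₂ (fun x y => sx x = sy y ∧ (sx x = s₀ ∨ 0 < l x y)) V W := by
  induction ss generalizing V W with
  | nil => simp_all [fibl]
  | cons s ss ih =>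
    obtain ⟨x, hx, V, hV1, rfl⟩ := mem_fibl_cons.1 hV
    obtain ⟨y, hy, W, hW1, rfl⟩ := mem_fibl_cons.1 hW
    rw [List.map_cons, zipProd] at h
    have hs : sx x = sy y := ((hFX s x).1 hx).trans ((hFY s y).1 hy).symm
    refine List.Forall₂.cons ⟨hs, ?_⟩ (ih hV1 hW1 (right_ne_zero_of_mul h))
    by_cases h0 : sy y = s₀
    · left; rw [hs, h0]
    · right
      have h1 := left_ne_zero_of_mul h
      rw [maskEntry, if_neg h0] at h1
      exact lt_of_le_of_ne (hl x y) (Ne.symm h1)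

open Classical in
lemma prod_le_mask {sy : Y → S} {FY : S → Finset Y} (hFY : ∀ s y, y ∈ FY s ↔ sy y = s)
    {Q : Y → ℝ} (hQ : ∀ y, 0 < Q y) {s₀ : S} {θ : ℝ}
    (hθQ : ∀ y ∈ FY s₀, Q y ≤ θ * ∑ y ∈ FY s₀, Q y) {ss : List S} {W : List Y}
    (hW : W ∈ fibl FY ss) :
    (W.map Q).prod ≤
      θ ^ ss.count s₀ * ((W.map (maskEntry sy s₀)).map (maskWt FY Q s₀)).prod := by
  induction ss generalizing W with
  | nil => simp_all [fibl]
  | cons s ss ih =>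
    obtain ⟨y, hy, W, hW1, rfl⟩ := mem_fibl_cons.1 hW
    have hsy := (hFY s y).1 hy
    have ih := ih hW1
    have h0 := (list_prod_pos hQ W).le
    simp only [List.map_cons, List.prod_cons]
    by_cases h : s = s₀
    · subst h
      rw [List.count_cons_self, pow_succ, maskEntry, if_pos hsy, maskWt]
      have h1 := hθQ y hy
      calc Q y * (W.map Q).prod ≤ (θ * ∑ y ∈ FY s, Q y) * (W.map Q).prod := by gcongr
        _ ≤ (θ * ∑ y ∈ FY s, Q y) * _ :=
            mul_le_mul_of_nonneg_left ih ((hQ y).le.trans h1)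
        _ = _ := by ring
    · rw [List.count_cons_of_ne h, maskEntry, if_neg (by rw [hsy]; exact h), maskWt]
      calc Q y * (W.map Q).prod ≤ Q y * _ := mul_le_mul_of_nonneg_left ih (hQ y).le
        _ = _ := by ring

open Classical in
/-- Given couplings of the fibers over each entry of `ss`, there is a coupling of the fibers over
`ss` which respects the given couplings away from `s₀`, and for which few lists `V` have several
likely partners that differ away from `s₀`. -/
theorem exists_step_coupling {sx : X → S} {sy : Y → S} {FX : S → Finset X} {FY : S → Finset Y}
    (hFX : ∀ s x, x ∈ FX s ↔ sx x = s) (hFY : ∀ s y, y ∈ FY s ↔ sy y = s)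
    {P : X → ℝ} {Q : Y → ℝ} (hP : ∀ x, 0 < P x) (hQ : ∀ y, 0 < Q y)
    {l : X → Y → ℝ} (hl : ∀ x y, 0 ≤ l x y) {ss : List S}
    (hrow : ∀ s ∈ ss, ∀ x ∈ FX s, ∑ y ∈ FY s, l x y = P x)
    (hcol : ∀ s ∈ ss, ∀ y ∈ FY s, ∑ x ∈ FX s, l x y = Q y)
    {s₀ : S} {θ : ℝ} (hθ : 0 < θ) (hθQ : ∀ y ∈ FY s₀, Q y ≤ θ * ∑ y ∈ FY s₀, Q y)
    (hne : (FY s₀).Nonempty) :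
    ∃ L : List X → List Y → ℝ, (∀ V W, 0 ≤ L V W) ∧
      (∀ V W, L V W ≠ 0 → V ∈ fibl FX ss ∧ W ∈ fibl FY ss ∧
        List.Forall₂ (fun x y => sx x = sy y ∧ (sx x = s₀ ∨ 0 < l x y)) V W) ∧
      (∀ V ∈ fibl FX ss, ∑ W ∈ fibl FY ss, L V W = (V.map P).prod) ∧
      (∀ W ∈ fibl FY ss, ∑ V ∈ fibl FX ss, L V W = (W.map Q).prod) ∧
      ∀ α β : ℝ, 0 ≤ α → 0 < β → ∀ Bad ⊆ fibl FX ss,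
        (∀ V ∈ Bad, (V.map P).prod ≤ α ∧ ∃ W₁ W₂, L V W₁ ≠ 0 ∧ L V W₂ ≠ 0 ∧
          β ≤ (W₁.map Q).prod ∧ β ≤ (W₂.map Q).prod ∧
          W₁.map (maskEntry sy s₀) ≠ W₂.map (maskEntry sy s₀)) →
        ∑ V ∈ Bad, (V.map P).prod ≤
          α * θ ^ ss.count s₀ * (∑ V ∈ fibl FX ss, (V.map P).prod) / β := by
  set FM := maskFib FY s₀ with hFM
  set R := maskWt FY Q s₀ with hR
  set mk := maskEntry sy s₀ with hmk
  set c := maskKer P l with hc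
  have hc0 : ∀ x m, 0 ≤ c x m := by
    rintro x (_ | y)
    exacts [(hP x).le, hl x y]
  have hRpos : ∀ m, 0 < R m := by
    rintro (_ | y)
    exacts [Finset.sum_pos (fun y _ => hQ y) hne, hQ y]
  have hcrow : ∀ s ∈ ss, ∀ x ∈ FX s, ∑ m ∈ FM s, c x m = P x := by
    intro s hs x hx
    by_cases h : s = s₀
    · simp [hFM, maskFib, h, hc, maskKer]
    · simp [hFM, maskFib, h, hc, maskKer, hrow s hs x hx]
  have hccol : ∀ s ∈ ss, ∀ m ∈ FM s, ∑ x ∈ FX s, c x m = R m := by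
    intro s hs m hm
    by_cases h : s = s₀
    · subst h
      simp only [hFM, maskFib, if_true, Finset.mem_singleton] at hm
      subst hm
      simp only [hc, maskKer, hR, maskWt]
      rw [← Finset.sum_congr rfl (hrow s hs), Finset.sum_comm]
      exact Finset.sum_congr rfl (hcol s hs)
    · simp only [hFM, maskFib, if_neg h, Finset.mem_map] at hm
      obtain ⟨y, hy, rfl⟩ := hm
      exact hcol s hs y hy
  have hmkFM : ∀ s, ∀ y ∈ FY s, mk y ∈ FM s := by
    intro s y hy
    have := (hFY s y).1 hy
    by_cases h : s = s₀
    · simp [hmk, maskEntry, hFM, maskFib, this, h]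
    · simp [hmk, maskEntry, hFM, maskFib, this, h, hy]
  have hpush : ∀ s, ∀ g : Option Y → ℝ,
      ∑ y ∈ FY s, g (mk y) * Q y = ∑ m ∈ FM s, g m * R m := by
    intro s g
    by_cases h : s = s₀
    · subst h
      simp only [hFM, maskFib, if_true, Finset.sum_singleton, hR, maskWt, Finset.mul_sum]
      refine Finset.sum_congr rfl fun y hy => ?_
      rw [hmk, maskEntry, if_pos ((hFY s y).1 hy)]
    · simp only [hFM, maskFib, if_neg h, Finset.sum_map]
      refine Finset.sum_congr rfl fun y hy => ?_
      rw [hmk, maskEntry, if_neg (by rw [(hFY s y).1 hy]; exact h)]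
      rfl
  obtain ⟨κ, hκ0, hκs, hκr, hκc, hκE⟩ := exists_acyclic_coupling (fibl FX ss) (fibl FM ss)
    (fun e => zipProd c e.1 e.2) (fun e => zipProd_nonneg hc0 _ _)
  have hκr' : ∀ V ∈ fibl FX ss, ∑ m ∈ fibl FM ss, κ (V, m) = (V.map P).prod := fun V hV =>
    (hκr V hV).trans (sum_zipProd_right hcrow hV)
  have hκc' : ∀ m ∈ fibl FM ss, ∑ V ∈ fibl FX ss, κ (V, m) = (m.map R).prod := fun m hm =>
    (hκc m hm).trans (sum_zipProd_left hccol hm)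
  have hRl : ∀ m : List (Option Y), 0 < (m.map R).prod := list_prod_pos hRpos
  have hLne : ∀ V W, (if W ∈ fibl FY ss then
      κ (V, W.map mk) / ((W.map mk).map R).prod * (W.map Q).prod else 0) ≠ 0 →
      W ∈ fibl FY ss ∧ κ (V, W.map mk) ≠ 0 := by
    intro V W h
    split_ifs at h with h1
    · refine ⟨h1, fun h2 => h ?_⟩
      rw [h2]; simp
    · exact absurd rfl h
  refine ⟨fun V W => if W ∈ fibl FY ss then
      κ (V, W.map mk) / ((W.map mk).map R).prod * (W.map Q).prod else 0, ?_, ?_, ?_, ?_, ?_⟩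
  · intro V W
    dsimp only
    split_ifs
    · exact mul_nonneg (div_nonneg (hκ0 _) (hRl _).le) (list_prod_pos hQ W).le
    · exact le_rfl
  · intro V W h
    obtain ⟨h1, h2⟩ := hLne V W h
    obtain ⟨h3, h4, h5⟩ := hκs _ h2
    exact ⟨h3, h1, forall₂_of_zipProd_mask hFX hFY hl h3 h1 h5.ne'⟩
  · intro V hV
    rw [Finset.sum_congr rfl (fun W hW => if_pos hW),
      sum_fibl_map (fun s _ => hpush s) (fun m => κ (V, m) / (m.map R).prod), ← hκr' V hV]
    exact Finset.sum_congr rfl fun m _ => div_mul_cancel₀ _ (hRl m).ne'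
  · intro W hW
    simp only [if_pos hW]
    rw [← Finset.sum_mul, ← Finset.sum_div, hκc' _ (map_mem_fibl hmkFM hW),
      div_self (hRl _).ne', one_mul]
  · intro α β hα0 hβ Bad hBad hB
    set T' : Finset (List (Option Y)) :=
      {m ∈ fibl FM ss | β / θ ^ ss.count s₀ ≤ (m.map R).prod} with hT'
    have hθu : 0 < θ ^ ss.count s₀ := pow_pos hθ _
    have hmem : ∀ V W, κ (V, W.map mk) ≠ 0 → W ∈ fibl FY ss → β ≤ (W.map Q).prod →
        W.map mk ∈ T' := by
      intro V W h1 h2 h3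
      rw [hT', Finset.mem_filter]
      refine ⟨(hκs _ h1).2.1, ?_⟩
      rw [div_le_iff₀' hθu]
      exact h3.trans (prod_le_mask hFY hQ hθQ h2)
    have hcard : Bad.card ≤ T'.card := by
      apply card_two_partners_le hκE
      intro V hV
      obtain ⟨-, W₁, W₂, hL₁, hL₂, hb₁, hb₂, hne'⟩ := hB V hV
      obtain ⟨h1, h2⟩ := hLne V W₁ hL₁
      obtain ⟨h3, h4⟩ := hLne V W₂ hL₂
      exact ⟨_, hmem V W₁ h2 h1 hb₁, _, hmem V W₂ h4 h3 hb₂, hne', h2, h4⟩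
    have hmass : ∑ V ∈ fibl FX ss, (V.map P).prod = ∑ m ∈ fibl FM ss, (m.map R).prod := by
      rw [← Finset.sum_congr rfl hκr', Finset.sum_comm]
      exact Finset.sum_congr rfl hκc'
    have hT'card : (T'.card : ℝ) * (β / θ ^ ss.count s₀) ≤ ∑ V ∈ fibl FX ss, (V.map P).prod := by
      rw [hmass, ← nsmul_eq_mul]
      refine (Finset.card_nsmul_le_sum T' (fun m => (m.map R).prod) _
        fun m hm => (Finset.mem_filter.1 hm).2).trans ?_
      exact Finset.sum_le_sum_of_subset_of_nonneg (Finset.filter_subset _ _)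
        fun m _ _ => (hRl m).le
    calc ∑ V ∈ Bad, (V.map P).prod ≤ Bad.card • α :=
          Finset.sum_le_card_nsmul _ _ _ fun V hV => (hB V hV).1
      _ = Bad.card * α := nsmul_eq_mul _ _
      _ ≤ T'.card * α := by gcongr
      _ ≤ ((∑ V ∈ fibl FX ss, (V.map P).prod) / (β / θ ^ ss.count s₀)) * α := by
          gcongr
          rwa [le_div_iff₀ (by positivity)]
      _ = _ := by field_simp

end Lists

/-- The word of length `n` read in `x` from position `t`. -/
def word {A : Type*} (x : ℤ → A) (t : ℤ) (n : ℕ) : List A :=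
  (List.range n).map fun i : ℕ => x (t + i)

/-- The sequence of marker bits of `x`. -/
def bits {A : Type*} (w : List A) (x : ℤ → A) (t : ℤ) : Bool :=
  open Classical in decide (word x t w.length = w)

/-- A cut of level `N`: a marker followed by `N - 1` positions without marker. -/
def cut (N : ℕ) (z : ℤ → Bool) (t : ℤ) : Prop := word z t N = gapWord N

/-- The level `N` block of `z` covering the origin is `S`, and the origin has offset `j` in it. -/
def AtZ (N : ℕ) (z : ℤ → Bool) (S : List Bool) (j : ℕ) : Prop :=
  word z (-j) S.length = S ∧ j < S.length ∧ cut N z (S.length - j) ∧ Ren (gapWord N) S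

/-- The level `N` block of `x` covering the origin is filled with the word `v`, and the origin has
offset `j` in it. -/
def At {A : Type*} (w : List A) (N : ℕ) (x : ℤ → A) (v : List A) (j : ℕ) : Prop :=
  word x (-j) v.length = v ∧ j < v.length ∧ cut N (bits w x) (v.length - j) ∧
    Ren (gapWord N) (sig w v)

/-- Translation of sequences. -/
def trans {A : Type*} (t : ℤ) (x : ℤ → A) : ℤ → A := fun n => x (n + t)

section Word
variable {A : Type*} {w : List A}

@[simp] lemma length_word (x : ℤ → A) (t : ℤ) (n : ℕ) : (word x t n).length = n := by
  simp [word]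

lemma word_add (x : ℤ → A) (t : ℤ) (m n : ℕ) :
    word x t (m + n) = word x t m ++ word x (t + m) n := by
  simp [word, List.range_add, Function.comp_def, add_assoc]

lemma word_succ (x : ℤ → A) (t : ℤ) (n : ℕ) : word x t (n + 1) = x t :: word x (t + 1) n := by
  rw [add_comm n 1, word_add]
  simp [word]

@[simp] lemma word_zero (x : ℤ → A) (t : ℤ) : word x t 0 = [] := rfl

lemma word_one (x : ℤ → A) (t : ℤ) : word x t 1 = [x t] := by simp [word]

lemma word_trans (x : ℤ → A) (s t : ℤ) (n : ℕ) : word (trans s x) t n = word x (t + s) n := by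
  simp only [word, trans]
  congr 1
  funext i
  congr 1
  ring

lemma getElem?_word (x : ℤ → A) (t : ℤ) {n i : ℕ} (h : i < n) : (word x t n)[i]? = some (x (t + i)) := by
  simp [word, h]

lemma drop_word (x : ℤ → A) (t : ℤ) {n i : ℕ} (h : i ≤ n) :
    (word x t n).drop i = word x (t + i) (n - i) := by
  obtain ⟨d, rfl⟩ := Nat.exists_eq_add_of_le h
  rw [word_add, List.drop_append_of_le_length (by simp)]
  simp

lemma take_word (x : ℤ → A) (t : ℤ) {n i : ℕ} (h : i ≤ n) :
    (word x t n).take i = word x t i := by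
  obtain ⟨d, rfl⟩ := Nat.exists_eq_add_of_le h
  rw [word_add]
  simp

lemma prefix_word_iff {u : List A} {x : ℤ → A} {t : ℤ} {n : ℕ} (h : u.length ≤ n) :
    u <+: word x t n ↔ word x t u.length = u := by
  rw [List.prefix_iff_eq_take, take_word x t h, eq_comm]

lemma word_congr {x y : ℤ → A} {t : ℤ} {n : ℕ} (h : ∀ i, t ≤ i → i < t + n → x i = y i) :
    word x t n = word y t n := by
  refine List.map_congr_left fun i hi => h _ (by omega) ?_
  have := List.mem_range.1 hi
  omega

lemma word_eq_iff {x : ℤ → A} {t : ℤ} {v : List A} :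
    word x t v.length = v ↔ ∀ i : ℕ, ∀ h : i < v.length, x (t + i) = v[i] := by
  constructor
  · intro h i hi
    have h1 := getElem?_word x t hi
    rw [h, List.getElem?_eq_getElem hi] at h1
    exact (Option.some.inj h1).symm
  · intro h
    apply List.ext_getElem (by simp)
    intro i h1 h2
    simp [word, h i h2]

lemma bits_trans (x : ℤ → A) (s : ℤ) : bits w (trans s x) = trans s (bits w x) := by
  funext t
  simp [bits, word_trans, trans]

lemma bits_eq_true {x : ℤ → A} {t : ℤ} : bits w x t = true ↔ word x t w.length = w := by
  simp [bits]

lemma cut.bit {N : ℕ} (hN : 0 < N) {z : ℤ → Bool} {t : ℤ} (h : cut N z t) : z t = true := by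
  obtain ⟨n, rfl⟩ := Nat.exists_eq_succ_of_ne_zero hN.ne'
  rw [cut, word_succ, gapWord] at h
  exact (List.cons.inj h).1

lemma cut.bit_false {N : ℕ} {z : ℤ → Bool} {t : ℤ} (h : cut N z t) {i : ℕ} (hi : 0 < i)
    (hiN : i < N) : z (t + i) = false := by
  have h1 := getElem?_word z t hiN
  rw [show word z t N = gapWord N from h] at h1
  obtain ⟨n, rfl⟩ := Nat.exists_eq_succ_of_ne_zero hi.ne'
  have h2 : n < N - 1 := by omega
  simp only [gapWord, Nat.succ_eq_add_one, List.getElem?_cons_succ, List.getElem?_replicate,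
    h2, if_true, Option.some.injEq] at h1
  exact h1.symm

lemma cut.separated {N : ℕ} {z : ℤ → Bool} {s t : ℤ} (hs : cut N z s) (ht : cut N z t)
    (hst : s < t) : s + N ≤ t := by
  by_contra hlt
  push Not at hlt
  have h1 := hs.bit_false (i := (t - s).toNat) (by omega) (by omega)
  rw [show s + ((t - s).toNat : ℤ) = t by omega, ht.bit (by omega)] at h1
  simp at h1

lemma cut.mono {M N : ℕ} (h : M ≤ N) (hM : 0 < M) {z : ℤ → Bool} {t : ℤ} (hc : cut N z t) :
    cut M z t := by
  have h1 := gapWord_isPrefix h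
  rw [← show word z t N = gapWord N from hc] at h1
  rw [prefix_word_iff (by rwa [length_gapWord hM]), length_gapWord hM] at h1
  exact h1

lemma cut_trans {N : ℕ} {z : ℤ → Bool} {s t : ℤ} : cut N (trans s z) t ↔ cut N z (t + s) := by
  rw [cut, cut, word_trans]

/-- The skeleton of a word followed by a marker is read off the marker bits. -/
lemma sig_word (hw : NonOverlap w) {x : ℤ → A} {t : ℤ} {n : ℕ} (h : bits w x (t + n) = true) :
    sig w (word x t n) = word (bits w x) t n := by
  induction n generalizing t with
  | zero => rfl
  | succ n ih =>
    rw [bits_eq_true] at h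
    rw [word_succ (bits w x), ← ih (by
      rw [bits_eq_true]; convert h using 2; push_cast; ring), word_succ x,
      sig, ← word_succ]
    congr 1
    rw [bits]
    have h1 := hw.prefix_append_iff (l := word x t (n + 1)) (v := w)
      (by rw [word_succ]; simp) List.prefix_rfl
    have h2 : word x t (n + 1) ++ w = word x t (n + 1 + w.length) := by
      rw [word_add x t (n + 1), h]
    rw [h2, prefix_word_iff (by omega)] at h1
    simp [h1]

lemma At.atZ (hw : NonOverlap w) {N : ℕ} (hN : 0 < N) {x : ℤ → A} {v : List A} {j : ℕ}
    (h : At w N x v j) : AtZ N (bits w x) (sig w v) j := by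
  obtain ⟨h1, h2, h3, h4⟩ := h
  refine ⟨?_, by simpa, by simpa, h4⟩
  conv_rhs => rw [← h1]
  rw [sig_word hw, length_sig]
  convert h3.bit hN using 2
  ring

lemma atZ_iff {N : ℕ} (hN : 0 < N) {z : ℤ → Bool} {S : List Bool} {j : ℕ} :
    AtZ N z S j ↔ word z (-j) S.length = S ∧ j < S.length ∧ cut N z (-j) ∧
      cut N z (S.length - j) ∧ ∀ i : ℤ, -j < i → i < S.length - j → ¬ cut N z i := by
  have key : ∀ i : ℕ, i < S.length → word z (-j) S.length = S → cut N z (S.length - j) →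
      (gapWord N <+: S.drop i ↔ cut N z (-j + i)) := by
    intro i hi h1 h2
    have h3 : S.drop i ≠ [] := by simpa using hi
    rw [← (nonOverlap_gapWord N).prefix_append_iff h3 List.prefix_rfl]
    have h4 : S.drop i ++ gapWord N = word z (-j + i) (S.length - i + N) := by
      rw [word_add, ← drop_word z _ hi.le, h1, ← show word z _ N = gapWord N from h2]
      congr 2
      push_cast [hi.le]
      ring
    rw [h4, prefix_word_iff (by rw [length_gapWord hN]; omega), length_gapWord hN]
    rfl
  constructor
  · rintro ⟨h1, h2, h3, h4, h5⟩
    refine ⟨h1, h2, ?_, h3, ?_⟩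
    · simpa using (key 0 (by omega) h1 h3).1 (by simpa using h4)
    · intro i hi1 hi2 hc
      refine h5 (i + j).toNat (by omega) ((key _ (by omega) h1 h3).2 ?_)
      convert hc using 1
      omega
  · rintro ⟨h1, h2, h3, h4, h5⟩
    refine ⟨h1, h2, h4, ?_, ?_⟩
    · simpa using (key 0 (by omega) h1 h4).2 (by simpa using h3)
    · intro i hi hp
      have hiS : i < S.length := by
        by_contra hcon
        rw [List.drop_eq_nil_of_le (by omega), List.prefix_nil] at hp
        exact gapWord_ne_nil N hp
      exact h5 _ (by omega) (by omega) ((key i hiS h1 h4).1 hp)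

lemma AtZ.unique {N : ℕ} (hN : 0 < N) {z : ℤ → Bool} {S S' : List Bool} {j j' : ℕ}
    (h : AtZ N z S j) (h' : AtZ N z S' j') : S = S' ∧ j = j' := by
  rw [atZ_iff hN] at h h'
  obtain ⟨h1, h2, h3, h4, h5⟩ := h
  obtain ⟨h1', h2', h3', h4', h5'⟩ := h'
  have hj : j = j' := by
    rcases lt_trichotomy j j' with hlt | heq | hgt
    · exact absurd h3 (h5' _ (by omega) (by omega))
    · exact heq
    · exact absurd h3' (h5 _ (by omega) (by omega))
  subst hj
  have hl : S.length = S'.length := by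
    rcases lt_trichotomy S.length S'.length with hlt | heq | hgt
    · exact absurd h4 (h5' _ (by omega) (by omega))
    · exact heq
    · exact absurd h4' (h5 _ (by omega) (by omega))
  exact ⟨by rw [← h1, ← h1', hl], rfl⟩

lemma At.unique (hw : NonOverlap w) {N : ℕ} (hN : 0 < N) {x : ℤ → A} {v v' : List A} {j j' : ℕ}
    (h : At w N x v j) (h' : At w N x v' j') : v = v' ∧ j = j' := by
  obtain ⟨h1, h2⟩ := (h.atZ hw hN).unique hN (h'.atZ hw hN)
  subst h2
  have hl := congrArg List.length h1
  rw [length_sig, length_sig] at hl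
  exact ⟨by rw [← h.1, ← h'.1, hl], rfl⟩

lemma At.cut_start (hw : NonOverlap w) {N : ℕ} (hN : 0 < N) {x : ℤ → A} {v : List A} {j : ℕ}
    (h : At w N x v j) : cut N (bits w x) (-j) :=
  ((atZ_iff hN).1 (h.atZ hw hN)).2.2.1

lemma exists_at (hw : NonOverlap w) {N : ℕ} (hN : 0 < N) {x : ℤ → A}
    (h1 : ∃ t ≤ 0, cut N (bits w x) t) (h2 : ∃ t, 0 < t ∧ cut N (bits w x) t) :
    ∃ v j, At w N x v j := by
  classical
  have h1' : ∃ j : ℕ, cut N (bits w x) (-j) := by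
    obtain ⟨t, ht, h⟩ := h1
    exact ⟨(-t).toNat, by convert h using 1; omega⟩
  have h2' : ∃ j : ℕ, 0 < j ∧ cut N (bits w x) j := by
    obtain ⟨t, ht, h⟩ := h2
    exact ⟨t.toNat, by omega, by convert h using 1; omega⟩
  set j := Nat.find h1' with hj
  set b := Nat.find h2' with hb
  have hj1 : cut N (bits w x) (-j) := Nat.find_spec h1'
  obtain ⟨hb0, hb1⟩ := Nat.find_spec h2'
  rw [← hb] at hb0 hb1
  have hbit : bits w x (-j + (j + b : ℕ)) = true := by
    convert hb1.bit hN using 2; push_cast; ring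
  have hZ : AtZ N (bits w x) (word (bits w x) (-j) (j + b)) j := by
    rw [atZ_iff hN]
    simp only [length_word]
    refine ⟨trivial, by omega, hj1, ?_, ?_⟩
    · convert hb1 using 1; push_cast; ring
    · intro i hi1 hi2 hc
      rcases le_or_gt i 0 with hi | hi
      · refine Nat.find_min h1' (m := (-i).toNat) (by omega) ?_
        convert hc using 1; omega
      · refine Nat.find_min h2' (m := i.toNat) (by omega) ⟨by omega, ?_⟩
        convert hc using 1; omega
  refine ⟨word x (-j) (j + b), j, by simp, by simp; omega, ?_, ?_⟩
  · convert hb1 using 1; simp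
  · rw [sig_word hw hbit]
    exact hZ.2.2.2

lemma at_trans {N : ℕ} {x : ℤ → A} {v : List A} {j : ℕ} (hj : j + 1 < v.length) :
    At w N (trans 1 x) v (j + 1) ↔ At w N x v j := by
  rw [At, At, word_trans, bits_trans, cut_trans]
  have e1 : -((j + 1 : ℕ) : ℤ) + 1 = -j := by push_cast; ring
  have e2 : (v.length : ℤ) - ((j + 1 : ℕ) : ℤ) + 1 = v.length - j := by push_cast; ring
  rw [e1, e2]
  have : j < v.length := by omega
  simp [hj, this]

end Word

open Classical in
/-- The number of occurrences of `u` in a list. -/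
def occ {A : Type*} (u : List A) : List A → ℕ
  | [] => 0
  | a :: l => (if u <+: a :: l then 1 else 0) + occ u l

/-- The finite set of words with a given skeleton. -/
def fib {A : Type*} [Finite A] (w : List A) (S : List Bool) : Finset (List A) :=
  ((List.finite_length_eq A S.length).subset
    (fun v (hv : sig w v = S) => by simp [← hv]) : {v | sig w v = S}.Finite).toFinset

section Blocks
variable {A : Type*} {w : List A}

lemma occ_append_ge (u l₁ l₂ : List A) : occ u l₁ + occ u l₂ ≤ occ u (l₁ ++ l₂) := by
  induction l₁ with
  | nil => simp [occ]
  | cons a l ih =>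
    simp only [occ, List.cons_append]
    by_cases h : u <+: a :: l
    · have h' : u <+: a :: (l ++ l₂) := h.trans (List.prefix_append (a :: l) l₂)
      simp only [h, h', if_true]; omega
    · simp only [h, if_false]; omega

lemma one_le_occ_self {u : List A} (hu : u ≠ []) : 1 ≤ occ u u := by
  cases u with
  | nil => exact absurd rfl hu
  | cons a l => simp [occ]

lemma occ_le_occ_sig (hw : NonOverlap w) {u : List A} (v : List A) :
    occ (u ++ w) v ≤ occ (sig w u) (sig w v) := by
  induction v with
  | nil => simp [occ]
  | cons a l ih =>
    have h : u ++ w <+: a :: l → sig w u <+: sig w (a :: l) := by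
      rintro ⟨r, hr⟩
      rw [← hr, List.append_assoc, sig_append hw (List.prefix_append _ _)]
      exact List.prefix_append _ _
    simp only [occ, sig] at h ⊢
    by_cases h1 : u ++ w <+: a :: l
    · simp only [h1, h h1, if_true]; omega
    · simp only [h1, if_false]; omega

lemma occ_append_of_forall_not_isPrefix {U s r : List Bool} {u : List Bool} (hu : NonOverlap u)
    (hU : u <+: U) (hs : ∀ i, ¬ u <+: s.drop i) (hr : r = [] ∨ u <+: r) :
    occ U (s ++ r) = occ U r := by
  induction s with
  | nil => simp
  | cons a s ih =>
    rw [List.cons_append, occ, ih (fun i => by simpa using hs (i + 1)), if_neg, zero_add]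
    intro h
    have h1 := hU.trans h
    rcases hr with rfl | hr
    · exact hs 0 (by simpa using h1)
    · exact hs 0 (by simpa using (hu.prefix_append_iff (l := a :: s) (by simp) hr).1 h1)

open Classical in
lemma occ_flatten_le_count {N g : ℕ} (hN : 0 < N) (hg : N ≤ g) {ss : List (List Bool)}
    (hss : ∀ s ∈ ss, Ren (gapWord N) s) :
    occ (gapWord g ++ gapWord N) ss.flatten ≤ ss.count (gapWord g) := by
  induction ss with
  | nil => simp [occ]
  | cons s ss ih =>
    have ih := ih fun s' hs' => hss s' (by simp [hs'])
    have hs := hss s (by simp)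
    have hr : ss.flatten = [] ∨ gapWord N <+: ss.flatten := by
      cases ss with
      | nil => simp
      | cons s' ss => exact .inr ((hss s' (by simp)).1.trans (List.prefix_append _ _))
    have hno := nonOverlap_gapWord N
    have hlg : (gapWord g).length = g := length_gapWord (by omega)
    obtain ⟨a, s', rfl⟩ : ∃ a s', s = a :: s' := by
      cases s with
      | nil => exact absurd (List.prefix_nil.1 hs.1) (gapWord_ne_nil N)
      | cons a s' => exact ⟨a, s', rfl⟩
    rw [List.flatten_cons, List.cons_append, occ,
      occ_append_of_forall_not_isPrefix hno
        ((gapWord_isPrefix hg).trans (List.prefix_append _ _))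
        (fun i => by simpa using hs.2 (i + 1) (by omega)) hr]
    by_cases h : gapWord g ++ gapWord N <+: a :: (s' ++ ss.flatten)
    · have heq : a :: s' = gapWord g := by
        rw [← List.cons_append] at h
        set s := a :: s' with hsdef
        have h1 : gapWord g <+: s ++ ss.flatten := (List.prefix_append _ _).trans h
        rcases lt_trichotomy s.length g with hlt | heq | hgt
        · exfalso
          rcases hr with hr | hr
          · have := h.length_le
            simp [hr, hlg] at this
            omega
          · have h2 : s <+: gapWord g :=
              List.prefix_of_prefix_length_le (List.prefix_append _ _) h1 (by omega)
            obtain ⟨t, ht⟩ := h2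
            rw [← ht, List.prefix_append_right_inj] at h1
            have h3 : t = (gapWord g).drop s.length := by rw [← ht]; simp
            have hs0 : 0 < s.length := by simp [hsdef]
            rw [gapWord_drop hs0] at h3
            obtain ⟨n, hn⟩ : ∃ n, g - 1 - (s.length - 1) = n + 1 := ⟨g - 1 - (s.length - 1) - 1, by omega⟩
            rw [hn, List.replicate_succ] at h3
            have h4 : [true] <+: ss.flatten := head_of_gapWord_isPrefix hr
            rw [h3] at h1
            obtain ⟨r1, hr1⟩ := h1
            obtain ⟨r2, hr2⟩ := h4
            rw [← hr2] at hr1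
            simp at hr1
        · have h2 : gapWord g <+: s := by
            apply List.prefix_of_prefix_length_le h1 (List.prefix_append _ _); omega
          exact (h2.eq_of_length (by omega)).symm
        · exfalso
          obtain ⟨r, hr'⟩ := h
          have h2 : gapWord N <+: (s ++ ss.flatten).drop g := by
            rw [← hr', List.append_assoc, List.drop_append_of_le_length (by omega),
              List.drop_of_length_le (by omega)]
            simp
          rw [List.drop_append_of_le_length (by omega)] at h2
          refine hs.2 g (by omega) ?_
          rcases hr with hr | hr
          · simpa [hr] using h2
          · exact (hno.prefix_append_iff (by simpa using hgt) hr).1 h2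
      rw [heq, List.count_cons_self]
      simp only [h, if_true]
      omega
    · simp only [h, if_false]
      exact (by omega : _ ≤ _).trans (List.count_le_count_cons)

lemma exists_locate {ss : List (List A)} {j : ℕ} (hj : j < ss.flatten.length) :
    ∃ ss₁ s ss₂ i, ss = ss₁ ++ s :: ss₂ ∧ j = ss₁.flatten.length + i ∧ i < s.length := by
  induction ss generalizing j with
  | nil => simp at hj
  | cons s ss ih =>
    rcases lt_or_ge j s.length with h | h
    · exact ⟨[], s, ss, j, by simp, by simp, h⟩
    · rw [List.flatten_cons, List.length_append] at hj
      obtain ⟨ss₁, s', ss₂, i, rfl, h1, h2⟩ := ih (j := j - s.length) (by omega)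
      refine ⟨s :: ss₁, s', ss₂, i, by simp, ?_, h2⟩
      rw [List.flatten_cons, List.length_append]
      omega

/-- A block of higher level decomposes into blocks of lower level. -/
lemma At.descend (hw : NonOverlap w) {M N : ℕ} (hM : 0 < M) (hMN : M ≤ N) {x : ℤ → A}
    {V₁ V₂ : List (List A)} {v : List A} {i : ℕ}
    (h : At w N x (V₁ ++ v :: V₂).flatten (V₁.flatten.length + i)) (hi : i < v.length)
    (hV : ∀ u ∈ V₁ ++ v :: V₂, Ren (gapWord M) (sig w u)) : At w M x v i := by
  have hcut : cut M (bits w x) (((V₁ ++ v :: V₂).flatten.length : ℤ) -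
    ((V₁.flatten.length + i : ℕ) : ℤ)) := h.2.2.1.mono hMN hM
  have hZ := (h.atZ hw (by omega)).1
  have h1 := h.1
  have hflat : (V₁ ++ v :: V₂).flatten = V₁.flatten ++ (v ++ V₂.flatten) := by simp
  rw [hflat] at h1 hcut
  rw [List.length_append, word_add] at h1
  have h2 := (List.append_inj h1 (by simp)).2
  rw [List.length_append, word_add] at h2
  obtain ⟨h3, h4⟩ := List.append_inj h2 (by simp)
  have e1 : -((V₁.flatten.length + i : ℕ) : ℤ) + V₁.flatten.length = -i := by push_cast; ring
  rw [e1] at h3 h4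
  have hpre : ∀ u ∈ V₁ ++ v :: V₂, w <+: u := fun u hu =>
    prefix_of_head_sig (head_of_gapWord_isPrefix (hV u hu).1)
  refine ⟨h3, hi, ?_, hV v (by simp)⟩
  cases V₂ with
  | nil =>
    convert hcut using 1
    simp
  | cons v₂ V₂ =>
    rw [length_sig, sig_flatten hw hpre] at hZ
    have hsplit : ((V₁ ++ v :: v₂ :: V₂).map (sig w)).flatten =
        ((V₁ ++ [v]).map (sig w)).flatten ++ (sig w v₂ ++ (V₂.map (sig w)).flatten) := by simp
    have hl : (V₁ ++ v :: v₂ :: V₂).flatten.length =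
        ((V₁ ++ [v]).map (sig w)).flatten.length +
          (sig w v₂ ++ (V₂.map (sig w)).flatten).length := by
      rw [← List.length_append, ← hsplit, ← sig_flatten hw hpre, length_sig]
    rw [hsplit, hl, word_add] at hZ
    have h5 := (List.append_inj hZ (by simp)).2
    have h6 : gapWord M <+: sig w v₂ ++ (V₂.map (sig w)).flatten :=
      (hV v₂ (by simp)).1.trans (List.prefix_append _ _)
    have h7 := h6.length_le
    rw [← h5, prefix_word_iff h7, length_gapWord hM] at h6
    rw [cut]
    convert h6 using 2
    have e2 : ((V₁ ++ [v]).map (sig w)).flatten.length = V₁.flatten.length + v.length := by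
      rw [← sig_flatten hw (fun u hu => hpre u (by simp at hu ⊢; tauto)), length_sig]
      simp
    rw [e2]
    push_cast
    ring

variable [Finite A]

@[simp] lemma mem_fib {S : List Bool} {v : List A} : v ∈ fib w S ↔ sig w v = S := by
  simp [fib]

lemma mem_fibl_fib {ss : List (List Bool)} {V : List (List A)} :
    V ∈ fibl (fib w) ss ↔ V.map (sig w) = ss :=
  mem_fibl_iff fun _ _ => mem_fib

lemma flatten_inj_fibl {ss : List (List Bool)} {V V' : List (List A)} (hV : V ∈ fibl (fib w) ss)
    (hV' : V' ∈ fibl (fib w) ss) (h : V.flatten = V'.flatten) : V = V' := by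
  rw [mem_fibl_fib] at hV hV'
  apply flatten_injOn _ h
  have : ∀ U : List (List A), U.map List.length = (U.map (sig w)).map List.length := by
    intro U; simp [Function.comp_def]
  rw [this, this, hV, hV']

lemma sum_fib_flatten (hw : NonOverlap w) {ss : List (List Bool)}
    (hs : ∀ s ∈ ss, [true] <+: s) (f : List A → ℝ) :
    ∑ v ∈ fib w ss.flatten, f v = ∑ V ∈ fibl (fib w) ss, f V.flatten := by
  classical
  symm
  refine Finset.sum_bij (fun V _ => V.flatten) ?_ ?_ ?_ (fun _ _ => rfl)
  · intro V hV
    rw [mem_fibl_fib] at hV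
    rw [mem_fib, sig_flatten hw, hV]
    intro v hv
    exact prefix_of_head_sig (hs _ (hV ▸ List.mem_map_of_mem hv))
  · intro V hV V' hV' h
    exact flatten_inj_fibl hV hV' h
  · intro v hv
    obtain ⟨V, hV, hf⟩ := exists_split hw hs (mem_fib.1 hv)
    exact ⟨V, mem_fibl_fib.2 hV, hf⟩

end Blocks

/-- The weight of a word. -/
def wt {A : Type*} (p : A → ℝ) (v : List A) : ℝ := (v.map p).prod

lemma wt_pos {A : Type*} [Fintype A] {p : A → ℝ} (hp : IsProbVector p) (v : List A) : 0 < wt p v := by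
  induction v with
  | nil => simp [wt]
  | cons a v ih => simpa [wt] using mul_pos (hp.1 a) ih

lemma wt_append {A : Type*} {p : A → ℝ} (u v : List A) : wt p (u ++ v) = wt p u * wt p v := by simp [wt]

lemma wt_flatten {A : Type*} {p : A → ℝ} (V : List (List A)) : wt p V.flatten = (V.map (wt p)).prod := by
  induction V with
  | nil => simp [wt]
  | cons v V ih => rw [List.flatten_cons, wt_append, ih]; simp

section Measure
variable {A : Type*} [Fintype A] [MeasurableSpace A] [DiscreteMeasurableSpace A]
  {p : A → ℝ} {μ : Measure (ℤ → A)}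

/-- The distribution of a letter. -/
def letterMeasure (p : A → ℝ) : Measure A := ∑ a, ENNReal.ofReal (p a) • Measure.dirac a

lemma letterMeasure_singleton (a : A) : letterMeasure p {a} = ENNReal.ofReal (p a) := by
  classical
  simp [letterMeasure, Set.indicator_apply]

lemma isProbabilityMeasure_letterMeasure (hp : IsProbVector p) :
    IsProbabilityMeasure (letterMeasure p) := by
  constructor
  simp [letterMeasure]
  rw [← ENNReal.ofReal_sum_of_nonneg fun i _ => (hp.1 i).le, hp.2, ENNReal.ofReal_one]

lemma isProbabilityMeasure_of_bernoulli (hμ : IsBernoulliMeasure μ p) (hA : Nonempty A) :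
    IsProbabilityMeasure μ := by
  constructor
  have := hμ ∅ (fun _ => hA.some)
  simpa using this

lemma nonempty_of_isProbVector {A : Type*} [Fintype A] {p : A → ℝ} (hp : IsProbVector p) :
    Nonempty A := by
  by_contra h
  rw [not_nonempty_iff] at h
  have := hp.2
  simp at this

lemma eq_infinitePi (hp : IsProbVector p) (hμ : IsBernoulliMeasure μ p) :
    haveI := isProbabilityMeasure_letterMeasure hp
    μ = Measure.infinitePi fun _ : ℤ => letterMeasure p := by
  have := isProbabilityMeasure_letterMeasure hp
  have hA := nonempty_of_isProbVector hp
  have := isProbabilityMeasure_of_bernoulli hμ hA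
  have h : IsProjectiveLimit μ fun I : Finset ℤ => Measure.pi fun _ : I => letterMeasure p := by
    intro I
    apply Measure.ext_of_singleton
    intro s
    classical
    rw [Measure.map_apply (Finset.measurable_restrict I) (measurableSet_singleton s),
      Measure.pi_singleton]
    have h1 : (I.restrict : (ℤ → A) → (I → A)) ⁻¹' {s} = {x : ℤ → A | ∀ i ∈ I, x i =
        (fun i => if h : i ∈ I then s ⟨i, h⟩ else hA.some) i} := by
      ext x
      simp only [Set.mem_preimage, Set.mem_singleton_iff, funext_iff, Finset.restrict,
        Set.mem_ofPred_eq, Subtype.forall]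
      refine forall₂_congr fun i hi => by simp [hi]
    rw [h1, hμ, ENNReal.ofReal_prod_of_nonneg fun i _ => (hp.1 _).le, ← Finset.prod_attach,
      Finset.univ_eq_attach]
    refine Finset.prod_congr rfl fun i _ => ?_
    simp [letterMeasure_singleton]
  exact h.unique (Measure.isProjectiveLimit_infinitePi fun _ : ℤ => letterMeasure p)

lemma bernoulli_unique (hp : IsProbVector p) {μ' : Measure (ℤ → A)}
    (hμ : IsBernoulliMeasure μ p) (hμ' : IsBernoulliMeasure μ' p) : μ = μ' :=
  (eq_infinitePi hp hμ).trans (eq_infinitePi hp hμ').symm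

lemma exists_bernoulli (hp : IsProbVector p) : ∃ μ : Measure (ℤ → A), IsBernoulliMeasure μ p := by
  have := isProbabilityMeasure_letterMeasure hp
  refine ⟨Measure.infinitePi fun _ : ℤ => letterMeasure p, fun F s => ?_⟩
  have : {x : ℤ → A | ∀ i ∈ F, x i = s i} = Set.pi F fun i => {s i} := by
    ext x; simp [Set.mem_pi]
  rw [this, Measure.infinitePi_pi _ (fun i _ => measurableSet_singleton _),
    ENNReal.ofReal_prod_of_nonneg fun i _ => (hp.1 _).le]
  exact Finset.prod_congr rfl fun i _ => letterMeasure_singleton _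

lemma measurable_trans (t : ℤ) : Measurable (trans t : (ℤ → A) → ℤ → A) :=
  measurable_pi_lambda _ fun n => measurable_pi_apply (n + t)

lemma measurePreserving_trans (hp : IsProbVector p) (hμ : IsBernoulliMeasure μ p) (t : ℤ) :
    MeasurePreserving (trans t) μ μ := by
  refine ⟨measurable_trans t, bernoulli_unique hp (fun F s => ?_) hμ⟩
  classical
  have hm : MeasurableSet {x : ℤ → A | ∀ i ∈ F, x i = s i} := by
    have : {x : ℤ → A | ∀ i ∈ F, x i = s i} = Set.pi F fun i => {s i} := by
      ext x; simp [Set.mem_pi]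
    rw [this]
    exact MeasurableSet.pi F.countable_toSet fun i _ => measurableSet_singleton _
  rw [Measure.map_apply (measurable_trans t) hm]
  have := hμ (F.map (addRightEmbedding t)) (fun i => s (i - t))
  rw [Finset.prod_map] at this
  simp only [addRightEmbedding_apply, add_sub_cancel_right] at this
  rw [← this]
  congr 1
  ext x
  simp [trans]

lemma exists_factor {β : Type*} [Nonempty β] {F : Finset ℤ} {f : (ℤ → A) → β}
    (hf : DependsOn f (F : Set ℤ)) : ∃ g : (F → A) → β, f = g ∘ F.restrict := by
  apply (Function.factorsThrough_iff _).1
  intro x y h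
  exact hf fun i hi => congrFun h ⟨i, hi⟩

lemma measurable_of_dependsOn {β : Type*} [Nonempty β] [MeasurableSpace β] {F : Finset ℤ}
    {f : (ℤ → A) → β} (hf : DependsOn f (F : Set ℤ)) : Measurable f := by
  obtain ⟨g, rfl⟩ := exists_factor hf
  exact (Measurable.of_discrete).comp (Finset.measurable_restrict F)

lemma measurableSet_of_dependsOn {F : Finset ℤ} {E : Set (ℤ → A)}
    (hE : DependsOn (· ∈ E) (F : Set ℤ)) : MeasurableSet E :=
  measurableSet_setOfPred.2 (measurable_of_dependsOn hE)

lemma indepFun_of_dependsOn (hp : IsProbVector p) (hμ : IsBernoulliMeasure μ p)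
    {β γ : Type*} [Nonempty β] [MeasurableSpace β] [Nonempty γ] [MeasurableSpace γ]
    {F G : Finset ℤ} (hFG : Disjoint F G)
    {f : (ℤ → A) → β} {g : (ℤ → A) → γ} (hf : DependsOn f (F : Set ℤ))
    (hg : DependsOn g (G : Set ℤ)) : IndepFun f g μ := by
  have := isProbabilityMeasure_letterMeasure hp
  obtain ⟨f, rfl⟩ := exists_factor hf
  obtain ⟨g, rfl⟩ := exists_factor hg
  have h : iIndepFun (fun (i : ℤ) (x : ℤ → A) => x i) μ := by
    rw [eq_infinitePi hp hμ]
    exact iIndepFun_infinitePi (X := fun _ a => a) (fun _ => measurable_id)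
  exact (h.indepFun_finset F G hFG (fun i => measurable_pi_apply i)).comp
    (Measurable.of_discrete) (Measurable.of_discrete)

lemma measure_inter_of_dependsOn (hp : IsProbVector p) (hμ : IsBernoulliMeasure μ p)
    {F G : Finset ℤ} (hFG : Disjoint F G) {E E' : Set (ℤ → A)}
    (hE : DependsOn (· ∈ E) (F : Set ℤ)) (hE' : DependsOn (· ∈ E') (G : Set ℤ)) :
    μ (E ∩ E') = μ E * μ E' := by
  have := (indepFun_of_dependsOn hp hμ hFG hE hE').measure_inter_preimage_eq_mul {True} {True}
    (measurableSet_singleton _) (measurableSet_singleton _)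
  have e : ∀ E : Set (ℤ → A), (fun x => x ∈ E) ⁻¹' {True} = E := by intro E; ext x; simp
  rwa [e, e] at this

lemma dependsOn_word (t : ℤ) (n : ℕ) {β : Type*} (f : List A → β) :
    DependsOn (fun x : ℤ → A => f (word x t n)) (Finset.Ico t (t + n) : Set ℤ) := by
  intro x y h
  dsimp only
  rw [word_congr fun i h1 h2 => h i (by simp [h1, h2])]

lemma word_bits_eq {w : List A} (x : ℤ → A) (t : ℤ) (n : ℕ) {y : ℤ → A}
    (h : ∀ i, t ≤ i → i < t + (n + w.length : ℕ) → x i = y i) :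
    word (bits w x) t n = word (bits w y) t n := by
  apply word_congr
  intro i h1 h2
  rw [bits, bits, word_congr]
  intro j h3 h4
  exact h j (by omega) (by push_cast; omega)

lemma dependsOn_cut (w : List A) (t : ℤ) (N : ℕ) :
    DependsOn (fun x : ℤ → A => cut N (bits w x) t)
      (Finset.Ico t (t + (N + w.length : ℕ)) : Set ℤ) := by
  intro x y h
  dsimp only
  rw [cut, cut, word_bits_eq x t N fun i h1 h2 => h i (by simp at h2 ⊢; omega)]

lemma measure_word (hp : IsProbVector p) (hμ : IsBernoulliMeasure μ p) (t : ℤ) (v : List A) :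
    μ {x | word x t v.length = v} = ENNReal.ofReal (wt p v) := by
  have hA := nonempty_of_isProbVector hp
  have e : {x : ℤ → A | word x t v.length = v} = {x | ∀ i ∈ (Finset.range v.length).map
      (Nat.castEmbedding.trans (addLeftEmbedding t)),
      x i = (fun i => v.getD (i - t).toNat hA.some) i} := by
    ext x
    simp only [Set.mem_ofPred_eq, word_eq_iff, Finset.mem_map, Finset.mem_range,
      Function.Embedding.trans_apply, Nat.castEmbedding_apply, addLeftEmbedding_apply,
      forall_exists_index, and_imp]
    constructor
    · rintro h i n hn rfl
      simp [h n hn, hn]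
    · intro h i hi
      simpa [hi] using h (t + i) i hi rfl
  rw [e, hμ, Finset.prod_map, wt]
  congr 1
  simp only [Function.Embedding.trans_apply, Nat.castEmbedding_apply, addLeftEmbedding_apply,
    add_sub_cancel_left, Int.toNat_natCast]
  rw [← Fin.prod_univ_eq_prod_range (fun i => p (v.getD i hA.some)), ← List.prod_ofFn]
  congr 1
  apply List.ext_getElem <;> simp

end Measure

section LLN
variable {A : Type*} [Fintype A] [MeasurableSpace A] [DiscreteMeasurableSpace A]
  {p : A → ℝ} {μ : Measure (ℤ → A)}

lemma integrable_of_dependsOn [IsFiniteMeasure μ] {F : Finset ℤ} {f : (ℤ → A) → ℝ}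
    (hf : DependsOn f (F : Set ℤ)) : Integrable f μ := by
  have hm := measurable_of_dependsOn hf
  obtain ⟨g, rfl⟩ := exists_factor hf
  classical
  refine Integrable.of_bound hm.aestronglyMeasurable (∑ s, |g s|) (ae_of_all _ fun x => ?_)
  exact Finset.single_le_sum (f := fun s => |g s|) (fun s _ => abs_nonneg _) (Finset.mem_univ _)

lemma tendsto_average (hp : IsProbVector p) (hμ : IsBernoulliMeasure μ p) (f : List A → ℝ)
    {m : ℕ} {σ : ℕ → ℤ} (hσ : Function.Injective σ) :
    ∀ᵐ x ∂μ, Tendsto (fun n : ℕ => (∑ i ∈ Finset.range n, f (word x (m * σ i) m)) / n) atTop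
      (nhds (∫ x, f (word x 0 m) ∂μ)) := by
  have := isProbabilityMeasure_of_bernoulli hμ (nonempty_of_isProbVector hp)
  have hd : ∀ t : ℤ, DependsOn (fun x : ℤ → A => f (word x t m))
    (Finset.Ico t (t + m) : Finset ℤ) := fun t => dependsOn_word t m f
  have hm : ∀ t : ℤ, Measurable (fun x : ℤ → A => f (word x t m)) := fun t =>
    measurable_of_dependsOn (hd t)
  have he : ∀ t s : ℤ, (fun x : ℤ → A => f (word x (t + s) m)) =
      (fun x => f (word x t m)) ∘ trans s := by
    intro t s; funext x; simp [word_trans]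
  have hid : ∀ t s : ℤ, IdentDistrib (fun x : ℤ → A => f (word x t m))
      (fun x => f (word x s m)) μ μ := by
    intro t s
    refine ⟨(hm t).aemeasurable, (hm s).aemeasurable, ?_⟩
    have := he s (t - s)
    rw [add_sub_cancel] at this
    rw [this, ← Measure.map_map (hm s) (measurable_trans _),
      (measurePreserving_trans hp hμ _).map_eq]
  rw [(hid 0 (m * σ 0)).integral_eq]
  refine strong_law_ae_real (fun i x => f (word x (m * σ i) m)) (integrable_of_dependsOn (hd _))
    ?_ (fun i => hid _ _)
  intro i j hij
  refine indepFun_of_dependsOn hp hμ ?_ (hd _) (hd _)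
  rw [Finset.disjoint_left]
  intro t h1 h2
  rw [Finset.mem_Ico] at h1 h2
  have hne : σ i ≠ σ j := fun h => hij (hσ h)
  rcases lt_or_gt_of_ne hne with h | h
  · nlinarith
  · nlinarith

lemma eventually_linear {s : ℕ → ℝ} {c ε : ℝ} (hε : 0 < ε)
    (h : Tendsto (fun n : ℕ => s n / n) atTop (nhds c)) :
    ∃ M : ℕ, ∀ n ≥ M, |s n - c * n| ≤ ε * n := by
  obtain ⟨M, hM⟩ := (Metric.tendsto_atTop.1 h) ε hε
  refine ⟨M + 1, fun n hn => ?_⟩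
  have h1 := hM n (by omega)
  have hn0 : (0 : ℝ) < n := by exact_mod_cast (by omega : 0 < n)
  rw [Real.dist_eq] at h1
  have : s n - c * n = (s n / n - c) * n := by field_simp
  rw [this, abs_mul, abs_of_pos hn0]
  gcongr

lemma injective_negSucc : Function.Injective (fun i : ℕ => -((i : ℤ) + 1)) := by
  intro a b h
  simpa using h

lemma neg_log_wt_word (hp : IsProbVector p) (x : ℤ → A) (t : ℤ) (n : ℕ) :
    -Real.log (wt p (word x t n)) = ∑ i ∈ Finset.range n, -Real.log (wt p (word x (t + i) 1)) := by
  induction n with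
  | zero => simp [wt]
  | succ n ih =>
    rw [word_add, wt_append, Real.log_mul (wt_pos hp _).ne' (wt_pos hp _).ne', Finset.sum_range_succ,
      ← ih]
    ring

lemma integral_letter (hp : IsProbVector p) (hμ : IsBernoulliMeasure μ p) (g : A → ℝ) :
    ∫ x, g (x 0) ∂μ = ∑ a, p a * g a := by
  have := isProbabilityMeasure_of_bernoulli hμ (nonempty_of_isProbVector hp)
  have hm : Measurable fun x : ℤ → A => x 0 := measurable_pi_apply 0
  rw [← integral_map (f := g) hm.aemeasurable (Measurable.of_discrete).aestronglyMeasurable,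
    integral_fintype (Integrable.of_finite)]
  refine Finset.sum_congr rfl fun a _ => ?_
  rw [smul_eq_mul, measureReal_def, Measure.map_apply hm (measurableSet_singleton a)]
  congr 1
  have := measure_word hp hμ 0 [a]
  simp only [List.length_singleton, word_one, List.cons.injEq, and_true] at this
  have e : (fun x : ℤ → A => x 0) ⁻¹' {a} = {x | x 0 = a} := rfl
  rw [e, this]
  simp [wt, (hp.1 a).le]

/-- Almost every sequence has asymptotically typical windows around the origin. -/
lemma ae_entropy_typical (hp : IsProbVector p) (hμ : IsBernoulliMeasure μ p) {δ : ℝ} (hδ : 0 < δ) :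
    ∀ᵐ x ∂μ, ∃ M : ℕ, ∀ a b : ℕ, M ≤ a → M ≤ b →
      |-Real.log (wt p (word x (-a) (a + b))) - vecEntropy p * (a + b : ℕ)| ≤ δ * (a + b : ℕ) := by
  have hInt : ∫ x, -Real.log (wt p (word x 0 1)) ∂μ = vecEntropy p := by
    simp only [word_one, wt, List.map_cons, List.map_nil, List.prod_cons, List.prod_nil, mul_one]
    rw [integral_letter hp hμ (fun a => -Real.log (p a)), vecEntropy]
    simp
  have h1 := tendsto_average hp hμ (fun v => -Real.log (wt p v)) (m := 1) (σ := fun i => (i : ℤ))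
    Nat.cast_injective
  have h2 := tendsto_average hp hμ (fun v => -Real.log (wt p v)) (m := 1) injective_negSucc
  filter_upwards [h1, h2] with x h1 h2
  rw [hInt] at h1 h2
  obtain ⟨M1, h1⟩ := eventually_linear hδ h1
  obtain ⟨M2, h2⟩ := eventually_linear hδ h2
  refine ⟨max M1 M2, fun a b ha hb => ?_⟩
  have h1 := h1 b (le_of_max_le_left hb)
  have h2 := h2 a (le_of_max_le_right ha)
  have e1 : ∑ i ∈ Finset.range b, -Real.log (wt p (word x (((1 : ℕ) : ℤ) * i) 1)) =
      -Real.log (wt p (word x 0 b)) := by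
    rw [neg_log_wt_word hp]; simp
  have e2 : ∑ i ∈ Finset.range a, -Real.log (wt p (word x (((1 : ℕ) : ℤ) * (-((i : ℤ) + 1))) 1)) =
      -Real.log (wt p (word x (-a) a)) := by
    rw [neg_log_wt_word hp, ← Finset.sum_range_reflect]
    refine Finset.sum_congr rfl fun i hi => ?_
    rw [Finset.mem_range] at hi
    congr 5
    push_cast
    omega
  rw [e1] at h1
  rw [e2] at h2
  rw [word_add, wt_append, Real.log_mul (wt_pos hp _).ne' (wt_pos hp _).ne', neg_add_cancel]
  push_cast
  rw [abs_le] at *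
  constructor <;> nlinarith

open Classical in
lemma occ_grid_le {u : List A} (hu : u ≠ []) (x : ℤ → A) (t : ℤ) (n : ℕ) :
    ∑ i ∈ Finset.range n, (if word x (t + u.length * i) u.length = u then (1 : ℝ) else 0) ≤
      occ u (word x t (u.length * n)) := by
  induction n with
  | zero => simp [occ]
  | succ n ih =>
    rw [Finset.sum_range_succ, mul_add, mul_one, word_add]
    have h1 := occ_append_ge u (word x t (u.length * n)) (word x (t + (u.length * n : ℕ)) u.length)
    have h2 : (if word x (t + u.length * n) u.length = u then (1 : ℝ) else 0) ≤
        occ u (word x (t + (u.length * n : ℕ)) u.length) := by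
      push_cast
      split_ifs with h
      · rw [h]; exact_mod_cast one_le_occ_self hu
      · positivity
    have h3 : (occ u (word x t (u.length * n)) + occ u (word x (t + (u.length * n : ℕ)) u.length) : ℝ)
      ≤ occ u (word x t (u.length * n) ++ word x (t + (u.length * n : ℕ)) u.length) := by
      exact_mod_cast h1
    linarith

/-- Almost every sequence has windows around the origin containing linearly many copies of a
given word. -/
lemma ae_occ_linear (hp : IsProbVector p) (hμ : IsBernoulliMeasure μ p) {u : List A} (hu : u ≠ []) :
    ∀ᵐ x ∂μ, ∃ M : ℕ, ∀ a b : ℕ, M ≤ a → M ≤ b →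
      wt p u / (4 * u.length) * (a + b : ℕ) ≤ occ u (word x (-a) (a + b)) := by
  classical
  have := isProbabilityMeasure_of_bernoulli hμ (nonempty_of_isProbVector hp)
  set m := u.length with hm
  have hm0 : 0 < m := List.length_pos_iff.2 hu
  set f : List A → ℝ := fun v => if v = u then 1 else 0 with hf
  have hInt : ∫ x, f (word x 0 m) ∂μ = wt p u := by
    have hM : MeasurableSet {x : ℤ → A | word x 0 m = u} :=
      measurableSet_of_dependsOn (dependsOn_word 0 m (fun v => v = u))
    have e : (fun x : ℤ → A => f (word x 0 m)) = {x | word x 0 m = u}.indicator 1 := by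
      funext x; simp [hf, Set.indicator_apply]
    rw [e, integral_indicator_one hM, measureReal_def, measure_word hp hμ,
      ENNReal.toReal_ofReal (wt_pos hp u).le]
  have h1 := tendsto_average hp hμ f (m := m) (σ := fun i => (i : ℤ))
    Nat.cast_injective
  have h2 := tendsto_average hp hμ f (m := m) injective_negSucc
  filter_upwards [h1, h2] with x h1 h2
  rw [hInt] at h1 h2
  have hpos := wt_pos hp u
  obtain ⟨M1, h1⟩ := eventually_linear (half_pos hpos) h1
  obtain ⟨M2, h2⟩ := eventually_linear (half_pos hpos) h2
  refine ⟨m * (M1 + M2 + 1), fun a b ha hb => ?_⟩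
  have key : ∀ c M : ℕ, m * (M + 1) ≤ c → M ≤ c / m ∧ (c : ℝ) ≤ 2 * m * (c / m : ℕ) := by
    intro c M hc
    have h3 : M + 1 ≤ c / m := (Nat.le_div_iff_mul_le hm0).2 (by rwa [mul_comm])
    refine ⟨by omega, ?_⟩
    have h4 : c < m * (c / m + 1) := Nat.lt_mul_div_succ c hm0
    have : c ≤ 2 * m * (c / m) := by nlinarith
    exact_mod_cast this
  obtain ⟨kb1, kb2⟩ := key b (M1 + M2) hb
  obtain ⟨ka1, ka2⟩ := key a (M1 + M2) ha
  have h1 := (abs_le.1 (h1 (b / m) (by omega))).1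
  have h2 := (abs_le.1 (h2 (a / m) (by omega))).1
  have e1 : ∑ i ∈ Finset.range (b / m), f (word x ((m : ℤ) * i) m) ≤ occ u (word x 0 b) := by
    have h := occ_grid_le hu x 0 (b / m)
    simp only [zero_add, ← hm] at h
    refine h.trans ?_
    have hb' : b = m * (b / m) + b % m := (Nat.div_add_mod b m).symm
    conv_rhs => rw [hb', word_add]
    exact_mod_cast le_trans (Nat.le_add_right _ _) (occ_append_ge _ _ _)
  have e2 : ∑ i ∈ Finset.range (a / m), f (word x ((m : ℤ) * (-((i : ℤ) + 1))) m) ≤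
      occ u (word x (-a) a) := by
    have h := occ_grid_le hu x (-(m * (a / m) : ℕ)) (a / m)
    simp only [← hm] at h
    rw [← Finset.sum_range_reflect]
    have e : ∀ i ∈ Finset.range (a / m), f (word x ((m : ℤ) * (-(((a / m - 1 - i : ℕ) : ℤ) + 1))) m)
        = if word x (-(m * (a / m) : ℕ) + m * i) m = u then (1 : ℝ) else 0 := by
      intro i hi
      rw [Finset.mem_range] at hi
      rw [hf]
      dsimp only
      have : ((a / m - 1 - i : ℕ) : ℤ) = ((a / m : ℕ) : ℤ) - 1 - i := by omega
      rw [this]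
      have e' : (m : ℤ) * (-(((a / m : ℕ) : ℤ) - 1 - i + 1)) = -(m * (a / m) : ℕ) + m * i := by
        rw [Nat.cast_mul]; ring
      rw [e']
    rw [Finset.sum_congr rfl e]
    refine h.trans ?_
    have ha' : a = a % m + m * (a / m) := (Nat.mod_add_div a m).symm
    have : word x (-a) a = word x (-a) (a % m) ++ word x (-(m * (a / m) : ℕ)) (m * (a / m)) := by
      conv_lhs => rw [show word x (-a) a = word x (-a) (a % m + m * (a / m)) by rw [← ha'], word_add]
      congr 2
      zify at ha'
      push_cast
      omega
    rw [this]
    exact_mod_cast le_trans (Nat.le_add_left _ _) (occ_append_ge _ _ _)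
  have e3 : (occ u (word x (-a) a) + occ u (word x 0 b) : ℝ) ≤ occ u (word x (-a) (a + b)) := by
    rw [word_add, neg_add_cancel]
    exact_mod_cast occ_append_ge _ _ _
  have hm' : (0 : ℝ) < m := by exact_mod_cast hm0
  have e4 : wt p u / (4 * m) * ((a + b : ℕ) : ℝ) ≤ wt p u / 2 * ((a / m : ℕ) + (b / m : ℕ)) := by
    rw [div_mul_eq_mul_div, div_le_iff₀ (by positivity)]
    push_cast
    nlinarith
  push_cast at e4 ⊢
  linarith

end LLN

/-- A Bernoulli measure together with a marker word that does not overlap itself and that leaves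
some freedom inside long gaps. -/
structure Marked {A : Type*} [Fintype A] [MeasurableSpace A] (p : A → ℝ) (μ : Measure (ℤ → A))
    (w : List A) : Prop where
  prob : IsProbVector p
  bern : IsBernoulliMeasure μ p
  nonOverlap : NonOverlap w
  ne_nil : w ≠ []
  rich : ∃ g₀, ∀ g ≥ g₀, ∃ v v', v ≠ v' ∧ sig w v = gapWord g ∧ sig w v' = gapWord g

/-- The probability of a cut of level `N`. -/
def cutProb {A : Type*} [MeasurableSpace A] (μ : Measure (ℤ → A)) (w : List A) (N : ℕ) : ℝ≥0∞ :=
  μ {x | cut N (bits w x) 0}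

section BlockMeasure
variable {A : Type*} [Fintype A] [MeasurableSpace A] [DiscreteMeasurableSpace A]
  {p : A → ℝ} {μ : Measure (ℤ → A)} {w : List A}

lemma Marked.isProbabilityMeasure (h : Marked p μ w) : IsProbabilityMeasure μ :=
  isProbabilityMeasure_of_bernoulli h.bern (nonempty_of_isProbVector h.prob)

lemma measurableSet_cut (w : List A) (N : ℕ) (t : ℤ) :
    MeasurableSet {x : ℤ → A | cut N (bits w x) t} :=
  measurableSet_of_dependsOn (dependsOn_cut w t N)

lemma Marked.measure_cut (h : Marked p μ w) (N : ℕ) (t : ℤ) :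
    μ {x | cut N (bits w x) t} = cutProb μ w N := by
  have e : {x : ℤ → A | cut N (bits w x) t} = trans t ⁻¹' {x | cut N (bits w x) 0} := by
    ext x
    simp [bits_trans, cut_trans]
  rw [e, (measurePreserving_trans h.prob h.bern t).measure_preimage
    (measurableSet_cut w N 0).nullMeasurableSet, cutProb]

lemma Marked.mul_cutProb_le (h : Marked p μ w) (N : ℕ) : N * cutProb μ w N ≤ 1 := by
  have := h.isProbabilityMeasure
  have hd : Pairwise (Function.onFun Disjoint fun i : Fin N => {x : ℤ → A | cut N (bits w x) i}) := by
    intro i j hij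
    rw [Function.onFun, Set.disjoint_left]
    intro x hi hj
    simp only [Set.mem_ofPred_eq] at hi hj
    have hij' : (i : ℕ) ≠ j := fun h => hij (Fin.ext h)
    rcases lt_or_gt_of_ne hij' with hlt | hlt
    · have := hi.separated hj (by exact_mod_cast hlt)
      have := j.2
      omega
    · have := hj.separated hi (by exact_mod_cast hlt)
      have := i.2
      omega
  have h1 := measure_iUnion hd (fun i => measurableSet_cut w N i) (μ := μ)
  rw [tsum_fintype] at h1
  simp only [h.measure_cut, Finset.sum_const, Finset.card_univ, Fintype.card_fin,
    nsmul_eq_mul] at h1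
  rw [← h1]
  exact prob_le_one

lemma Marked.cutProb_lt_top (h : Marked p μ w) (N : ℕ) : cutProb μ w N ≠ ∞ := by
  have := h.isProbabilityMeasure
  exact measure_ne_top _ _

lemma cut_of_word (hw : NonOverlap w) {N : ℕ} (hN : 0 < N) {u : List A} (hu : sig w u = gapWord N)
    {x : ℤ → A} {t : ℤ} (h : word x t (u ++ w).length = u ++ w) : cut N (bits w x) t := by
  have hl : u.length = N := by rw [← length_sig (w := w), hu, length_gapWord hN]
  rw [List.length_append, word_add] at h
  obtain ⟨h1, h2⟩ := List.append_inj h (by simp)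
  rw [cut, ← hu, ← hl, ← sig_word hw (bits_eq_true.2 h2), h1]

lemma Marked.cutProb_pos (h : Marked p μ w) {N : ℕ} (hN : 0 < N) {u : List A}
    (hu : sig w u = gapWord N) : 0 < cutProb μ w N := by
  refine lt_of_lt_of_le ?_ (measure_mono (μ := μ) (s := {x | word x 0 (u ++ w).length = u ++ w})
    fun x hx => cut_of_word h.nonOverlap hN hu hx)
  rw [measure_word h.prob h.bern]
  exact ENNReal.ofReal_pos.2 (wt_pos h.prob _)

lemma ae_exists_word (hp : IsProbVector p) (hμ : IsBernoulliMeasure μ p) (u : List A)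
    {σ : ℕ → ℤ} (hσ : Function.Injective σ) :
    ∀ᵐ x ∂μ, ∃ i, word x (u.length * σ i) u.length = u := by
  classical
  have := isProbabilityMeasure_of_bernoulli hμ (nonempty_of_isProbVector hp)
  have h := tendsto_average hp hμ (fun v => if v = u then 1 else 0) (m := u.length) hσ
  filter_upwards [h] with x hx
  by_contra! hne
  simp only [hne, if_false, Finset.sum_const_zero, zero_div] at hx
  have h0 := tendsto_nhds_unique hx tendsto_const_nhds
  have hM : MeasurableSet {x : ℤ → A | word x 0 u.length = u} :=
      measurableSet_of_dependsOn (dependsOn_word 0 u.length (fun v => v = u))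
  have e : (fun x : ℤ → A => if word x 0 u.length = u then (1 : ℝ) else 0) =
      {x | word x 0 u.length = u}.indicator 1 := by
    funext x; simp [Set.indicator_apply]
  rw [e, integral_indicator_one hM, measureReal_def, measure_word hp hμ,
      ENNReal.toReal_ofReal (wt_pos hp u).le] at h0
  exact (wt_pos hp u).ne' h0

lemma Marked.ae_exists_at (h : Marked p μ w) {N : ℕ} (hN : 0 < N) {u : List A}
    (hu : sig w u = gapWord N) : ∀ᵐ x ∂μ, ∃ v j, At w N x v j := by
  have h0 : 0 < (u ++ w).length := by
    have : u.length = N := by rw [← length_sig (w := w), hu, length_gapWord hN]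
    simp; omega
  filter_upwards [ae_exists_word h.prob h.bern (u ++ w) injective_negSucc,
    ae_exists_word h.prob h.bern (u ++ w) (σ := fun i : ℕ => (i : ℤ) + 1)
      (fun a b h => by simpa using h)] with x ⟨i, hi⟩ ⟨j, hj⟩
  refine exists_at h.nonOverlap hN ⟨_, ?_, cut_of_word h.nonOverlap hN hu hi⟩
    ⟨_, ?_, cut_of_word h.nonOverlap hN hu hj⟩
  · exact mul_nonpos_of_nonneg_of_nonpos (by positivity) (by omega)
  · exact mul_pos (by exact_mod_cast h0) (by omega)

lemma measurableSet_word (t : ℤ) (n : ℕ) (E : Set (List A)) :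
    MeasurableSet {x : ℤ → A | word x t n ∈ E} :=
  measurableSet_of_dependsOn (dependsOn_word t n (· ∈ E))

lemma measurableSet_at (w : List A) (N : ℕ) (v : List A) (j : ℕ) :
    MeasurableSet {x : ℤ → A | At w N x v j} := by
  have e : {x : ℤ → A | At w N x v j} = {x | word x (-j) v.length ∈ ({v} : Set (List A))} ∩
      {x | cut N (bits w x) (v.length - j)} ∩
      {x | j < v.length ∧ Ren (gapWord N) (sig w v)} := by
    ext x
    simp only [At, Set.mem_inter_iff, Set.mem_ofPred_eq, Set.mem_singleton_iff]
    tauto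
  rw [e]
  exact ((measurableSet_word _ _ _).inter (measurableSet_cut _ _ _)).inter (MeasurableSet.const _)

lemma Marked.measure_at (h : Marked p μ w) {N : ℕ} {v : List A} {j : ℕ} (hj : j < v.length)
    (hv : Ren (gapWord N) (sig w v)) :
    μ {x | At w N x v j} = ENNReal.ofReal (wt p v) * cutProb μ w N := by
  have e : {x : ℤ → A | At w N x v j} = {x | word x (-j) v.length = v} ∩
      {x | cut N (bits w x) (v.length - j)} := by
    ext x
    simp only [At, Set.mem_inter_iff, Set.mem_ofPred_eq]
    tauto
  rw [e, measure_inter_of_dependsOn h.prob h.bern (F := Finset.Ico (-j : ℤ) (-j + v.length))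
    (E := {x | word x (-j) v.length = v}) (E' := {x | cut N (bits w x) (v.length - j)})
    (G := Finset.Ico (v.length - j : ℤ) (v.length - j + (N + w.length : ℕ))) ?_
    (dependsOn_word _ _ (fun u => u = v)) (dependsOn_cut _ _ _), measure_word h.prob h.bern,
    h.measure_cut]
  rw [Finset.disjoint_left]
  intro t h1 h2
  rw [Finset.mem_Ico] at h1 h2
  omega

lemma atZ_iff_exists_at (hw : NonOverlap w) {N : ℕ} (hN : 0 < N) {x : ℤ → A} {S : List Bool}
    {j : ℕ} : AtZ N (bits w x) S j ↔ ∃ v ∈ fib w S, At w N x v j := by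
  constructor
  · rintro ⟨h1, h2, h3, h4⟩
    have hs : sig w (word x (-j) S.length) = S := by
      rw [sig_word hw, h1]
      convert h3.bit hN using 2
      ring
    refine ⟨word x (-j) S.length, by simpa using hs, ?_⟩
    refine ⟨by simp, by simpa, by simpa, by rwa [hs]⟩
  · rintro ⟨v, hv, h⟩
    rw [mem_fib] at hv
    rw [← hv]
    exact h.atZ hw hN

lemma setOf_atZ (hw : NonOverlap w) {N : ℕ} (hN : 0 < N) (S : List Bool) (j : ℕ) :
    {x : ℤ → A | AtZ N (bits w x) S j} = ⋃ v ∈ fib w S, {x | At w N x v j} := by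
  ext x
  simp only [Set.mem_ofPred_eq, atZ_iff_exists_at hw hN, Set.mem_iUnion, exists_prop]

lemma measurableSet_atZ (hw : NonOverlap w) {N : ℕ} (hN : 0 < N) (S : List Bool) (j : ℕ) :
    MeasurableSet {x : ℤ → A | AtZ N (bits w x) S j} := by
  rw [setOf_atZ hw hN]
  exact Finset.measurableSet_biUnion _ fun v _ => measurableSet_at w N v j

lemma Marked.measure_atZ (h : Marked p μ w) {N : ℕ} (hN : 0 < N) {S : List Bool} {j : ℕ}
    (hj : j < S.length) (hS : Ren (gapWord N) S) :
    μ {x | AtZ N (bits w x) S j} = ENNReal.ofReal (∑ v ∈ fib w S, wt p v) * cutProb μ w N := by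
  rw [setOf_atZ h.nonOverlap hN, measure_biUnion_finset ?_ fun v _ => measurableSet_at w N v j,
    ENNReal.ofReal_sum_of_nonneg fun v _ => (wt_pos h.prob v).le, Finset.sum_mul]
  · refine Finset.sum_congr rfl fun v hv => ?_
    rw [mem_fib] at hv
    exact h.measure_at (by rwa [← length_sig (w := w), hv]) (by rwa [hv])
  · intro v _ v' _ hne
    rw [Function.onFun, Set.disjoint_left]
    intro x h1 h2
    exact hne (h1.unique h.nonOverlap hN h2).1

/-- If the exceptional words are a small fraction of the words over each skeleton, then the block
at the origin is rarely exceptional. -/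
lemma Marked.measure_at_mem_le (h : Marked p μ w) {N : ℕ} (hN : 0 < N) {Bad : Set (List A)}
    {ε : ℝ} (hε : 0 ≤ ε) (hBad : ∀ S, Ren (gapWord N) S → ∀ T ⊆ fib w S, (∀ v ∈ T, v ∈ Bad) →
      ∑ v ∈ T, wt p v ≤ ε * ∑ v ∈ fib w S, wt p v) :
    μ {x | ∃ v j, At w N x v j ∧ v ∈ Bad} ≤ ENNReal.ofReal ε := by
  classical
  have := h.isProbabilityMeasure
  have h1 : {x | ∃ v j, At w N x v j ∧ v ∈ Bad} ⊆ ⋃ Sj : List Bool × ℕ,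
      ⋃ v ∈ (fib w Sj.1).filter (· ∈ Bad), {x | At w N x v Sj.2} := by
    rintro x ⟨v, j, hx, hv⟩
    simp only [Set.mem_iUnion]
    exact ⟨(sig w v, j), v, by simpa using hv, hx⟩
  have h2 : ∀ Sj : List Bool × ℕ, μ (⋃ v ∈ (fib w Sj.1).filter (· ∈ Bad), {x | At w N x v Sj.2}) ≤
      ENNReal.ofReal ε * μ {x | AtZ N (bits w x) Sj.1 Sj.2} := by
    rintro ⟨S, j⟩
    dsimp only
    by_cases hv : j < S.length ∧ Ren (gapWord N) S
    · rw [h.measure_atZ hN hv.1 hv.2, ← mul_assoc, ← ENNReal.ofReal_mul hε]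
      refine (measure_biUnion_finset_le _ _).trans ?_
      have : ∀ v ∈ (fib w S).filter (· ∈ Bad), μ {x | At w N x v j} =
          ENNReal.ofReal (wt p v) * cutProb μ w N := by
        intro v hv'
        rw [Finset.mem_filter, mem_fib] at hv'
        exact h.measure_at (by rw [← length_sig (w := w), hv'.1]; exact hv.1)
          (by rw [hv'.1]; exact hv.2)
      rw [Finset.sum_congr rfl this, ← Finset.sum_mul,
        ← ENNReal.ofReal_sum_of_nonneg fun v _ => (wt_pos h.prob v).le]
      gcongr
      exact hBad S hv.2 _ (Finset.filter_subset _ _) fun v hv => (Finset.mem_filter.1 hv).2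
    · have : (⋃ v ∈ (fib w S).filter (· ∈ Bad), {x | At w N x v j}) = ∅ := by
        simp only [Set.iUnion_eq_empty]
        intro v hv'
        rw [Finset.mem_filter, mem_fib] at hv'
        ext x
        simp only [Set.mem_ofPred_eq, Set.mem_empty_iff_false, iff_false]
        intro hx
        apply hv
        rw [← hv'.1]
        exact ⟨by simpa using hx.2.1, hx.2.2.2⟩
      rw [this]
      simp
  calc μ {x | ∃ v j, At w N x v j ∧ v ∈ Bad} ≤ _ := measure_mono h1
    _ ≤ _ := measure_iUnion_le _
    _ ≤ ∑' Sj : List Bool × ℕ, ENNReal.ofReal ε * μ {x | AtZ N (bits w x) Sj.1 Sj.2} :=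
        ENNReal.tsum_le_tsum h2
    _ = ENNReal.ofReal ε * ∑' Sj : List Bool × ℕ, μ {x | AtZ N (bits w x) Sj.1 Sj.2} :=
        ENNReal.tsum_mul_left
    _ ≤ ENNReal.ofReal ε * 1 := by
        gcongr
        rw [← measure_iUnion ?_ fun Sj => measurableSet_atZ h.nonOverlap hN _ _]
        · exact prob_le_one
        · rintro ⟨S, j⟩ ⟨S', j'⟩ hne
          rw [Function.onFun, Set.disjoint_left]
          intro x h3 h4
          obtain ⟨rfl, rfl⟩ := AtZ.unique hN h3 h4
          exact hne rfl
    _ = _ := mul_one _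

/-- Blocks of high level are long, so they inherit the properties of long windows. -/
lemma Marked.exists_measure_at_le (h : Marked p μ w) {Typ : Set (List A)}
    (hT : ∀ᵐ x ∂μ, ∃ M : ℕ, ∀ a b : ℕ, M ≤ a → M ≤ b → word x (-a) (a + b) ∈ Typ)
    {ε : ℝ≥0∞} (hε : ε ≠ 0) :
    ∃ N₀, ∀ N ≥ N₀, μ {x | ∃ v j, At w N x v j ∧ v ∉ Typ} ≤ ε := by
  have := h.isProbabilityMeasure
  set G : ℕ → Set (ℤ → A) := fun M => {x | ∀ a b : ℕ, M ≤ a → M ≤ b → word x (-a) (a + b) ∈ Typ}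
    with hG
  have hGm : ∀ M, MeasurableSet (G M) := by
    intro M
    have : G M = ⋂ (a : ℕ) (b : ℕ) (_ : M ≤ a) (_ : M ≤ b), {x | word x (-a) (a + b) ∈ Typ} := by
      ext x; simp [hG]
    rw [this]
    exact MeasurableSet.iInter fun a => MeasurableSet.iInter fun b => MeasurableSet.iInter fun _ =>
      MeasurableSet.iInter fun _ => measurableSet_word _ _ _
  have hanti : Antitone fun M => (G M)ᶜ := by
    intro M M' hM x hx hx'
    exact hx fun a b ha hb => hx' a b (hM.trans ha) (hM.trans hb)
  have hlim := tendsto_measure_iInter_atTop (μ := μ) (fun M => (hGm M).compl.nullMeasurableSet) hanti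
    ⟨0, measure_ne_top _ _⟩
  have h0 : μ (⋂ M, (G M)ᶜ) = 0 := by
    refine measure_mono_null ?_ hT
    intro x hx
    simp only [Set.mem_iInter, Set.mem_compl_iff] at hx
    rintro ⟨M, hM⟩
    exact hx M hM
  rw [h0] at hlim
  have hε2 : ε / 2 ≠ 0 := by simpa using hε
  obtain ⟨M, hM⟩ := ((tendsto_order.1 hlim).2 _ (pos_iff_ne_zero.2 hε2)).exists
  obtain ⟨N₀, hN₀⟩ := ENNReal.exists_nat_mul_gt hε2 (b := (2 * M + 1 : ℕ))
    (ENNReal.natCast_ne_top _)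
  refine ⟨N₀ + 1, fun N hN => ?_⟩
  have hsub : {x | ∃ v j, At w N x v j ∧ v ∉ Typ} ⊆
      (G M)ᶜ ∪ ⋃ t ∈ Finset.Icc (-M : ℤ) M, {x | cut N (bits w x) t} := by
    rintro x ⟨v, j, hx, hv⟩
    by_contra hne
    simp only [Set.mem_union, Set.mem_compl_iff, not_or, not_not, Set.mem_iUnion, not_exists,
      Finset.mem_Icc, Set.mem_ofPred_eq] at hne
    obtain ⟨h1, h2⟩ := hne
    have h3 := h2 (-j)
    have h4 := h2 (v.length - j)
    have h5 := hx.cut_start h.nonOverlap (by omega)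
    have h6 := hx.2.2.1
    have h7 := hx.2.1
    have h8 := h1 j (v.length - j) (by by_contra hlt; exact h3 (by omega) h5)
      (by by_contra hlt; exact h4 (by omega) h6)
    rw [Nat.add_sub_cancel' h7.le, hx.1] at h8
    exact hv h8
  refine (measure_mono hsub).trans ((measure_union_le _ _).trans ?_)
  rw [← ENNReal.add_halves ε]
  refine add_le_add hM.le ((measure_biUnion_finset_le _ _).trans ?_)
  simp only [h.measure_cut, Finset.sum_const, Int.card_Icc, nsmul_eq_mul]
  have e : ((M : ℤ) + 1 - -M).toNat = 2 * M + 1 := by omega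
  rw [e]
  by_contra hlt
  push Not at hlt
  have h1 := h.mul_cutProb_le N
  have hNr : (N₀ : ℝ≥0∞) ≤ N := by exact_mod_cast (by omega : N₀ ≤ N)
  have h2 : ((2 * M + 1 : ℕ) : ℝ≥0∞) < N * (((2 * M + 1 : ℕ) : ℝ≥0∞) * cutProb μ w N) :=
    hN₀.trans_le (by gcongr)
  rw [mul_left_comm] at h2
  have h3 : ((2 * M + 1 : ℕ) : ℝ≥0∞) * (N * cutProb μ w N) ≤ (2 * M + 1 : ℕ) * 1 := by gcongr
  rw [mul_one] at h3
  exact absurd h2 (not_lt.2 h3)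

/-- A fixed block is rarely a single long gap. -/
lemma Marked.exists_measure_gap_le (h : Marked p μ w) {N : ℕ} (hN : 0 < N) {ε : ℝ≥0∞}
    (hε : ε ≠ 0) (g₀ : ℕ) :
    ∃ g ≥ g₀, μ {x | ∃ j, AtZ N (bits w x) (gapWord g) j} ≤ ε := by
  have := h.isProbabilityMeasure
  have hm : ∀ g, MeasurableSet {x : ℤ → A | ∃ j, AtZ N (bits w x) (gapWord g) j} := by
    intro g
    have : {x : ℤ → A | ∃ j, AtZ N (bits w x) (gapWord g) j} =
        ⋃ j, {x | AtZ N (bits w x) (gapWord g) j} := by ext x; simp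
    rw [this]
    exact MeasurableSet.iUnion fun j => measurableSet_atZ h.nonOverlap hN _ _
  have hd : Pairwise (Function.onFun Disjoint
      fun g : ℕ => {x : ℤ → A | ∃ j, AtZ N (bits w x) (gapWord (g + 1)) j}) := by
    intro g g' hne
    rw [Function.onFun, Set.disjoint_left]
    rintro x ⟨j, h1⟩ ⟨j', h2⟩
    have := congrArg List.length (h1.unique hN h2).1
    rw [length_gapWord (by omega), length_gapWord (by omega)] at this
    omega
  have h1 := measure_iUnion hd (fun g => hm _) (μ := μ)
  have h2 := ENNReal.tendsto_atTop_zero_of_tsum_ne_top (h1 ▸ measure_ne_top _ _)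
  obtain ⟨g, hg, hg'⟩ := (((tendsto_order.1 h2).2 ε (pos_iff_ne_zero.2 hε)).and
    (eventually_ge_atTop g₀)).exists
  exact ⟨g + 1, by omega, hg.le⟩

lemma bits_separated (hw : NonOverlap w) {x : ℤ → A} {s t : ℤ} (hs : bits w x s = true)
    (ht : bits w x t = true) (hst : s < t) : s + w.length ≤ t := by
  rw [bits_eq_true] at hs ht
  by_contra hlt
  push Not at hlt
  obtain ⟨i, hi⟩ : ∃ i : ℕ, t = s + i := ⟨(t - s).toNat, by omega⟩
  subst hi
  have hi : i ≤ w.length := by omega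
  refine hw i (by omega) (by omega) ?_
  have h1 : w.drop i = word x (s + i) (w.length - i) := by
    rw [← drop_word x s hi, hs]
  rw [h1, ← take_word x (s + i) (Nat.sub_le w.length i), ht]
  exact ⟨_, List.take_append_drop _ _⟩

open Classical in
lemma Marked.measure_bits (h : Marked p μ w) (F : Finset ℤ) :
    μ {x | ∀ t ∈ F, bits w x t = true} =
      if ∀ s ∈ F, ∀ t ∈ F, s < t → s + w.length ≤ t then ENNReal.ofReal (wt p w) ^ F.card else 0 := by
  have := h.isProbabilityMeasure
  induction F using Finset.induction_on_max with
  | empty => simp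
  | insert t F ht ih =>
    split_ifs with hsep
    · have hsep' : ∀ s ∈ F, ∀ t ∈ F, s < t → s + w.length ≤ t := fun s hs t ht =>
        hsep s (Finset.mem_insert_of_mem hs) t (Finset.mem_insert_of_mem ht)
      rw [if_pos hsep'] at ih
      have hd : DependsOn (fun x : ℤ → A => x ∈ {x | ∀ t ∈ F, bits w x t = true})
          (F.biUnion fun s => Finset.Ico s (s + w.length) : Finset ℤ) := by
        intro x y hxy
        simp only [Set.mem_ofPred_eq, bits_eq_true]
        rw [eq_iff_iff]
        refine forall₂_congr fun s hs => ?_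
        rw [word_congr fun i h1 h2 => hxy i ?_]
        rw [Finset.mem_coe, Finset.mem_biUnion]
        exact ⟨s, hs, by simp [h1, h2]⟩
      have hdisj : Disjoint (F.biUnion fun s => Finset.Ico s (s + w.length))
          (Finset.Ico t (t + w.length)) := by
        rw [Finset.disjoint_left]
        intro i h1 h2
        rw [Finset.mem_biUnion] at h1
        obtain ⟨s, hs, h1⟩ := h1
        rw [Finset.mem_Ico] at h1 h2
        have := hsep s (Finset.mem_insert_of_mem hs) t (Finset.mem_insert_self _ _) (ht s hs)
        omega
      have e : {x : ℤ → A | ∀ s ∈ insert t F, bits w x s = true} =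
          {x | ∀ t ∈ F, bits w x t = true} ∩ {x | word x t w.length = w} := by
        ext x
        simp only [Finset.mem_insert, forall_eq_or_imp, Set.mem_ofPred_eq, Set.mem_inter_iff,
          ← bits_eq_true (w := w)]
        tauto
      rw [e, measure_inter_of_dependsOn h.prob h.bern
        (E' := {x | word x t w.length = w}) hdisj hd (dependsOn_word _ _ (fun u => u = w)),
        ih, measure_word h.prob h.bern, Finset.card_insert_of_notMem fun hmem =>
          lt_irrefl _ (ht t hmem), pow_succ]
    · have : {x : ℤ → A | ∀ s ∈ insert t F, bits w x s = true} = ∅ := by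
        ext x
        simp only [Set.mem_ofPred_eq, Set.mem_empty_iff_false, iff_false]
        intro hx
        exact hsep fun s hs t ht => bits_separated h.nonOverlap (hx s hs) (hx t ht)
      rw [this, measure_empty]

lemma measurable_bits (w : List A) : Measurable (bits w : (ℤ → A) → ℤ → Bool) :=
  measurable_pi_lambda _ fun t => measurable_of_dependsOn
    (dependsOn_word t w.length fun v => open Classical in decide (v = w))

variable {B : Type*} [Fintype B] [MeasurableSpace B] [DiscreteMeasurableSpace B]
  {q : B → ℝ} {ν : Measure (ℤ → B)} {w' : List B}

/-- The law of the marker bits only depends on the length and the weight of the marker. -/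
lemma Marked.map_bits_eq (h : Marked p μ w) (h' : Marked q ν w') (hl : w.length = w'.length)
    (hwt : wt p w = wt q w') : μ.map (bits w) = ν.map (bits w') := by
  have := h.isProbabilityMeasure
  have := h'.isProbabilityMeasure
  have := Measure.isProbabilityMeasure_map (μ := μ) (measurable_bits w).aemeasurable
  set C : Set (Set (ℤ → Bool)) := Set.range fun F : Finset ℤ => {z | ∀ t ∈ F, z t = true} with hC
  have hmeas : ∀ F : Finset ℤ, MeasurableSet {z : ℤ → Bool | ∀ t ∈ F, z t = true} := fun F =>
    measurableSet_of_dependsOn (F := F) fun x y hxy => by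
      simp only [Set.mem_ofPred_eq]
      rw [eq_iff_iff]
      exact forall₂_congr fun t ht => by rw [hxy t ht]
  refine ext_of_generate_finite C ?_ ?_ ?_ ?_
  · apply le_antisymm
    · refine iSup_le fun t => ?_
      rw [← measurable_iff_comap_le]
      refine @measurable_to_bool _ (MeasurableSpace.generateFrom C) _ ?_
      refine MeasurableSpace.measurableSet_generateFrom ⟨{t}, ?_⟩
      ext z; simp
    · refine MeasurableSpace.generateFrom_le ?_
      rintro _ ⟨F, rfl⟩
      exact hmeas F
  · rintro _ ⟨F, rfl⟩ _ ⟨G, rfl⟩ _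
    classical
    refine ⟨F ∪ G, ?_⟩
    ext z
    simp only [Finset.mem_union, Set.mem_ofPred_eq, Set.mem_inter_iff]
    constructor
    · exact fun h => ⟨fun t ht => h t (Or.inl ht), fun t ht => h t (Or.inr ht)⟩
    · rintro ⟨h1, h2⟩ t (ht | ht)
      exacts [h1 t ht, h2 t ht]
  · rintro _ ⟨F, rfl⟩
    rw [Measure.map_apply (measurable_bits w) (hmeas F),
      Measure.map_apply (measurable_bits w') (hmeas F)]
    have h1 := h.measure_bits F
    have h2 := h'.measure_bits F
    rw [hl, hwt] at h1
    exact h1.trans h2.symm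
  · rw [Measure.map_apply (measurable_bits w) MeasurableSet.univ,
      Measure.map_apply (measurable_bits w') MeasurableSet.univ]
    simp

lemma measurableSet_cutZ (N : ℕ) (t : ℤ) : MeasurableSet {z : ℤ → Bool | cut N z t} :=
  measurableSet_word t N {gapWord N}

lemma Marked.cutProb_eq (h : Marked p μ w) (h' : Marked q ν w') (hl : w.length = w'.length)
    (hwt : wt p w = wt q w') (N : ℕ) : cutProb μ w N = cutProb ν w' N := by
  have e : μ.map (bits w) {z | cut N z 0} = ν.map (bits w') {z | cut N z 0} := by
    rw [h.map_bits_eq h' hl hwt]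
  rwa [Measure.map_apply (measurable_bits w) (measurableSet_cutZ N 0),
      Measure.map_apply (measurable_bits w') (measurableSet_cutZ N 0)] at e

lemma Marked.mass_eq (h : Marked p μ w) (h' : Marked q ν w') (hl : w.length = w'.length)
    (hwt : wt p w = wt q w') {N : ℕ} (hN : 0 < N) {u : List A} (hu : sig w u = gapWord N)
    {S : List Bool} (hS : Ren (gapWord N) S) :
    ∑ v ∈ fib w S, wt p v = ∑ v ∈ fib w' S, wt q v := by
  have hm : MeasurableSet {z : ℤ → Bool | AtZ N z S 0} := by
    have e : {z : ℤ → Bool | AtZ N z S 0} = {z | word z 0 S.length ∈ ({S} : Set (List Bool))} ∩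
      {z | cut N z S.length} ∩ {z | 0 < S.length ∧ Ren (gapWord N) S} := by
      ext x
      simp only [AtZ, Set.mem_inter_iff, Set.mem_ofPred_eq, Set.mem_singleton_iff,
        Nat.cast_zero, neg_zero, sub_zero]
      tauto
    rw [e]
    exact ((measurableSet_word _ _ _).inter (measurableSet_cutZ _ _)).inter (MeasurableSet.const _)
  have e : μ.map (bits w) {z | AtZ N z S 0} = ν.map (bits w') {z | AtZ N z S 0} := by
    rw [h.map_bits_eq h' hl hwt]
  rw [Measure.map_apply (measurable_bits w) hm, Measure.map_apply (measurable_bits w') hm] at e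
  have hS0 : 0 < S.length := by
    have := hS.1.length_le
    rw [length_gapWord hN] at this
    omega
  have e' := (h.measure_atZ hN hS0 hS).symm.trans (e.trans (h'.measure_atZ hN hS0 hS))
  rw [← h.cutProb_eq h' hl hwt, ENNReal.mul_left_inj (h.cutProb_pos hN hu).ne'
    (h.cutProb_lt_top N), ENNReal.ofReal_eq_ofReal_iff
    (Finset.sum_nonneg fun v _ => (wt_pos h.prob v).le)
    (Finset.sum_nonneg fun v _ => (wt_pos h'.prob v).le)] at e'
  exact e'

end BlockMeasure

/-- A coupling of the level `N` blocks of two marked Bernoulli measures which preserves the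
skeleton. -/
structure IsCpl {A B : Type*} [Finite A] [Finite B] (p : A → ℝ) (q : B → ℝ) (w : List A)
    (w' : List B) (N : ℕ) (l : List A → List B → ℝ) : Prop where
  nonneg : ∀ v v', 0 ≤ l v v'
  supp : ∀ v v', l v v' ≠ 0 → sig w v = sig w' v' ∧ Ren (gapWord N) (sig w v)
  row : ∀ v, Ren (gapWord N) (sig w v) → ∑ v' ∈ fib w' (sig w v), l v v' = wt p v
  col : ∀ v', Ren (gapWord N) (sig w' v') → ∑ v ∈ fib w (sig w' v'), l v v' = wt q v'

section Lists
variable {α β γ : Type*}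

lemma exists_of_map_eq_append_cons {f : α → β} {V : List α} {s₁ s₂ : List β} {s : β}
    (h : V.map f = s₁ ++ s :: s₂) :
    ∃ V₁ v V₂, V = V₁ ++ v :: V₂ ∧ V₁.map f = s₁ ∧ f v = s := by
  obtain ⟨V₁, V', rfl, h1, h2⟩ := List.map_eq_append_iff.1 h
  obtain ⟨v, V₂, rfl, h3, h4⟩ := List.map_eq_cons_iff.1 h2
  exact ⟨V₁, v, V₂, rfl, h1, h3⟩

lemma forall₂_append_cons {R : α → β → Prop} {V₁ V₂ : List α} {v : α} {W₁ W₂ : List β} {w : β}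
    (h : List.Forall₂ R (V₁ ++ v :: V₂) (W₁ ++ w :: W₂)) (hl : V₁.length = W₁.length) : R v w := by
  induction V₁ generalizing W₁ with
  | nil =>
    cases W₁ with
    | nil => simp only [List.nil_append, List.forall₂_cons] at h; exact h.1
    | cons => simp at hl
  | cons a V₁ ih =>
    cases W₁ with
    | nil => simp at hl
    | cons b W₁ =>
      simp only [List.cons_append, List.forall₂_cons] at h
      exact ih h.2 (by simpa using hl)

lemma getElem?_flatten_append_cons {V₁ V₂ : List (List α)} {v : List α} {i : ℕ}
    (hi : i < v.length) : (V₁ ++ v :: V₂).flatten[V₁.flatten.length + i]? = v[i]? := by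
  rw [List.flatten_append, List.flatten_cons, List.getElem?_append_right (by omega),
    Nat.add_sub_cancel_left, List.getElem?_append_left hi]

end Lists

section Split
variable {A B : Type*} {w : List A}

open Classical in
/-- The decomposition of a word according to a decomposition of its skeleton. -/
def split (w : List A) (ss : List (List Bool)) (v : List A) : List (List A) :=
  if h : ∃ V : List (List A), V.map (sig w) = ss ∧ V.flatten = v then h.choose else []

lemma split_spec (hw : NonOverlap w) {ss : List (List Bool)} (hs : ∀ s ∈ ss, [true] <+: s)
    {v : List A} (hv : sig w v = ss.flatten) :
    (split w ss v).map (sig w) = ss ∧ (split w ss v).flatten = v := by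
  have h := exists_split hw hs hv
  rw [split, dif_pos h]
  exact h.choose_spec

lemma sig_flatten_of_map (hw : NonOverlap w) {ss : List (List Bool)} (hs : ∀ s ∈ ss, [true] <+: s)
    {V : List (List A)} (hV : V.map (sig w) = ss) : sig w V.flatten = ss.flatten := by
  rw [sig_flatten hw, hV]
  intro v hv
  exact prefix_of_head_sig (hs _ (by rw [← hV]; exact List.mem_map_of_mem hv))

variable [Finite A]

lemma split_flatten (hw : NonOverlap w) {ss : List (List Bool)} (hs : ∀ s ∈ ss, [true] <+: s)
    {V : List (List A)} (hV : V ∈ fibl (fib w) ss) : split w ss V.flatten = V := by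
  have hV' := mem_fibl_fib.1 hV
  have h := split_spec hw hs (sig_flatten_of_map hw hs hV')
  exact flatten_inj_fibl (mem_fibl_fib.2 h.1) hV h.2

lemma flatten_length_of_map {ss : List (List Bool)} {V : List (List A)} (hV : V.map (sig w) = ss) :
    V.flatten.length = ss.flatten.length := by
  subst hV
  simp [List.length_flatten, Function.comp_def]

end Split

section Coupling
variable {A B : Type*} [Fintype A] [Fintype B] {p : A → ℝ} {q : B → ℝ} {w : List A} {w' : List B}
  {N : ℕ} {l : List A → List B → ℝ}

lemma IsCpl.flip (h : IsCpl p q w w' N l) : IsCpl q p w' w N fun v' v => l v v' where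
  nonneg v' v := h.nonneg v v'
  supp v' v hl := by
    obtain ⟨h1, h2⟩ := h.supp v v' hl
    exact ⟨h1.symm, h1 ▸ h2⟩
  row := h.col
  col := h.row

open Classical in
lemma exists_isCpl (hp : IsProbVector p) (hq : IsProbVector q) (N : ℕ)
    (hmass : ∀ S, Ren (gapWord N) S → ∑ v ∈ fib w S, wt p v = ∑ v ∈ fib w' S, wt q v) :
    ∃ l, IsCpl p q w w' N l := by
  have hpos : ∀ v, Ren (gapWord N) (sig w v) → 0 < ∑ u ∈ fib w (sig w v), wt p u := fun v _ =>
    Finset.sum_pos (fun u _ => wt_pos hp u) ⟨v, by simp⟩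
  have hpos' : ∀ v, Ren (gapWord N) (sig w' v) → 0 < ∑ u ∈ fib w' (sig w' v), wt q u := fun v _ =>
    Finset.sum_pos (fun u _ => wt_pos hq u) ⟨v, by simp⟩
  refine ⟨fun v v' => if sig w v = sig w' v' ∧ Ren (gapWord N) (sig w v) then
    wt p v * wt q v' / ∑ u ∈ fib w (sig w v), wt p u else 0, ?_, ?_, ?_, ?_⟩
  · intro v v'
    split_ifs with h
    · exact div_nonneg (mul_nonneg (wt_pos hp v).le (wt_pos hq v').le)
        (Finset.sum_nonneg fun u _ => (wt_pos hp u).le)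
    · exact le_rfl
  · intro v v' h
    by_contra hne
    exact h (if_neg hne)
  · intro v hv
    have : ∀ v' ∈ fib w' (sig w v), (if sig w v = sig w' v' ∧ Ren (gapWord N) (sig w v) then
        wt p v * wt q v' / ∑ u ∈ fib w (sig w v), wt p u else 0) =
        wt p v / (∑ u ∈ fib w (sig w v), wt p u) * wt q v' := by
      intro v' hv'
      rw [mem_fib] at hv'
      rw [if_pos ⟨hv'.symm, hv⟩]
      ring
    rw [Finset.sum_congr rfl this, ← Finset.mul_sum, ← hmass _ hv]
    exact div_mul_cancel₀ _ (hpos v hv).ne'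
  · intro v' hv'
    have : ∀ v ∈ fib w (sig w' v'), (if sig w v = sig w' v' ∧ Ren (gapWord N) (sig w v) then
        wt p v * wt q v' / ∑ u ∈ fib w (sig w v), wt p u else 0) =
        wt p v * (wt q v' / (∑ u ∈ fib w' (sig w' v'), wt q u)) := by
      intro v hv
      rw [mem_fib] at hv
      rw [if_pos ⟨hv, by rwa [hv]⟩, hv, hmass _ hv']
      ring
    rw [Finset.sum_congr rfl this, ← Finset.sum_mul, hmass _ hv']
    exact mul_div_cancel₀ _ (hpos' v' hv').ne'

/-- Refine a coupling of level `N` blocks to a coupling of level `N'` blocks which respects it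
away from the gaps of length `g`, so that few words have several likely partners. -/
theorem IsCpl.exists_refinement (hc : IsCpl p q w w' N l) (hp : IsProbVector p)
    (hq : IsProbVector q) (hw : NonOverlap w) (hw' : NonOverlap w')
    {N' g : ℕ} (hN : 0 < N) (hNN' : N ≤ N') (hNg : N ≤ g) {θ : ℝ} (hθ : 0 < θ) (hθ1 : θ ≤ 1)
    (hθQ : ∀ v ∈ fib w' (gapWord g), wt q v ≤ θ * ∑ v ∈ fib w' (gapWord g), wt q v)
    (hne : (fib w' (gapWord g)).Nonempty) :
    ∃ (l' : List A → List B → ℝ) (m : List B → List (Option (List B))), IsCpl p q w w' N' l' ∧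
      (∀ v v' j x y, 0 < l' v v' → At w N' x v j → At w' N' y v' j →
        ∃ v₁ v₁' i, At w N x v₁ i ∧ At w' N y v₁' i ∧ (sig w v₁ = gapWord g ∨ (0 < l v₁ v₁' ∧
          ∀ v₀', sig w' v₀' = sig w' v' → m v₀' = m v' → v₀'[j]? = some (y 0)))) ∧
      ∀ S, Ren (gapWord N') S → ∀ α β : ℝ, 0 ≤ α → 0 < β → ∀ T ⊆ fib w S,
        (∀ v ∈ T, wt p v ≤ α ∧ ∃ v₁ v₂, l' v v₁ ≠ 0 ∧ l' v v₂ ≠ 0 ∧ β ≤ wt q v₁ ∧ β ≤ wt q v₂ ∧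
          m v₁ ≠ m v₂) →
        ∑ v ∈ T, wt p v ≤
          α * θ ^ occ (gapWord g ++ gapWord N) S * (∑ v ∈ fib w S, wt p v) / β := by
  classical
  have hss : ∀ S, ∃ ss : List (List Bool), Ren (gapWord N') S →
      (∀ s ∈ ss, Ren (gapWord N) s) ∧ ss.flatten = S := by
    intro S
    by_cases hS : Ren (gapWord N') S
    · obtain ⟨ss, h⟩ := exists_factorization (nonOverlap_gapWord N) (gapWord_ne_nil N)
        ((gapWord_isPrefix hNN').trans hS.1)
      exact ⟨ss, fun _ => h⟩
    · exact ⟨[], fun h => absurd h hS⟩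
  choose ss hss using hss
  have hL : ∀ S, Ren (gapWord N') S → _ := fun S hS =>
    exists_step_coupling (sx := sig w) (sy := sig w') (FX := fib w) (FY := fib w')
      (fun _ _ => mem_fib) (fun _ _ => mem_fib) (wt_pos hp) (wt_pos hq) hc.nonneg (ss := ss S)
      (fun s hs x hx => by
        rw [mem_fib] at hx
        rw [← hx]
        exact hc.row x (by rw [hx]; exact (hss S hS).1 s hs))
      (fun s hs y hy => by
        rw [mem_fib] at hy
        rw [← hy]
        exact hc.col y (by rw [hy]; exact (hss S hS).1 s hs)) hθ hθQ hne
  choose! L hL0 hLs hLr hLc hLb using hL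
  have hhead : ∀ S, Ren (gapWord N') S → ∀ s ∈ ss S, [true] <+: s := fun S hS s hs =>
    head_of_gapWord_isPrefix ((hss S hS).1 s hs).1
  have hsp : ∀ v, Ren (gapWord N') (sig w v) → split w (ss (sig w v)) v ∈
      fibl (fib w) (ss (sig w v)) ∧ (split w (ss (sig w v)) v).flatten = v := by
    intro v hv
    have := split_spec hw (hhead _ hv) (hss _ hv).2.symm
    exact ⟨mem_fibl_fib.2 this.1, this.2⟩
  have hsp' : ∀ v, Ren (gapWord N') (sig w' v) → split w' (ss (sig w' v)) v ∈
      fibl (fib w') (ss (sig w' v)) ∧ (split w' (ss (sig w' v)) v).flatten = v := by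
    intro v hv
    have := split_spec hw' (hhead _ hv) (hss _ hv).2.symm
    exact ⟨mem_fibl_fib.2 this.1, this.2⟩
  set l' : List A → List B → ℝ := fun v v' =>
    if sig w v = sig w' v' ∧ Ren (gapWord N') (sig w v) then
      L (sig w v) (split w (ss (sig w v)) v) (split w' (ss (sig w v)) v') else 0 with hl'
  set m : List B → List (Option (List B)) := fun v' =>
    (split w' (ss (sig w' v')) v').map (maskEntry (sig w') (gapWord g)) with hm
  have hsupp : ∀ v v', l' v v' ≠ 0 → sig w v = sig w' v' ∧ Ren (gapWord N') (sig w v) := by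
    intro v v' h
    by_contra hne
    exact h (if_neg hne)
  have hl'v : ∀ v v', l' v v' ≠ 0 →
      l' v v' = L (sig w v) (split w (ss (sig w v)) v) (split w' (ss (sig w v)) v') := by
    intro v v' h
    exact if_pos (hsupp v v' h)
  have hl'V : ∀ S, Ren (gapWord N') S → ∀ V ∈ fibl (fib w) (ss S), ∀ W ∈ fibl (fib w') (ss S),
      l' V.flatten W.flatten = L S V W := by
    intro S hS V hV W hW
    have h1 := sig_flatten_of_map hw (hhead S hS) (mem_fibl_fib.1 hV)
    have h2 := sig_flatten_of_map hw' (hhead S hS) (mem_fibl_fib.1 hW)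
    rw [(hss S hS).2] at h1 h2
    simp only [hl', h1, h2]
    rw [if_pos ⟨trivial, hS⟩, split_flatten hw (hhead S hS) hV, split_flatten hw' (hhead S hS) hW]
  refine ⟨l', m, ⟨?_, hsupp, ?_, ?_⟩, ?_, ?_⟩
  · intro v v'
    simp only [hl']
    split_ifs with h
    · exact hL0 _ h.2 _ _
    · exact le_rfl
  · intro v hv
    obtain ⟨h1, h2⟩ := hsp v hv
    have e : fib w' (sig w v) = fib w' (ss (sig w v)).flatten := by rw [(hss _ hv).2]
    rw [e, sum_fib_flatten hw' (hhead _ hv)]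
    conv_rhs => rw [← h2, wt_flatten, ← hLr _ hv _ h1]
    refine Finset.sum_congr rfl fun W hW => ?_
    rw [← hl'V _ hv _ h1 W hW, h2]
  · intro v hv
    obtain ⟨h1, h2⟩ := hsp' v hv
    have e : fib w (sig w' v) = fib w (ss (sig w' v)).flatten := by rw [(hss _ hv).2]
    rw [e, sum_fib_flatten hw (hhead _ hv)]
    conv_rhs => rw [← h2, wt_flatten, ← hLc _ hv _ h1]
    refine Finset.sum_congr rfl fun W hW => ?_
    rw [← hl'V _ hv W hW _ h1, h2]
  · intro v v' j x y hlv hx hy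
    obtain ⟨hs, hS⟩ := hsupp v v' hlv.ne'
    have hS' := hS
    rw [hs] at hS'
    obtain ⟨hV, hVf⟩ := hsp v hS
    obtain ⟨hW, hWf⟩ := hsp' v' hS'
    have hLpos := (hl'v v v' hlv.ne') ▸ hlv
    have hfor := (hLs _ hS _ _ hLpos.ne').2.2
    set V := split w (ss (sig w v)) v
    rw [hs] at hfor
    set W := split w' (ss (sig w' v')) v' with hWdef
    rw [hs] at hV
    obtain ⟨hss1, hss2⟩ := hss _ hS'
    set S := sig w' v'
    have hj : j < (ss S).flatten.length := by
      rw [hss2, length_sig]; exact hy.2.1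
    obtain ⟨s₁, s, s₂, i, hssS, hji, hi⟩ := exists_locate hj
    rw [mem_fibl_fib] at hV hW
    have hV' := hV
    have hW' := hW
    rw [hssS] at hV' hW'
    obtain ⟨V₁, v₁, V₂, hVe, hV1, hv1⟩ := exists_of_map_eq_append_cons hV'
    obtain ⟨W₁, v₁', W₂, hWe, hW1, hv1'⟩ := exists_of_map_eq_append_cons hW'
    have hlV := flatten_length_of_map hV1
    have hlW := flatten_length_of_map hW1
    have hiv : i < v₁.length := by rw [← length_sig (w := w), hv1]; exact hi
    have hiw : i < v₁'.length := by rw [← length_sig (w := w'), hv1']; exact hi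
    have hatx : At w N x v₁ i := by
      refine At.descend hw hN hNN' (V₁ := V₁) (V₂ := V₂) ?_ hiv ?_
      · rw [← hVe, hVf, hlV, ← hji]; exact hx
      · rw [← hVe]
        intro u hu
        exact hss1 _ (by rw [← hV]; exact List.mem_map_of_mem hu)
    have haty : At w' N y v₁' i := by
      refine At.descend hw' hN hNN' (V₁ := W₁) (V₂ := W₂) ?_ hiw ?_
      · rw [← hWe, hWf, hlW, ← hji]; exact hy
      · rw [← hWe]
        intro u hu
        exact hss1 _ (by rw [← hW]; exact List.mem_map_of_mem hu)
    have hlen : V₁.length = W₁.length := by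
      rw [← List.length_map (f := sig w), hV1, ← hW1, List.length_map]
    rw [hVe, hWe] at hfor
    refine ⟨v₁, v₁', i, hatx, haty, ?_⟩
    rcases (forall₂_append_cons hfor hlen).2 with h | h
    · exact Or.inl h
    by_cases hg : sig w v₁ = gapWord g
    · exact Or.inl hg
    refine Or.inr ⟨h, ?_⟩
    intro v₀ hv₀ hmv
    have hS0 : Ren (gapWord N') (sig w' v₀) := by rw [hv₀]; exact hS'
    obtain ⟨hW0, hW0f⟩ := hsp' v₀ hS0
    simp only [hm] at hmv
    rw [hv₀] at hW0 hW0f hmv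
    set U := split w' (ss S) v₀ with hUdef
    replace hmv : U.map (maskEntry (sig w') (gapWord g)) =
      W.map (maskEntry (sig w') (gapWord g)) := hmv
    rw [mem_fibl_fib, hssS] at hW0
    obtain ⟨U₁, u, U₂, hUe, hU1, hu1⟩ := exists_of_map_eq_append_cons hW0
    rw [hUe, hWe, List.map_append, List.map_append, List.map_cons, List.map_cons] at hmv
    have hlenU : U₁.length = W₁.length := by
      rw [← List.length_map (f := sig w'), hU1, ← hW1, List.length_map]
    have hmm := (List.cons.inj (List.append_inj hmv (by simpa using hlenU)).2).1
    have hgs : s ≠ gapWord g := by rw [← hv1]; exact hg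
    rw [maskEntry, maskEntry, if_neg (by rw [hu1]; exact hgs), if_neg (by rw [hv1']; exact hgs),
      Option.some.injEq] at hmm
    rw [← hW0f, hUe, hmm, hji, ← flatten_length_of_map hU1, getElem?_flatten_append_cons hiw]
    have := getElem?_word y (-i) hiw
    rw [haty.1] at this
    rw [this]
    simp
  · intro S hS α β hα hβ T hT hTb
    have hmem : ∀ v ∈ T, split w (ss S) v ∈ fibl (fib w) (ss S) ∧ (split w (ss S) v).flatten = v := by
      intro v hv
      have h1 := mem_fib.1 (hT hv)
      have := hsp v (by rw [h1]; exact hS)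
      rwa [h1] at this
    have hb := hLb S hS α β hα hβ (T.image (split w (ss S))) ?_ ?_
    · have e1 : ∑ V ∈ T.image (split w (ss S)), (V.map (wt p)).prod = ∑ v ∈ T, wt p v := by
        rw [Finset.sum_image]
        · refine Finset.sum_congr rfl fun v hv => ?_
          rw [← wt_flatten, (hmem v hv).2]
        · intro v hv v' hv' h
          rw [← (hmem v hv).2, h, (hmem v' hv').2]
      have e2 : ∑ v ∈ fib w S, wt p v = ∑ V ∈ fibl (fib w) (ss S), (V.map (wt p)).prod := by
        have := sum_fib_flatten hw (hhead S hS) (wt p)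
        rw [(hss S hS).2] at this
        rw [this]
        exact Finset.sum_congr rfl fun V _ => wt_flatten V
      rw [e1, ← e2] at hb
      refine hb.trans ?_
      have hle : occ (gapWord g ++ gapWord N) S ≤ (ss S).count (gapWord g) := by
        have := occ_flatten_le_count hN hNg (hss S hS).1
        rwa [(hss S hS).2] at this
      rw [lawful_beq_subsingleton List.instBEq
        (@instBEqOfDecidableEq _ fun a b => Classical.propDecidable (a = b))] at hle
      have hpow := pow_le_pow_of_le_one hθ.le hθ1 hle
      have hs0 : 0 ≤ ∑ v ∈ fib w S, wt p v := Finset.sum_nonneg fun v _ => (wt_pos hp v).le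
      exact div_le_div_of_nonneg_right (mul_le_mul_of_nonneg_right
        (mul_le_mul_of_nonneg_left hpow hα) hs0) hβ.le
    · intro V hV
      obtain ⟨v, hv, rfl⟩ := Finset.mem_image.1 hV
      exact (hmem v hv).1
    · intro V hV
      obtain ⟨v, hv, rfl⟩ := Finset.mem_image.1 hV
      obtain ⟨h1, v₁, v₂, h2, h3, h4, h5, h6⟩ := hTb v hv
      have hvS := mem_fib.1 (hT hv)
      have hs1 := (hsupp _ _ h2).1
      have hs2 := (hsupp _ _ h3).1
      rw [hvS] at hs1 hs2
      have e1 := hsp' v₁ (by rw [← hs1]; exact hS)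
      have e2 := hsp' v₂ (by rw [← hs2]; exact hS)
      rw [← hs1] at e1
      rw [← hs2] at e2
      simp only [hm] at h6
      rw [← hs1, ← hs2] at h6
      rw [← wt_flatten, (hmem v hv).2]
      refine ⟨h1, split w' (ss S) v₁, split w' (ss S) v₂, ?_, ?_, ?_, ?_, h6⟩
      · have := hl'v _ _ h2
        rw [hvS] at this
        rwa [← this]
      · have := hl'v _ _ h3
        rw [hvS] at this
        rwa [← this]
      · rwa [← wt_flatten, e1.2]
      · rwa [← wt_flatten, e2.2]

end Coupling

lemma exists_ratio_lt_one {ι : Type*} {s : Finset ι} {f : ι → ℝ} (hf : ∀ i, 0 < f i) {a b : ι}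
    (ha : a ∈ s) (hb : b ∈ s) (hab : a ≠ b) :
    ∃ θ : ℝ, 0 < θ ∧ θ < 1 ∧ ∀ i ∈ s, f i ≤ θ * ∑ i ∈ s, f i := by
  classical
  obtain ⟨k, hk, hmax⟩ := s.exists_max_image f ⟨a, ha⟩
  have hpos : 0 < ∑ i ∈ s, f i := Finset.sum_pos (fun i _ => hf i) ⟨a, ha⟩
  obtain ⟨k', hk', hne⟩ : ∃ k' ∈ s, k' ≠ k := by
    by_cases h : a = k
    · exact ⟨b, hb, fun h' => hab (h.trans h'.symm)⟩
    · exact ⟨a, ha, h⟩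
  have hlt : f k < ∑ i ∈ s, f i := by
    have h1 := Finset.add_sum_erase s f hk
    have h2 : f k' ≤ ∑ i ∈ s.erase k, f i :=
      Finset.single_le_sum (fun i _ => (hf i).le) (Finset.mem_erase.2 ⟨hne, hk'⟩)
    linarith [hf k']
  refine ⟨f k / ∑ i ∈ s, f i, div_pos (hf k) hpos, (div_lt_one hpos).2 hlt, fun i hi => ?_⟩
  rw [div_mul_cancel₀ _ hpos.ne']
  exact hmax i hi

lemma exp_ratio_mul_pow_le {h δ c θ ε : ℝ} {L₀ L n : ℕ} (hδ : 0 ≤ δ) (hθ : 0 < θ) (hθ1 : θ ≤ 1)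
    (hc : c * Real.log θ = -(3 * δ)) (hn : c * L ≤ n) (hL : L₀ ≤ L)
    (hε : Real.exp (-(δ * L₀)) ≤ ε) :
    Real.exp (-((h - δ) * L)) * θ ^ n ≤ ε * Real.exp (-((h + δ) * L)) := by
  have h1 : θ ^ n = Real.exp (n * Real.log θ) := by
    rw [mul_comm, Real.exp_mul, Real.exp_log hθ, Real.rpow_natCast]
  have h2 : n * Real.log θ ≤ -(3 * δ) * L := by
    have := mul_le_mul_of_nonpos_right hn (Real.log_nonpos hθ.le hθ1)
    nlinarith
  have h3 : δ * L₀ ≤ δ * L := mul_le_mul_of_nonneg_left (by exact_mod_cast hL) hδ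
  refine le_trans ?_ (mul_le_mul_of_nonneg_right hε (Real.exp_pos _).le)
  rw [h1, ← Real.exp_add, ← Real.exp_add, Real.exp_le_exp]
  nlinarith

section Step
variable {A B : Type*} [Fintype A] [MeasurableSpace A] [DiscreteMeasurableSpace A]
  [Fintype B] [MeasurableSpace B] [DiscreteMeasurableSpace B]
  {p : A → ℝ} {q : B → ℝ} {μ : Measure (ℤ → A)} {ν : Measure (ℤ → B)} {w : List A} {w' : List B}

/-- A coupling of blocks can be refined to a coupling of longer blocks for which, outside small
sets, the first block determines the central letter of the second. -/
theorem exists_step (h : Marked p μ w) (h' : Marked q ν w')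
    (hent : vecEntropy p = vecEntropy q) {N : ℕ} (hN : 0 < N) {uN : List A}
    (huN : sig w uN = gapWord N) {l : List A → List B → ℝ} (hc : IsCpl p q w w' N l)
    {ε : ℝ} (hε : 0 < ε) (n₀ : ℕ) :
    ∃ N' ≥ n₀, ∃ (l' : List A → List B → ℝ) (F : List A → ℕ → B) (Bx : Set (ℤ → A))
      (By : Set (ℤ → B)), IsCpl p q w w' N' l' ∧ μ Bx ≤ ENNReal.ofReal ε ∧
        ν By ≤ ENNReal.ofReal ε ∧ ∀ x ∉ Bx, ∀ y ∉ By, ∀ v v' j, At w N' x v j → At w' N' y v' j →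
          0 < l' v v' → y 0 = F v j ∧
            ∃ v₁ v₁' i, At w N x v₁ i ∧ At w' N y v₁' i ∧ 0 < l v₁ v₁' := by
  classical
  have hB : Nonempty B := nonempty_of_isProbVector h'.prob
  obtain ⟨g₁, hg₁⟩ := h.rich
  obtain ⟨g₂, hg₂⟩ := h'.rich
  have hε3 : ENNReal.ofReal (ε / 3) ≠ 0 := by simpa using by linarith
  obtain ⟨g, hg, hgμ⟩ := h.exists_measure_gap_le hN hε3 (max N (max g₁ g₂))
  have hNg : N ≤ g := (le_max_left _ _).trans hg
  obtain ⟨u, -, -, hu, -⟩ := hg₁ g (((le_max_left _ _).trans (le_max_right _ _)).trans hg)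
  obtain ⟨a, b, hab, ha, hb⟩ := hg₂ g (((le_max_right _ _).trans (le_max_right _ _)).trans hg)
  obtain ⟨θ, hθ, hθ1, hθQ⟩ := exists_ratio_lt_one (wt_pos h'.prob) (s := fib w' (gapWord g))
    (mem_fib.2 ha) (mem_fib.2 hb) hab
  set u₀ : List A := u ++ uN ++ w with hu₀
  have hu₀ne : u₀ ≠ [] := by simp [hu₀, h.ne_nil]
  set c : ℝ := wt p u₀ / (4 * u₀.length) with hcdef
  have hcpos : 0 < c := by
    refine div_pos (wt_pos h.prob _) ?_
    have : 0 < u₀.length := List.length_pos_iff.2 hu₀ne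
    positivity
  have hlog : Real.log θ < 0 := Real.log_neg hθ hθ1
  set δ : ℝ := -(c * Real.log θ) / 3 with hδdef
  have hδ : 0 < δ := by
    have := mul_neg_of_pos_of_neg hcpos hlog
    rw [hδdef]; linarith
  have hcδ : c * Real.log θ = -(3 * δ) := by rw [hδdef]; ring
  obtain ⟨L₀, hL₀⟩ : ∃ L₀ : ℕ, Real.exp (-(δ * L₀)) ≤ ε / 3 := by
    have ht : Tendsto (fun n : ℕ => Real.exp (-(δ * n))) atTop (nhds 0) :=
      Real.tendsto_exp_neg_atTop_nhds_zero.comp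
        (tendsto_natCast_atTop_atTop.const_mul_atTop hδ)
    exact (ht.eventually (ge_mem_nhds (by linarith : (0 : ℝ) < ε / 3))).exists
  set H := vecEntropy p with hH
  set TA : Set (List A) := {v | |-Real.log (wt p v) - H * v.length| ≤ δ * v.length ∧
    c * v.length ≤ occ u₀ v ∧ L₀ ≤ v.length} with hTA
  set TB : Set (List B) := {v | |-Real.log (wt q v) - H * v.length| ≤ δ * v.length} with hTB
  have hTAae : ∀ᵐ x ∂μ, ∃ M : ℕ, ∀ a b : ℕ, M ≤ a → M ≤ b → word x (-a) (a + b) ∈ TA := by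
    filter_upwards [ae_entropy_typical h.prob h.bern hδ, ae_occ_linear h.prob h.bern hu₀ne]
      with x ⟨M₁, hM₁⟩ ⟨M₂, hM₂⟩
    refine ⟨max L₀ (max M₁ M₂), fun a b ha hb => ?_⟩
    simp only [hTA, Set.mem_ofPred_eq, length_word]
    simp only [max_le_iff] at ha hb
    exact ⟨hM₁ a b ha.2.1 hb.2.1, hM₂ a b ha.2.2 hb.2.2, by omega⟩
  have hTBae : ∀ᵐ x ∂ν, ∃ M : ℕ, ∀ a b : ℕ, M ≤ a → M ≤ b → word x (-a) (a + b) ∈ TB := by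
    filter_upwards [ae_entropy_typical h'.prob h'.bern hδ] with x ⟨M₁, hM₁⟩
    refine ⟨M₁, fun a b ha hb => ?_⟩
    simp only [hTB, Set.mem_ofPred_eq, length_word]
    rw [hent]
    exact hM₁ a b ha hb
  obtain ⟨NA, hNA⟩ := h.exists_measure_at_le hTAae hε3
  obtain ⟨NB, hNB⟩ := h'.exists_measure_at_le hTBae hε3
  set N' := max (max n₀ N) (max NA NB) with hN'
  have hN'n : n₀ ≤ N' := (le_max_left _ _).trans (le_max_left _ _)
  have hN'N : N ≤ N' := (le_max_right _ _).trans (le_max_left _ _)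
  have hN'A : NA ≤ N' := (le_max_left _ _).trans (le_max_right _ _)
  have hN'B : NB ≤ N' := (le_max_right _ _).trans (le_max_right _ _)
  obtain ⟨l', m, hl', hloc, hbad⟩ := hc.exists_refinement h.prob h'.prob h.nonOverlap h'.nonOverlap
    hN hN'N hNg hθ hθ1.le hθQ ⟨a, mem_fib.2 ha⟩
  set Bad : Set (List A) := {v | v ∈ TA ∧ ∃ v₁ v₂, l' v v₁ ≠ 0 ∧ l' v v₂ ≠ 0 ∧ v₁ ∈ TB ∧ v₂ ∈ TB ∧
    m v₁ ≠ m v₂} with hBad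
  have hBadμ := h.measure_at_mem_le (N := N') (hN.trans_le hN'N) (Bad := Bad) (ε := ε / 3)
    (by linarith) (by
      intro S hS T hT hTbad
      have hS0 : 0 ≤ ∑ v ∈ fib w S, wt p v := Finset.sum_nonneg fun v _ => (wt_pos h.prob v).le
      rcases T.eq_empty_or_nonempty with rfl | ⟨v₀, hv₀⟩
      · simpa using mul_nonneg (by linarith) hS0
      have hlen : ∀ v ∈ T, v.length = S.length := by
        intro v hv
        rw [← mem_fib.1 (hT hv), length_sig]
      refine (hbad S hS (Real.exp (-((H - δ) * S.length))) (Real.exp (-((H + δ) * S.length)))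
        (Real.exp_pos _).le (Real.exp_pos _) T hT ?_).trans ?_
      · intro v hv
        obtain ⟨hvA, v₁, v₂, h1, h2, h3, h4, h5⟩ := hTbad v hv
        have key : ∀ v' ∈ TB, l' v v' ≠ 0 → Real.exp (-((H + δ) * S.length)) ≤ wt q v' := by
          intro v' hv' hl
          have e : v'.length = S.length := by
            rw [← length_sig (w := w'), ← (hl'.supp _ _ hl).1, mem_fib.1 (hT hv)]
          simp only [hTB, Set.mem_ofPred_eq, e] at hv'
          rw [← Real.le_log_iff_exp_le (wt_pos h'.prob v')]
          linarith [(abs_le.1 hv').2]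
        refine ⟨?_, v₁, v₂, h1, h2, key _ h3 h1, key _ h4 h2, h5⟩
        have hva := hvA.1
        rw [hlen v hv] at hva
        rw [← Real.log_le_iff_le_exp (wt_pos h.prob v)]
        linarith [(abs_le.1 hva).1]
      · have hv₀A := (hTbad v₀ hv₀).1
        simp only [hTA, Set.mem_ofPred_eq, hlen v₀ hv₀] at hv₀A
        have hocc : occ u₀ v₀ ≤ occ (gapWord g ++ gapWord N) S := by
          have := occ_le_occ_sig h.nonOverlap (u := u ++ uN) v₀
          rw [mem_fib.1 (hT hv₀), sig_append h.nonOverlap, hu, huN] at this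
          · exact this
          · exact prefix_of_head_sig (by rw [huN]; exact head_of_gapWord_isPrefix List.prefix_rfl)
        have hmain := exp_ratio_mul_pow_le (h := H) hδ.le hθ hθ1.le hcδ
          (hv₀A.2.1.trans (by exact_mod_cast hocc)) hv₀A.2.2 hL₀
        rw [div_le_iff₀ (Real.exp_pos _)]
        calc _ ≤ _ := mul_le_mul_of_nonneg_right hmain hS0
          _ = _ := by ring)
  set F : List A → ℕ → B := fun v j =>
    if hv : ∃ v', l' v v' ≠ 0 ∧ v' ∈ TB then (hv.choose[j]?).getD hB.some else hB.some with hF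
  refine ⟨N', hN'n, l', F, {x | ∃ v j, At w N' x v j ∧ v ∉ TA} ∪ {x | ∃ v j, At w N' x v j ∧ v ∈ Bad}
    ∪ {x | ∃ j, AtZ N (bits w x) (gapWord g) j}, {y | ∃ v j, At w' N' y v j ∧ v ∉ TB}, hl',
    ?_, ?_, ?_⟩
  · refine (measure_union_le _ _).trans ((add_le_add ((measure_union_le _ _).trans
      (add_le_add (hNA N' hN'A) hBadμ)) hgμ).trans ?_)
    rw [← ENNReal.ofReal_add (by linarith) (by linarith),
      ← ENNReal.ofReal_add (by linarith) (by linarith)]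
    exact ENNReal.ofReal_le_ofReal (by linarith)
  · exact (hNB N' hN'B).trans (ENNReal.ofReal_le_ofReal (by linarith))
  · intro x hx y hy v v' j hxv hyv hlv
    simp only [Set.mem_union, Set.mem_ofPred_eq, not_or, not_exists, not_and, not_not] at hx hy
    obtain ⟨⟨hx1, hx2⟩, hx3⟩ := hx
    have hvA := hx1 v j hxv
    have hvB := hy v' j hyv
    obtain ⟨v₁, v₁', i, hx', hy', hor⟩ := hloc v v' j x y hlv hxv hyv
    rcases hor with hgap | ⟨hl0, hdet⟩
    · exfalso
      have := hx'.atZ h.nonOverlap hN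
      rw [hgap] at this
      exact hx3 _ this
    refine ⟨?_, v₁, v₁', i, hx', hy', hl0⟩
    have hex : ∃ v', l' v v' ≠ 0 ∧ v' ∈ TB := ⟨v', hlv.ne', hvB⟩
    have hsp := hex.choose_spec
    have hmm : m hex.choose = m v' := by
      by_contra hne
      exact hx2 v j hxv ⟨hvA, _, _, hsp.1, hlv.ne', hsp.2, hvB, hne⟩
    have hss : sig w' hex.choose = sig w' v' := by
      rw [← (hl'.supp _ _ hsp.1).1, (hl'.supp _ _ hlv.ne').1]
    simp only [hF]
    rw [dif_pos hex, hdet _ hss hmm]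
    rfl

end Step

section Glue
variable {A B : Type*} [Fintype A] [MeasurableSpace A] [DiscreteMeasurableSpace A]
  [Fintype B] [MeasurableSpace B] [DiscreteMeasurableSpace B]
  {p : A → ℝ} {q : B → ℝ} {μ : Measure (ℤ → A)} {ν : Measure (ℤ → B)} {w : List A} {w' : List B}
  {N : ℕ} {l : List A → List B → ℝ}

/-- The density of the glued measure on a pair of blocks. -/
def glueWt (p : A → ℝ) (q : B → ℝ) (μ : Measure (ℤ → A)) (w : List A) (N : ℕ)
    (l : List A → List B → ℝ) (v : List A) (v' : List B) : ℝ≥0∞ :=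
  ENNReal.ofReal (l v v') / (ENNReal.ofReal (wt p v) * ENNReal.ofReal (wt q v') * cutProb μ w N)

/-- The coupling of two marked Bernoulli measures obtained by coupling the level `N` blocks at the
origin. -/
def glue (p : A → ℝ) (q : B → ℝ) (μ : Measure (ℤ → A)) (ν : Measure (ℤ → B)) (w : List A)
    (w' : List B) (N : ℕ) (l : List A → List B → ℝ) : Measure ((ℤ → A) × (ℤ → B)) :=
  Measure.sum fun i : (List A × List B) × ℕ => glueWt p q μ w N l i.1.1 i.1.2 •
    (μ.restrict {x | At w N x i.1.1 i.2}).prod (ν.restrict {y | At w' N y i.1.2 i.2})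

lemma glueWt_eq_zero {v : List A} {v' : List B} (h : l v v' = 0) : glueWt p q μ w N l v v' = 0 := by
  simp [glueWt, h]

lemma Marked.tsum_measure_inter_at (h : Marked p μ w) (hN : 0 < N) {u : List A}
    (hu : sig w u = gapWord N) {X : Set (ℤ → A)} (hX : MeasurableSet X) :
    ∑' i : List A × ℕ, μ (X ∩ {x | At w N x i.1 i.2}) = μ X := by
  rw [← measure_iUnion]
  · refine le_antisymm (measure_mono (Set.iUnion_subset fun i => Set.inter_subset_left)) ?_
    refine measure_mono_ae ?_
    filter_upwards [h.ae_exists_at hN hu] with x ⟨v, j, hx⟩ hxX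
    exact Set.mem_iUnion.2 ⟨(v, j), hxX, hx⟩
  · intro i i' hne
    refine Set.disjoint_left.2 fun x hx hx' => hne ?_
    obtain ⟨h1, h2⟩ := hx.2.unique h.nonOverlap hN hx'.2
    exact Prod.ext h1 h2
  · exact fun i => hX.inter (measurableSet_at w N i.1 i.2)

lemma glueWt_mul_measure (h : Marked p μ w) (h' : Marked q ν w') (hl : w.length = w'.length)
    (hwt : wt p w = wt q w') (hN : 0 < N) {u : List A} (hu : sig w u = gapWord N)
    (hc : IsCpl p q w w' N l) {v : List A} {v' : List B} {j : ℕ} (hj : j < v.length) :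
    glueWt p q μ w N l v v' * ν {y | At w' N y v' j} =
      ENNReal.ofReal (l v v') / ENNReal.ofReal (wt p v) := by
  rcases eq_or_ne (l v v') 0 with h0 | h0
  · simp [glueWt_eq_zero h0, h0]
  obtain ⟨hs, hR⟩ := hc.supp _ _ h0
  have hj' : j < v'.length := by rwa [← length_sig (w := w'), ← hs, length_sig]
  rw [h'.measure_at hj' (hs ▸ hR), ← h.cutProb_eq h' hl hwt]
  have hpi0 := (h.cutProb_pos hN hu).ne'
  have hpit := h.cutProb_lt_top N
  have hq0 : ENNReal.ofReal (wt q v') ≠ 0 := by simpa using wt_pos h'.prob v'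
  set c := ENNReal.ofReal (wt q v') * cutProb μ w N with hcd
  have hc0 : c ≠ 0 := mul_ne_zero hq0 hpi0
  have hct : c ≠ ∞ := ENNReal.mul_ne_top ENNReal.ofReal_ne_top hpit
  rw [glueWt, mul_assoc, ← hcd, ENNReal.div_eq_inv_mul, ENNReal.div_eq_inv_mul,
    ENNReal.mul_inv (Or.inr hct) (Or.inr hc0)]
  calc _ = (ENNReal.ofReal (wt p v))⁻¹ * ENNReal.ofReal (l v v') * (c⁻¹ * c) := by ring
    _ = _ := by rw [ENNReal.inv_mul_cancel hc0 hct, mul_one]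

lemma tsum_glueWt_mul (h : Marked p μ w) (h' : Marked q ν w') (hl : w.length = w'.length)
    (hwt : wt p w = wt q w') (hN : 0 < N) {u : List A} (hu : sig w u = gapWord N)
    (hc : IsCpl p q w w' N l) (X : Set (ℤ → A)) (v : List A) (j : ℕ) :
    ∑' v', glueWt p q μ w N l v v' * (μ (X ∩ {x | At w N x v j}) * ν {y | At w' N y v' j}) =
      μ (X ∩ {x | At w N x v j}) := by
  by_cases hv : j < v.length ∧ Ren (gapWord N) (sig w v)
  · have e : ∀ v', glueWt p q μ w N l v v' *
        (μ (X ∩ {x | At w N x v j}) * ν {y | At w' N y v' j}) =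
        μ (X ∩ {x | At w N x v j}) * (ENNReal.ofReal (wt p v))⁻¹ * ENNReal.ofReal (l v v') := by
      intro v'
      have := glueWt_mul_measure h h' hl hwt hN hu hc (v := v) (v' := v') hv.1
      rw [ENNReal.div_eq_inv_mul] at this
      rw [mul_assoc _ (ENNReal.ofReal (wt p v))⁻¹, ← this]
      ring
    rw [tsum_congr e, ENNReal.tsum_mul_left]
    have e2 : ∑' v', ENNReal.ofReal (l v v') = ENNReal.ofReal (wt p v) := by
      rw [← hc.row v hv.2, ENNReal.ofReal_sum_of_nonneg fun i _ => hc.nonneg v i]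
      refine tsum_eq_sum fun v' hv' => ?_
      by_contra hne
      refine hv' (mem_fib.2 ((hc.supp v v' fun h0 => hne (by rw [h0]; simp)).1).symm)
    rw [e2, mul_assoc, ENNReal.inv_mul_cancel (by simpa using wt_pos h.prob v)
      ENNReal.ofReal_ne_top, mul_one]
  · have : {x | At w N x v j} = ∅ := by
      ext x
      simp only [Set.mem_ofPred_eq, Set.mem_empty_iff_false, iff_false]
      exact fun hx => hv ⟨hx.2.1, hx.2.2.2⟩
    simp [this]

lemma glue_prod_univ (h : Marked p μ w) (h' : Marked q ν w') (hl : w.length = w'.length)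
    (hwt : wt p w = wt q w') (hN : 0 < N) {u : List A} (hu : sig w u = gapWord N)
    (hc : IsCpl p q w w' N l) {X : Set (ℤ → A)} (hX : MeasurableSet X) :
    glue p q μ ν w w' N l (X ×ˢ Set.univ) = μ X := by
  have := h.isProbabilityMeasure
  have := h'.isProbabilityMeasure
  rw [glue, Measure.sum_apply _ (hX.prod MeasurableSet.univ)]
  simp only [Measure.smul_apply, Measure.prod_prod, smul_eq_mul, Measure.restrict_apply hX,
    Measure.restrict_apply MeasurableSet.univ, Set.univ_inter]
  rw [← h.tsum_measure_inter_at hN hu hX, ENNReal.tsum_prod', ENNReal.tsum_prod',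
    ENNReal.tsum_prod']
  refine tsum_congr fun v => ?_
  rw [ENNReal.tsum_comm]
  exact tsum_congr fun j => tsum_glueWt_mul h h' hl hwt hN hu hc X v j

lemma map_fst_glue (h : Marked p μ w) (h' : Marked q ν w') (hl : w.length = w'.length)
    (hwt : wt p w = wt q w') (hN : 0 < N) {u : List A} (hu : sig w u = gapWord N)
    (hc : IsCpl p q w w' N l) : (glue p q μ ν w w' N l).map Prod.fst = μ := by
  ext X hX
  rw [Measure.map_apply measurable_fst hX, ← Set.prod_univ, glue_prod_univ h h' hl hwt hN hu hc hX]

lemma map_swap_glue (h : Marked p μ w) (h' : Marked q ν w') (hl : w.length = w'.length)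
    (hwt : wt p w = wt q w') :
    (glue p q μ ν w w' N l).map Prod.swap = glue q p ν μ w' w N fun v' v => l v v' := by
  have := h.isProbabilityMeasure
  have := h'.isProbabilityMeasure
  rw [glue, glue, Measure.map_sum measurable_swap.aemeasurable]
  ext C hC
  rw [Measure.sum_apply _ hC, Measure.sum_apply _ hC,
    ← ((Equiv.prodComm (List A) (List B)).prodCongr (Equiv.refl ℕ)).tsum_eq]
  refine tsum_congr fun i => ?_
  rw [Measure.map_smul, Measure.prod_swap]
  have e : glueWt p q μ w N l i.1.1 i.1.2 = glueWt q p ν w' N (fun v' v => l v v') i.1.2 i.1.1 := by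
    rw [glueWt, glueWt, h.cutProb_eq h' hl hwt, mul_comm (ENNReal.ofReal (wt p i.1.1))]
  rw [e]
  rfl

lemma map_snd_glue (h : Marked p μ w) (h' : Marked q ν w') (hl : w.length = w'.length)
    (hwt : wt p w = wt q w') (hN : 0 < N) {u : List B} (hu : sig w' u = gapWord N)
    (hc : IsCpl p q w w' N l) : (glue p q μ ν w w' N l).map Prod.snd = ν := by
  have := map_fst_glue h' h hl.symm hwt.symm hN hu hc.flip
  rwa [← map_swap_glue h h' hl hwt, Measure.map_map measurable_fst measurable_swap] at this

lemma ae_glue (h : Marked p μ w) (h' : Marked q ν w') (hc : IsCpl p q w w' N l) :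
    ∀ᵐ z ∂glue p q μ ν w w' N l,
      ∃ v v' j, At w N z.1 v j ∧ At w' N z.2 v' j ∧ 0 < l v v' := by
  have := h.isProbabilityMeasure
  have := h'.isProbabilityMeasure
  rw [glue, Measure.ae_sum_iff]
  rintro ⟨⟨v, v'⟩, j⟩
  rcases eq_or_ne (l v v') 0 with h0 | h0
  · simp [glueWt_eq_zero h0]
  · refine Measure.ae_smul_measure ?_ _
    rw [Measure.prod_restrict]
    filter_upwards [ae_restrict_mem ((measurableSet_at w N v j).prod (measurableSet_at w' N v' j))]
      with z hz
    exact ⟨v, v', j, hz.1, hz.2, lt_of_le_of_ne (hc.nonneg v v') h0.symm⟩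

lemma glue_preimage_trans_le (h : Marked p μ w) (h' : Marked q ν w') (hl : w.length = w'.length)
    (hwt : wt p w = wt q w') (hN : 0 < N) {u : List A} (hu : sig w u = gapWord N)
    (hc : IsCpl p q w w' N l) {C : Set ((ℤ → A) × (ℤ → B))} (hC : MeasurableSet C) :
    glue p q μ ν w w' N l (Prod.map (trans 1) (trans 1) ⁻¹' C) ≤
      glue p q μ ν w w' N l C + cutProb μ w N := by
  have := h.isProbabilityMeasure
  have := h'.isProbabilityMeasure
  set R : Set ((ℤ → A) × (ℤ → B)) := {x : ℤ → A | cut N (bits w x) 1} ×ˢ Set.univ with hR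
  have hT : Measurable (Prod.map (trans 1) (trans 1) : (ℤ → A) × (ℤ → B) → _) :=
    (measurable_trans 1).prodMap (measurable_trans 1)
  have hRm : MeasurableSet R := (measurableSet_cut w N 1).prod MeasurableSet.univ
  have hRle : glue p q μ ν w w' N l R = cutProb μ w N := by
    rw [hR, glue_prod_univ h h' hl hwt hN hu hc (measurableSet_cut w N 1), h.measure_cut]
  have hsub : Prod.map (trans 1) (trans 1) ⁻¹' C ⊆ (Prod.map (trans 1) (trans 1) ⁻¹' C \ R) ∪ R := by
    intro z hz
    by_cases hzR : z ∈ R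
    · exact Or.inr hzR
    · exact Or.inl ⟨hz, hzR⟩
  refine (measure_mono hsub).trans ((measure_union_le _ _).trans (add_le_add ?_ hRle.le))
  rw [glue, Measure.sum_apply _ ((hT hC).diff hRm), Measure.sum_apply _ hC]
  have hinj : Function.Injective fun i : (List A × List B) × ℕ => (i.1, i.2 + 1) := by
    rintro ⟨i, a⟩ ⟨j, b⟩ hij
    simpa using hij
  refine le_trans (ENNReal.tsum_le_tsum ?_) (ENNReal.tsum_comp_le_tsum_of_injective hinj _)
  rintro ⟨⟨v, v'⟩, j⟩
  rcases eq_or_ne (l v v') 0 with h0 | h0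
  · simp [glueWt_eq_zero h0]
  simp only [Measure.smul_apply, smul_eq_mul]
  refine mul_le_mul_right ?_ _
  have hlen : v'.length = v.length := by
    rw [← length_sig (w := w'), ← (hc.supp _ _ h0).1, length_sig]
  by_cases hj : j + 1 < v.length
  · have hE : {x : ℤ → A | At w N x v j} = trans 1 ⁻¹' {x | At w N x v (j + 1)} := by
      ext x; exact (at_trans hj).symm
    have hE' : {x : ℤ → B | At w' N x v' j} = trans 1 ⁻¹' {x | At w' N x v' (j + 1)} := by
      ext x; exact (at_trans (by rwa [hlen])).symm
    have m1 := (measurePreserving_trans h.prob h.bern 1).restrict_preimage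
      (measurableSet_at w N v (j + 1))
    have m2 := (measurePreserving_trans h'.prob h'.bern 1).restrict_preimage
      (measurableSet_at w' N v' (j + 1))
    rw [← hE] at m1
    rw [← hE'] at m2
    rw [← (m1.prod m2).measure_preimage hC.nullMeasurableSet]
    exact measure_mono Set.sdiff_subset
  · rw [Measure.prod_restrict, Measure.restrict_apply ((hT hC).diff hRm)]
    have : (Prod.map (trans 1) (trans 1) ⁻¹' C \ R) ∩
        {x | At w N x v j} ×ˢ {y | At w' N y v' j} = ∅ := by
      ext z
      simp only [Set.mem_empty_iff_false, iff_false]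
      rintro ⟨⟨-, hz⟩, hz1, -⟩
      refine hz ⟨?_, trivial⟩
      have h2 := hz1.2.1
      have h3 := hz1.2.2.1
      have e : (v.length : ℤ) - j = 1 := by omega
      rwa [e] at h3
    rw [this]
    simp

end Glue

section Limit
variable {X : Type*} [TopologicalSpace X] [CompactSpace X] [T2Space X] [TotallyDisconnectedSpace X]
  [SecondCountableTopology X] [MeasurableSpace X] [BorelSpace X]

lemma eq_of_isClopen_le (P Q : Measure X) [IsProbabilityMeasure P] [IsProbabilityMeasure Q]
    (h : ∀ C, IsClopen C → P C ≤ Q C) : P = Q := by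
  refine ext_of_generate_finite {C | IsClopen C} ?_ ?_ ?_ (by simp)
  · rw [BorelSpace.measurable_eq (α := X)]
    exact isTopologicalBasis_isClopen.borel_eq_generateFrom
  · exact fun s hs t ht _ => IsClopen.inter hs ht
  · intro C hC
    refine le_antisymm (h C hC) ?_
    have h1 := h Cᶜ (IsClopen.compl hC)
    rw [prob_compl_eq_one_sub hC.2.measurableSet, prob_compl_eq_one_sub hC.2.measurableSet] at h1
    exact (ENNReal.sub_le_sub_iff_left prob_le_one one_ne_top).1 h1

lemma exists_limit_measure (M : ℕ → Measure X) (hM : ∀ s, IsProbabilityMeasure (M s)) :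
    ∃ Q : Measure X, IsProbabilityMeasure Q ∧
      (∀ C, IsClopen C → Tendsto (fun s => M s C) (hyperfilter ℕ) (nhds (Q C))) ∧
      ∀ U, IsOpen U → ∀ η : ℝ≥0∞, (∀ᶠ s in atTop, M s U ≤ η) → Q U ≤ η := by
  have : TopologicalSpace.MetrizableSpace X := TopologicalSpace.metrizableSpace_of_t3_secondCountable X
  let _ := TopologicalSpace.metrizableSpaceMetric X
  set M' : ℕ → ProbabilityMeasure X := fun s => ⟨M s, hM s⟩ with hM'
  set L := ((hyperfilter ℕ).map M').lim
  have hL : Tendsto M' (hyperfilter ℕ) (nhds L) := ((hyperfilter ℕ).map M').le_nhds_lim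
  refine ⟨L, inferInstance, fun C hC => ?_, fun U hU η hη => ?_⟩
  · exact ProbabilityMeasure.tendsto_measure_of_null_frontier_of_tendsto' hL (by simp [hC.frontier_eq])
  · refine (ProbabilityMeasure.le_liminf_measure_open_of_tendsto hL hU).trans ?_
    refine liminf_le_of_frequently_le' ?_
    exact (hη.filter_mono Nat.hyperfilter_le_atTop).frequently

end Limit

section Assembly
variable {A B : Type*} [Fintype A] [MeasurableSpace A] [DiscreteMeasurableSpace A]
  [Fintype B] [MeasurableSpace B] [DiscreteMeasurableSpace B]

/-- A coordinate which can be read off with summable error probabilities is a function. -/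
lemma exists_measurable_of_summable_error {X Y : Type*} [MeasurableSpace X] [MeasurableSpace Y]
    [Nonempty B] {Q : Measure (X × Y)} {c : Y → B} {P : ℕ → B → Set X}
    (hP : ∀ r b, MeasurableSet (P r b))
    (hdisj : ∀ r b b' x, x ∈ P r b → x ∈ P r b' → b = b')
    (hsum : ∑' r, Q {z | z.1 ∉ P r (c z.2)} ≠ ∞) :
    ∃ f : X → B, Measurable f ∧ ∀ᵐ z ∂Q, c z.2 = f z.1 := by
  classical
  set e : X → B → Prop := fun x b => ∀ᶠ r in atTop, x ∈ P r b with he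
  have hem : Measurable e := by
    refine measurable_pi_iff.2 fun b => ?_
    refine measurable_to_prop ?_
    have : (fun x => e x b) ⁻¹' {True} = ⋃ n, ⋂ r ≥ n, P r b := by
      ext x
      simp [he, eventually_atTop]
    rw [this]
    exact MeasurableSet.iUnion fun n => MeasurableSet.iInter fun r => MeasurableSet.iInter fun _ =>
      hP r b
  set k : (B → Prop) → B := fun S => if h : ∃ b, S b then h.choose else Classical.arbitrary B
  refine ⟨fun x => k (e x), (Measurable.of_discrete (f := k)).comp hem, ?_⟩
  filter_upwards [ae_eventually_notMem hsum] with z hz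
  have hz' : e z.1 (c z.2) := by
    filter_upwards [hz] with r hr
    simpa using hr
  have hex : ∃ b, e z.1 b := ⟨_, hz'⟩
  have : k (e z.1) = hex.choose := dif_pos hex
  rw [this]
  obtain ⟨r, h1, h2⟩ := (hz'.and hex.choose_spec).exists
  exact hdisj r _ _ _ h1 h2

lemma trans_trans_eq (s t : ℤ) (x : ℤ → A) : trans s (trans t x) = trans (s + t) x := by
  funext n
  simp [trans, add_assoc]

lemma map_trans_eq {Q : Measure ((ℤ → A) × (ℤ → B))}
    (hQ : Q.map (Prod.map (trans 1) (trans 1)) = Q) (n : ℤ) :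
    Q.map (Prod.map (trans n) (trans n)) = Q := by
  have hm : ∀ n : ℤ, Measurable (Prod.map (trans n) (trans n) : (ℤ → A) × (ℤ → B) → _) := fun n =>
    (measurable_trans n).prodMap (measurable_trans n)
  have hadd : ∀ n m : ℤ, (Q.map (Prod.map (trans n) (trans n))).map (Prod.map (trans m) (trans m)) =
      Q.map (Prod.map (trans (m + n)) (trans (m + n))) := by
    intro n m
    rw [Measure.map_map (hm m) (hm n)]
    congr 1
    funext z
    simp [Prod.map, trans_trans_eq]
  have h0 : Q.map (Prod.map (trans 0) (trans 0)) = Q := by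
    have : (Prod.map (trans 0) (trans 0) : (ℤ → A) × (ℤ → B) → _) = id := by
      funext z
      have hA : (trans 0 : (ℤ → A) → ℤ → A) = id := by funext x n; simp [trans]
      have hB : (trans 0 : (ℤ → B) → ℤ → B) = id := by funext x n; simp [trans]
      rw [hA, hB]
      rfl
    rw [this, Measure.map_id]
  have hneg : Q.map (Prod.map (trans (-1)) (trans (-1))) = Q := by
    conv_lhs => rw [← hQ]
    rw [hadd]
    exact h0
  induction n with
  | zero => exact h0
  | succ n ih =>
    have := hadd n 1
    rw [ih, hQ, add_comm] at this
    exact this.symm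
  | pred n ih =>
    have := hadd (-n) (-1)
    rw [ih, hneg] at this
    rw [show (-(n : ℤ) - 1) = -1 + -n by ring]
    exact this.symm

lemma measurableSet_fixed {f : (ℤ → A) → ℤ → A} (hf : Measurable f) :
    MeasurableSet {x | f x = x} := by
  have : {x | f x = x} = ⋂ n : ℤ, {x | f x n = x n} := by
    ext x
    simp [funext_iff]
  rw [this]
  exact MeasurableSet.iInter fun n =>
    measurableSet_eq_fun ((measurable_pi_apply n).comp hf) (measurable_pi_apply n)

lemma shift_injective {C : Type*} : Function.Injective (shift : (ℤ → C) → ℤ → C) := by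
  intro x y h
  funext n
  have := congrFun h (n - 1)
  simpa [shift] using this

lemma exists_isomorphism_of_coupling {μ : Measure (ℤ → A)} {ν : Measure (ℤ → B)}
    [IsProbabilityMeasure μ] [IsProbabilityMeasure ν]
    {Q : Measure ((ℤ → A) × (ℤ → B))} (h1 : Q.map Prod.fst = μ) (h2 : Q.map Prod.snd = ν)
    (hQ : Q.map (Prod.map (trans 1) (trans 1)) = Q)
    {f : (ℤ → A) → B} (hf : Measurable f) (hfQ : ∀ᵐ z ∂Q, z.2 0 = f z.1)
    {g : (ℤ → B) → A} (hg : Measurable g) (hgQ : ∀ᵐ z ∂Q, z.1 0 = g z.2) :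
    ∃ D E φ ψ, IsMeasurableIsomorphism μ ν D E φ ψ := by
  set φ : (ℤ → A) → ℤ → B := fun x n => f (trans n x) with hφ
  set ψ : (ℤ → B) → ℤ → A := fun x n => g (trans n x) with hψ
  have hφm : Measurable φ := measurable_pi_iff.2 fun n => hf.comp (measurable_trans n)
  have hψm : Measurable ψ := measurable_pi_iff.2 fun n => hg.comp (measurable_trans n)
  have hφs : ∀ x, φ (shift x) = shift (φ x) := by
    intro x
    funext n
    have : shift x = trans 1 x := rfl
    simp only [hφ, this, trans_trans_eq, shift]
  have hψs : ∀ x, ψ (shift x) = shift (ψ x) := by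
    intro x
    funext n
    have : shift x = trans 1 x := rfl
    simp only [hψ, this, trans_trans_eq, shift]
  have hT : ∀ n : ℤ, Measure.QuasiMeasurePreserving (Prod.map (trans n) (trans n)) Q Q := fun n =>
    ((⟨(measurable_trans n).prodMap (measurable_trans n), map_trans_eq hQ n⟩ :
      MeasurePreserving _ Q Q)).quasiMeasurePreserving
  have hae1 : ∀ᵐ z ∂Q, z.2 = φ z.1 := by
    have : ∀ᵐ z ∂Q, ∀ n : ℤ, z.2 n = φ z.1 n := by
      refine ae_all_iff.2 fun n => ?_
      filter_upwards [(hT n).ae hfQ] with z hz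
      simpa [Prod.map, trans] using hz
    filter_upwards [this] with z hz using funext hz
  have hae2 : ∀ᵐ z ∂Q, z.1 = ψ z.2 := by
    have : ∀ᵐ z ∂Q, ∀ n : ℤ, z.1 n = ψ z.2 n := by
      refine ae_all_iff.2 fun n => ?_
      filter_upwards [(hT n).ae hgQ] with z hz
      simpa [Prod.map, trans] using hz
    filter_upwards [this] with z hz using funext hz
  have hDm : MeasurableSet {x | ψ (φ x) = x} := measurableSet_fixed (hψm.comp hφm)
  have hEm : MeasurableSet {x | φ (ψ x) = x} := measurableSet_fixed (hφm.comp hψm)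
  refine ⟨{x | ψ (φ x) = x}, {x | φ (ψ x) = x}, φ, ψ, ⟨hφm, hDm, ?_, ?_, ?_, fun x _ => hφs x⟩,
    ⟨hψm, hEm, ?_, ?_, ?_, fun x _ => hψs x⟩, ?_, ?_⟩
  · ext x
    change ψ (φ (shift x)) = shift x ↔ ψ (φ x) = x
    rw [hφs, hψs]
    exact shift_injective.eq_iff
  · rw [← mem_ae_iff_prob_eq_one hDm, ← h1]
    refine (ae_map_iff measurable_fst.aemeasurable hDm).2 ?_
    filter_upwards [hae1, hae2] with z hz1 hz2
    rw [← hz1, ← hz2]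
  · rw [← h1, Measure.map_map hφm measurable_fst, ← h2]
    exact Measure.map_congr hae1
  · ext x
    change φ (ψ (shift x)) = shift x ↔ φ (ψ x) = x
    rw [hψs, hφs]
    exact shift_injective.eq_iff
  · rw [← mem_ae_iff_prob_eq_one hEm, ← h2]
    refine (ae_map_iff measurable_snd.aemeasurable hEm).2 ?_
    filter_upwards [hae1, hae2] with z hz1 hz2
    rw [← hz2, ← hz1]
  · rw [← h2, Measure.map_map hψm measurable_snd, ← h1]
    exact Measure.map_congr hae2
  · intro x hx
    have hx : ψ (φ x) = x := hx
    exact ⟨by change φ (ψ (φ x)) = φ x; rw [hx], hx⟩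
  · intro x hx
    have hx : φ (ψ x) = x := hx
    exact ⟨by change ψ (φ (ψ x)) = ψ x; rw [hx], hx⟩

end Assembly

/-- The level `N` blocks of two sequences at the origin are matched by the coupling `l`. -/
def Matched {A B : Type*} (w : List A) (w' : List B) (N : ℕ) (l : List A → List B → ℝ)
    (x : ℤ → A) (y : ℤ → B) : Prop :=
  ∃ v v' j, At w N x v j ∧ At w' N y v' j ∧ 0 < l v v'

section Topology
variable {A : Type*} [Fintype A] [MeasurableSpace A] [DiscreteMeasurableSpace A]
  [TopologicalSpace A] [DiscreteTopology A]

lemma isOpen_of_dependsOn {F : Finset ℤ} {E : Set (ℤ → A)}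
    (hE : DependsOn (· ∈ E) (F : Set ℤ)) : IsOpen E := by
  obtain ⟨g, hg⟩ := exists_factor hE
  have : E = F.restrict ⁻¹' {x | g x} := by
    ext x
    exact iff_of_eq (congrFun hg x)
  rw [this]
  exact (isOpen_discrete _).preimage (continuous_pi fun i => continuous_apply _)

lemma isOpen_at (w : List A) (N : ℕ) (v : List A) (j : ℕ) : IsOpen {x : ℤ → A | At w N x v j} := by
  have h1 : IsOpen {x : ℤ → A | word x (-j) v.length = v} :=
    isOpen_of_dependsOn (dependsOn_word (-j) v.length (· = v))
  have h2 : IsOpen {x : ℤ → A | cut N (bits w x) (v.length - j)} :=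
    isOpen_of_dependsOn (dependsOn_cut w _ N)
  by_cases hc : j < v.length ∧ Ren (gapWord N) (sig w v)
  · convert! h1.inter h2 using 1
    ext x
    exact ⟨fun h => ⟨h.1, h.2.2.1⟩, fun h => ⟨h.1, hc.1, h.2, hc.2⟩⟩
  · convert! isOpen_empty using 1
    ext x
    simp only [Set.mem_empty_iff_false, iff_false]
    exact fun h => hc ⟨h.2.1, h.2.2.2⟩

lemma continuous_trans (t : ℤ) : Continuous (trans t : (ℤ → A) → ℤ → A) :=
  continuous_pi fun n => continuous_apply (n + t)

end Topology

section Link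
variable {A B : Type*} [Fintype A] [MeasurableSpace A] [DiscreteMeasurableSpace A]
  [Fintype B] [MeasurableSpace B] [DiscreteMeasurableSpace B]
  {p : A → ℝ} {q : B → ℝ} {μ : Measure (ℤ → A)} {ν : Measure (ℤ → B)} {w : List A} {w' : List B}

lemma exists_double_step (h : Marked p μ w) (h' : Marked q ν w')
    (hent : vecEntropy p = vecEntropy q) {n₀ : ℕ} (hn₀ : 0 < n₀)
    (hgap : ∀ N ≥ n₀, ∃ u, sig w u = gapWord N) (hgap' : ∀ N ≥ n₀, ∃ u, sig w' u = gapWord N)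
    {N : ℕ} (hN : n₀ ≤ N) {l : List A → List B → ℝ} (hc : IsCpl p q w w' N l)
    {ε : ℝ} (hε : 0 < ε) (n : ℕ) :
    ∃ N₂ ≥ n₀, n ≤ N₂ ∧ ∃ l₂, IsCpl p q w w' N₂ l₂ ∧ ∃ N₁ ≥ n₀, ∃ (F : List A → ℕ → B)
      (G : List B → ℕ → A) (Bx : Set (ℤ → A)) (By : Set (ℤ → B)),
      μ Bx ≤ ENNReal.ofReal ε ∧ ν By ≤ ENNReal.ofReal ε ∧
        ∀ x ∉ Bx, ∀ y ∉ By, Matched w w' N₂ l₂ x y → Matched w w' N l x y ∧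
          (∃ v j, At w N₁ x v j ∧ y 0 = F v j) ∧ ∃ v j, At w' N₂ y v j ∧ x 0 = G v j := by
  obtain ⟨u, hu⟩ := hgap N hN
  obtain ⟨N₁, hN₁, l₁, F, Bx₁, By₁, hc₁, hBx₁, hBy₁, hstep₁⟩ :=
    exists_step h h' hent (hn₀.trans_le hN) hu hc (half_pos hε) n₀
  obtain ⟨u', hu'⟩ := hgap' N₁ hN₁
  obtain ⟨N₂, hN₂, l₂, G, By₂, Bx₂, hc₂, hBy₂, hBx₂, hstep₂⟩ :=
    exists_step h' h hent.symm (hn₀.trans_le hN₁) hu' hc₁.flip (half_pos hε) (max n₀ n)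
  refine ⟨N₂, (le_max_left _ _).trans hN₂, (le_max_right _ _).trans hN₂, fun v v' => l₂ v' v,
    hc₂.flip, N₁, hN₁, F, G, Bx₁ ∪ Bx₂, By₁ ∪ By₂, ?_, ?_, ?_⟩
  · refine (measure_union_le _ _).trans ((add_le_add hBx₁ hBx₂).trans ?_)
    rw [← ENNReal.ofReal_add (half_pos hε).le (half_pos hε).le, add_halves]
  · refine (measure_union_le _ _).trans ((add_le_add hBy₁ hBy₂).trans ?_)
    rw [← ENNReal.ofReal_add (half_pos hε).le (half_pos hε).le, add_halves]
  · intro x hx y hy ⟨v, v', j, hv, hv', hl⟩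
    rw [Set.mem_union, not_or] at hx hy
    obtain ⟨hG, v₁', v₁, i, hv₁', hv₁, hl₁⟩ := hstep₂ y hy.2 x hx.2 v' v j hv' hv hl
    obtain ⟨hF, v₀, v₀', k, hv₀, hv₀', hl₀⟩ := hstep₁ x hx.1 y hy.1 v₁ v₁' i hv₁ hv₁' hl₁
    exact ⟨⟨v₀, v₀', k, hv₀, hv₀', hl₀⟩, ⟨v₁, i, hv₁, hF⟩, v', j, hv', hG⟩

/-- A sequence of refining couplings with summable errors. -/
lemma exists_coupling_sequence (h : Marked p μ w) (h' : Marked q ν w') (hl : w.length = w'.length)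
    (hwt : wt p w = wt q w') (hent : vecEntropy p = vecEntropy q) {n₀ : ℕ} (hn₀ : 0 < n₀)
    (hgap : ∀ N ≥ n₀, ∃ u, sig w u = gapWord N) (hgap' : ∀ N ≥ n₀, ∃ u, sig w' u = gapWord N)
    {ε : ℕ → ℝ} (hε : ∀ r, 0 < ε r) :
    ∃ (N : ℕ → ℕ) (l : ℕ → List A → List B → ℝ) (N₁ : ℕ → ℕ) (F : ℕ → List A → ℕ → B)
      (G : ℕ → List B → ℕ → A) (Bx : ℕ → Set (ℤ → A)) (By : ℕ → Set (ℤ → B)),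
      (∀ r, n₀ ≤ N r) ∧ (∀ r, n₀ ≤ N₁ r) ∧ (∀ r, r ≤ N r) ∧ (∀ r, IsCpl p q w w' (N r) (l r)) ∧
      (∀ r, μ (Bx r) ≤ ENNReal.ofReal (ε r)) ∧ (∀ r, ν (By r) ≤ ENNReal.ofReal (ε r)) ∧
      ∀ r, ∀ x ∉ Bx r, ∀ y ∉ By r, Matched w w' (N (r + 1)) (l (r + 1)) x y →
        Matched w w' (N r) (l r) x y ∧ (∃ v j, At w (N₁ r) x v j ∧ y 0 = F r v j) ∧
          ∃ v j, At w' (N (r + 1)) y v j ∧ x 0 = G r v j := by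
  let Stage := {s : ℕ × (List A → List B → ℝ) // n₀ ≤ s.1 ∧ IsCpl p q w w' s.1 s.2}
  have hnext : ∀ (r : ℕ) (s : Stage), ∃ (s' : Stage) (N₁ : ℕ) (F : List A → ℕ → B)
      (G : List B → ℕ → A) (Bx : Set (ℤ → A)) (By : Set (ℤ → B)), n₀ ≤ N₁ ∧ r + 1 ≤ s'.1.1 ∧
      μ Bx ≤ ENNReal.ofReal (ε r) ∧ ν By ≤ ENNReal.ofReal (ε r) ∧
        ∀ x ∉ Bx, ∀ y ∉ By, Matched w w' s'.1.1 s'.1.2 x y → Matched w w' s.1.1 s.1.2 x y ∧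
          (∃ v j, At w N₁ x v j ∧ y 0 = F v j) ∧ ∃ v j, At w' s'.1.1 y v j ∧ x 0 = G v j := by
    intro r s
    obtain ⟨N₂, hN₂, hrN, l₂, hc₂, N₁, hN₁, F, G, Bx, By, h1, h2, h3⟩ :=
      exists_double_step h h' hent hn₀ hgap hgap' s.2.1 s.2.2 (hε r) (r + 1)
    exact ⟨⟨(N₂, l₂), hN₂, hc₂⟩, N₁, F, G, Bx, By, hN₁, hrN, h1, h2, h3⟩
  choose next N₁ F G Bx By hN₁ hr hBx hBy hstep using hnext
  obtain ⟨u, hu⟩ := hgap n₀ le_rfl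
  obtain ⟨l₀, hl₀⟩ := exists_isCpl (w := w) (w' := w') h.prob h'.prob n₀
    fun S hS => h.mass_eq h' hl hwt hn₀ hu hS
  let s : ℕ → Stage := fun r => Nat.rec ⟨(n₀, l₀), le_rfl, hl₀⟩ (fun r s => next r s) r
  refine ⟨fun r => (s r).1.1, fun r => (s r).1.2, fun r => N₁ r (s r), fun r => F r (s r),
    fun r => G r (s r), fun r => Bx r (s r), fun r => By r (s r), fun r => (s r).2.1,
    fun r => hN₁ r (s r), ?_, fun r => (s r).2.2, fun r => hBx r (s r), fun r => hBy r (s r),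
    fun r => hstep r (s r)⟩
  intro r
  cases r with
  | zero => exact Nat.zero_le _
  | succ r => exact hr r (s r)

lemma Marked.tendsto_cutProb (h : Marked p μ w) {N : ℕ → ℕ} (hN : ∀ r, r ≤ N r) :
    Tendsto (fun r => cutProb μ w (N r)) atTop (nhds 0) := by
  refine tendsto_of_tendsto_of_tendsto_of_le_of_le tendsto_const_nhds
    ENNReal.tendsto_inv_nat_nhds_zero (fun _ => zero_le) fun r => ?_
  refine ENNReal.le_inv_iff_mul_le.2 (le_trans ?_ (h.mul_cutProb_le (N r)))
  rw [mul_comm]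
  exact mul_le_mul_left (by exact_mod_cast hN r) _

/-- A symbol which is determined by blocks up to summable errors is a function of the sequence. -/
lemma Marked.exists_reading (h : Marked p μ w) [Nonempty B] {N : ℕ → ℕ} (hN : ∀ r, 0 < N r)
    (hgap : ∀ r, ∃ u, sig w u = gapWord (N r)) {Q : Measure ((ℤ → A) × (ℤ → B))}
    (h1 : Q.map Prod.fst = μ) {F : ℕ → List A → ℕ → B} {η : ℕ → ℝ≥0∞} (hη : ∑' r, η r ≠ ∞)
    (hU : ∀ r, Q {z | ∃ v j, At w (N r) z.1 v j ∧ z.2 0 ≠ F r v j} ≤ η r) :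
    ∃ f : (ℤ → A) → B, Measurable f ∧ ∀ᵐ z ∂Q, z.2 0 = f z.1 := by
  refine exists_measurable_of_summable_error (c := fun y : ℤ → B => y 0)
    (P := fun r b => {x | ∃ v j, At w (N r) x v j ∧ b = F r v j}) ?_ ?_ ?_
  · intro r b
    have : {x | ∃ v j, At w (N r) x v j ∧ b = F r v j} =
        ⋃ v, ⋃ j, {x | At w (N r) x v j} ∩ {_x | b = F r v j} := by
      ext x
      simp
    rw [this]
    exact MeasurableSet.iUnion fun v => MeasurableSet.iUnion fun j =>
      (measurableSet_at w (N r) v j).inter (MeasurableSet.const _)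
  · rintro r b b' x ⟨v, j, hx, rfl⟩ ⟨v', j', hx', rfl⟩
    obtain ⟨rfl, rfl⟩ := hx.unique h.nonOverlap (hN r) hx'
    rfl
  · refine ne_top_of_le_ne_top hη (ENNReal.tsum_le_tsum fun r => le_trans ?_ (hU r))
    obtain ⟨u, hu⟩ := hgap r
    have hae : ∀ᵐ z ∂Q, ∃ v j, At w (N r) z.1 v j := by
      have := h.ae_exists_at (hN r) hu
      rw [← h1] at this
      exact ae_of_ae_map measurable_fst.aemeasurable this
    refine measure_mono_ae ?_
    filter_upwards [hae] with z ⟨v, j, hz⟩ hne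
    exact ⟨v, j, hz, fun e => hne ⟨v, j, hz, e⟩⟩

lemma tsum_pow_half_ne_top : ∑' r : ℕ, 4 * (2⁻¹ : ℝ≥0∞) ^ r ≠ ∞ := by
  rw [ENNReal.tsum_mul_left, ENNReal.tsum_geometric, ENNReal.one_sub_inv_two, inv_inv]
  exact ENNReal.mul_ne_top (by simp) (by simp)

lemma sum_pow_half_le (r s : ℕ) :
    ∑ k ∈ Finset.Ico r s, (2⁻¹ : ℝ≥0∞) ^ k ≤ 2 * (2⁻¹ : ℝ≥0∞) ^ r := by
  rw [Finset.sum_Ico_eq_sum_range]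
  simp only [pow_add]
  rw [← Finset.mul_sum, mul_comm]
  refine mul_le_mul_left ((ENNReal.sum_le_tsum _).trans_eq ?_) _
  rw [ENNReal.tsum_geometric, ENNReal.one_sub_inv_two, inv_inv]

/-- Descending along refinements loses at most a geometric amount. -/
lemma measure_descend_le {X Y : Type*} [MeasurableSpace X] [MeasurableSpace Y] {μ : Measure X}
    {ν : Measure Y} {P R : ℕ → X → Y → Prop} {Bx : ℕ → Set X} {By : ℕ → Set Y}
    (hBx : ∀ r, μ (Bx r) ≤ 2⁻¹ ^ r) (hBy : ∀ r, ν (By r) ≤ 2⁻¹ ^ r)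
    (hstep : ∀ r, ∀ x ∉ Bx r, ∀ y ∉ By r, P (r + 1) x y → P r x y ∧ R r x y)
    {M : Measure (X × Y)} (h1 : M.map Prod.fst = μ) (h2 : M.map Prod.snd = ν) {s : ℕ}
    (hM : ∀ᵐ z ∂M, P s z.1 z.2) {r : ℕ} (hr : r < s) :
    M {z | ¬ R r z.1 z.2} ≤ 4 * 2⁻¹ ^ r := by
  have hdesc : ∀ z : X × Y, P s z.1 z.2 → (∀ k ∈ Finset.Ico r s, z.1 ∉ Bx k ∧ z.2 ∉ By k) →
      R r z.1 z.2 := by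
    intro z hz hk
    have : ∀ k, r < k → k ≤ s → P k z.1 z.2 := by
      intro k hrk hks
      induction hks using Nat.decreasingInduction with
      | self => exact hz
      | of_succ k hks ih =>
        obtain ⟨ha, hb⟩ := hk k (Finset.mem_Ico.2 ⟨hrk.le, hks⟩)
        exact (hstep k _ ha _ hb (ih (by omega))).1
    obtain ⟨ha, hb⟩ := hk r (Finset.mem_Ico.2 ⟨le_rfl, hr⟩)
    exact (hstep r _ ha _ hb (this _ (by omega) (by omega))).2
  calc M {z | ¬ R r z.1 z.2}
      ≤ M (⋃ k ∈ Finset.Ico r s, (Prod.fst ⁻¹' Bx k ∪ Prod.snd ⁻¹' By k)) := by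
        refine measure_mono_ae ?_
        filter_upwards [hM] with z hz hne
        by_contra hcon
        refine hne (hdesc z hz fun k hk => ?_)
        constructor
        · exact fun hx => hcon (Set.mem_biUnion (Finset.mem_coe.2 hk) (Or.inl hx))
        · exact fun hx => hcon (Set.mem_biUnion (Finset.mem_coe.2 hk) (Or.inr hx))
    _ ≤ ∑ k ∈ Finset.Ico r s, M (Prod.fst ⁻¹' Bx k ∪ Prod.snd ⁻¹' By k) :=
        measure_biUnion_finset_le _ _
    _ ≤ ∑ k ∈ Finset.Ico r s, 2 * (2⁻¹ : ℝ≥0∞) ^ k := by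
        refine Finset.sum_le_sum fun k _ => (measure_union_le _ _).trans ?_
        rw [two_mul]
        refine add_le_add ?_ ?_
        · exact (Measure.le_map_apply measurable_fst.aemeasurable _).trans (h1 ▸ hBx k)
        · exact (Measure.le_map_apply measurable_snd.aemeasurable _).trans (h2 ▸ hBy k)
    _ ≤ 4 * 2⁻¹ ^ r := by
        rw [← Finset.mul_sum]
        refine (mul_le_mul_right (sum_pow_half_le r s) _).trans_eq ?_
        rw [← mul_assoc]
        norm_num

/-- Marked Bernoulli schemes with equal entropy and equally likely markers of the same length are
isomorphic. -/
theorem exists_isomorphism_of_marked (h : Marked p μ w) (h' : Marked q ν w')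
    (hl : w.length = w'.length) (hwt : wt p w = wt q w') (hent : vecEntropy p = vecEntropy q) :
    ∃ D E φ ψ, IsMeasurableIsomorphism μ ν D E φ ψ := by
  have := h.isProbabilityMeasure
  have := h'.isProbabilityMeasure
  have := nonempty_of_isProbVector h.prob
  have := nonempty_of_isProbVector h'.prob
  obtain ⟨g₀, hg₀⟩ := h.rich
  obtain ⟨g₀', hg₀'⟩ := h'.rich
  set n₀ := max 1 (max g₀ g₀') with hn₀
  have hpos : 0 < n₀ := by omega
  have hgap : ∀ N ≥ n₀, ∃ u, sig w u = gapWord N := fun N hN => by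
    obtain ⟨v, _, _, hv, _⟩ := hg₀ N (by omega)
    exact ⟨v, hv⟩
  have hgap' : ∀ N ≥ n₀, ∃ u, sig w' u = gapWord N := fun N hN => by
    obtain ⟨v, _, _, hv, _⟩ := hg₀' N (by omega)
    exact ⟨v, hv⟩
  have heps : ∀ r : ℕ, ENNReal.ofReal (2⁻¹ ^ r) = 2⁻¹ ^ r := fun r => by
    rw [ENNReal.ofReal_pow (by norm_num), ENNReal.ofReal_inv_of_pos (by norm_num)]
    simp
  obtain ⟨N, l, N₁, F, G, Bx, By, hN, hN₁, hrN, hc, hBx, hBy, hstep⟩ :=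
    exists_coupling_sequence h h' hl hwt hent hpos hgap hgap' (ε := fun r => 2⁻¹ ^ r)
      (fun r => by positivity)
  simp only [heps] at hBx hBy
  choose u hu using hgap
  choose u' hu' using hgap'
  let _ : TopologicalSpace A := ⊥
  let _ : TopologicalSpace B := ⊥
  have : DiscreteTopology A := ⟨rfl⟩
  have : DiscreteTopology B := ⟨rfl⟩
  set M : ℕ → Measure ((ℤ → A) × (ℤ → B)) := fun s => glue p q μ ν w w' (N s) (l s) with hM
  have hM1 : ∀ s, (M s).map Prod.fst = μ := fun s =>
    map_fst_glue h h' hl hwt (hpos.trans_le (hN s)) (hu _ (hN s)) (hc s)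
  have hM2 : ∀ s, (M s).map Prod.snd = ν := fun s =>
    map_snd_glue h h' hl hwt (hpos.trans_le (hN s)) (hu' _ (hN s)) (hc s)
  have hMp : ∀ s, IsProbabilityMeasure (M s) := fun s => ⟨by
    rw [← Set.preimage_univ (f := Prod.fst), ← Measure.map_apply measurable_fst .univ, hM1 s,
      measure_univ]⟩
  obtain ⟨Q, hQp, hQC, hQU⟩ := exists_limit_measure M hMp
  have hQ1 : Q.map Prod.fst = μ := by
    have : IsProbabilityMeasure (Q.map Prod.fst) :=
      Measure.isProbabilityMeasure_map measurable_fst.aemeasurable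
    refine eq_of_isClopen_le _ _ fun C hC => le_of_eq ?_
    rw [Measure.map_apply measurable_fst hC.1.measurableSet]
    refine tendsto_nhds_unique (hQC _ (hC.preimage continuous_fst)) ?_
    refine tendsto_const_nhds.congr fun s => ?_
    rw [← Measure.map_apply measurable_fst hC.1.measurableSet, hM1 s]
  have hQ2 : Q.map Prod.snd = ν := by
    have : IsProbabilityMeasure (Q.map Prod.snd) :=
      Measure.isProbabilityMeasure_map measurable_snd.aemeasurable
    refine eq_of_isClopen_le _ _ fun C hC => le_of_eq ?_
    rw [Measure.map_apply measurable_snd hC.1.measurableSet]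
    refine tendsto_nhds_unique (hQC _ (hC.preimage continuous_snd)) ?_
    refine tendsto_const_nhds.congr fun s => ?_
    rw [← Measure.map_apply measurable_snd hC.1.measurableSet, hM2 s]
  have hmT : Measurable (Prod.map (trans 1) (trans 1) : (ℤ → A) × (ℤ → B) → _) :=
    (measurable_trans 1).prodMap (measurable_trans 1)
  have hQT : Q.map (Prod.map (trans 1) (trans 1)) = Q := by
    have : IsProbabilityMeasure (Q.map (Prod.map (trans 1) (trans 1))) :=
      Measure.isProbabilityMeasure_map hmT.aemeasurable
    refine eq_of_isClopen_le _ _ fun C hC => ?_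
    rw [Measure.map_apply hmT hC.1.measurableSet]
    have hcut := (h.tendsto_cutProb hrN).mono_left Nat.hyperfilter_le_atTop
    have hadd := (hQC C hC).add hcut
    rw [add_zero] at hadd
    exact le_of_tendsto_of_tendsto'
      (hQC _ (hC.preimage ((continuous_trans 1).prodMap (continuous_trans 1)))) hadd
      fun s => glue_preimage_trans_le h h' hl hwt (hpos.trans_le (hN s)) (hu _ (hN s)) (hc s)
        hC.1.measurableSet
  have herr : ∀ r s, r < s → M s {z | ¬ ((∃ v j, At w (N₁ r) z.1 v j ∧ z.2 0 = F r v j) ∧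
      ∃ v j, At w' (N (r + 1)) z.2 v j ∧ z.1 0 = G r v j)} ≤ 4 * 2⁻¹ ^ r := fun r s hrs =>
    measure_descend_le (P := fun s x y => Matched w w' (N s) (l s) x y)
      (R := fun r x y => (∃ v j, At w (N₁ r) x v j ∧ y 0 = F r v j) ∧
        ∃ v j, At w' (N (r + 1)) y v j ∧ x 0 = G r v j) hBx hBy hstep (hM1 s) (hM2 s)
      (ae_glue h h' (hc s)) hrs
  have hF : ∀ r, Q {z | ∃ v j, At w (N₁ r) z.1 v j ∧ z.2 0 ≠ F r v j} ≤ 4 * 2⁻¹ ^ r := by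
    intro r
    refine hQU _ ?_ _ ?_
    · have : {z : (ℤ → A) × (ℤ → B) | ∃ v j, At w (N₁ r) z.1 v j ∧ z.2 0 ≠ F r v j} =
          ⋃ v, ⋃ j, (Prod.fst ⁻¹' {x | At w (N₁ r) x v j} ∩
            (fun z : (ℤ → A) × (ℤ → B) => z.2 0) ⁻¹' {b | b ≠ F r v j}) := by
        ext z
        simp
      rw [this]
      exact isOpen_iUnion fun v => isOpen_iUnion fun j =>
        ((isOpen_at w _ v j).preimage continuous_fst).inter
          ((isOpen_discrete _).preimage ((continuous_apply 0).comp continuous_snd))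
    · filter_upwards [eventually_gt_atTop r] with s hs
      refine (measure_mono ?_).trans (herr r s hs)
      rintro z ⟨v, j, hv, hne⟩ ⟨⟨v', j', hv', heq⟩, -⟩
      obtain ⟨rfl, rfl⟩ := hv.unique h.nonOverlap (hpos.trans_le (hN₁ r)) hv'
      exact hne heq
  have hG : ∀ r, Q {z | ∃ v j, At w' (N (r + 1)) z.2 v j ∧ z.1 0 ≠ G r v j} ≤ 4 * 2⁻¹ ^ r := by
    intro r
    refine hQU _ ?_ _ ?_
    · have : {z : (ℤ → A) × (ℤ → B) | ∃ v j, At w' (N (r + 1)) z.2 v j ∧ z.1 0 ≠ G r v j} =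
          ⋃ v, ⋃ j, (Prod.snd ⁻¹' {x | At w' (N (r + 1)) x v j} ∩
            (fun z : (ℤ → A) × (ℤ → B) => z.1 0) ⁻¹' {b | b ≠ G r v j}) := by
        ext z
        simp
      rw [this]
      exact isOpen_iUnion fun v => isOpen_iUnion fun j =>
        ((isOpen_at w' _ v j).preimage continuous_snd).inter
          ((isOpen_discrete _).preimage ((continuous_apply 0).comp continuous_fst))
    · filter_upwards [eventually_gt_atTop r] with s hs
      refine (measure_mono ?_).trans (herr r s hs)
      rintro z ⟨v, j, hv, hne⟩ ⟨-, v', j', hv', heq⟩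
      obtain ⟨rfl, rfl⟩ := hv.unique h'.nonOverlap (hpos.trans_le (hN (r + 1))) hv'
      exact hne heq
  obtain ⟨f, hf, hfQ⟩ := h.exists_reading (fun r => hpos.trans_le (hN₁ r))
    (fun r => ⟨_, hu _ (hN₁ r)⟩) hQ1 tsum_pow_half_ne_top hF
  have hswap : (Q.map Prod.swap).map Prod.fst = ν := by
    rw [Measure.map_map measurable_fst measurable_swap]
    exact hQ2
  obtain ⟨g, hg, hgQ⟩ := h'.exists_reading (fun r => hpos.trans_le (hN (r + 1)))
    (fun r => ⟨_, hu' _ (hN (r + 1))⟩) hswap (F := G) tsum_pow_half_ne_top fun r => by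
      refine (MeasurableEquiv.prodComm.map_apply (μ := Q) _).trans_le ?_
      exact hG r
  exact exists_isomorphism_of_coupling hQ1 hQ2 hQT hf hfQ hg
    (ae_of_ae_map measurable_swap.aemeasurable hgQ)

end Link

section Marker
variable {A : Type*} {w : List A}

lemma sig_eq_replicate {v : List A} (h : ∀ i < v.length, ¬ w <+: v.drop i) :
    sig w v = List.replicate v.length false := by
  induction v with
  | nil => rfl
  | cons a v ih =>
    have h0 := h 0 (by simp)
    rw [List.drop_zero] at h0
    rw [sig, ih fun i hi => by simpa using h (i + 1) (by simpa using hi)]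
    simp [h0, List.replicate_succ]

lemma sig_eq_gapWord {v : List A} (hv : v ≠ []) (h0 : w <+: v)
    (h : ∀ i, 0 < i → i < v.length → ¬ w <+: v.drop i) : sig w v = gapWord v.length := by
  cases v with
  | nil => exact absurd rfl hv
  | cons a v =>
    rw [sig, sig_eq_replicate fun i hi => by
      simpa using h (i + 1) (by omega) (by simpa using hi), gapWord]
    simp [h0]

/-- The marker `a ⋯ a b` with `k` letters `a`. -/
def marker (a b : A) (k : ℕ) : List A := List.replicate k a ++ [b]

variable {a b : A} {k : ℕ}

@[simp] lemma length_marker : (marker a b k).length = k + 1 := by simp [marker]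

lemma wt_marker {p : A → ℝ} : wt p (marker a b k) = p a ^ k * p b := by simp [marker, wt]

lemma getElem?_marker_of_lt {i : ℕ} (hi : i < k) : (marker a b k)[i]? = some a := by
  simp [marker, hi, List.getElem?_append]

lemma getElem?_marker_self : (marker a b k)[k]? = some b := by
  simp [marker]

lemma getElem?_of_prefix_drop {u v : List A} {i j : ℕ} {c : A} (h : u <+: v.drop i)
    (hj : u[j]? = some c) : v[i + j]? = some c := by
  obtain ⟨t, ht⟩ := h
  rw [← List.getElem?_drop, ← ht, List.getElem?_append_left, hj]
  exact (List.getElem?_eq_some_iff.1 hj).1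

lemma nonOverlap_marker (hab : a ≠ b) : NonOverlap (marker a b k) := by
  intro i hi hik h
  rw [length_marker] at hik
  have h1 : ((marker a b k).drop i)[k - i]? = some b := by
    rw [List.getElem?_drop, Nat.add_sub_cancel' (by omega), getElem?_marker_self]
  have h2 := getElem?_of_prefix_drop (i := 0) (by simpa using h) h1
  rw [zero_add, getElem?_marker_of_lt (by omega)] at h2
  exact hab (by simpa using h2)

lemma sig_marker_append_left (hab : a ≠ b) (n : ℕ) :
    sig (marker a b k) (marker a b k ++ List.replicate n a) = gapWord (k + 1 + n) := by
  rw [sig_eq_gapWord (by simp [marker]) (List.prefix_append _ _)]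
  · simp
  · intro i hi hin h
    have h2 := getElem?_of_prefix_drop h getElem?_marker_self
    rw [List.getElem?_append_right (by simp; omega), List.getElem?_replicate] at h2
    split_ifs at h2
    exact hab (by simpa using h2)

lemma sig_marker_append_right (hab : a ≠ b) (hk : 0 < k) (n : ℕ) :
    sig (marker a b k) (marker a b k ++ List.replicate n b) = gapWord (k + 1 + n) := by
  rw [sig_eq_gapWord (by simp [marker]) (List.prefix_append _ _)]
  · simp
  · intro i hi hin h
    rcases le_or_gt i k with hik | hik
    · have h2 := getElem?_of_prefix_drop h (getElem?_marker_of_lt (i := k - i) (by omega))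
      rw [Nat.add_sub_cancel' hik, List.getElem?_append_left (by simp), getElem?_marker_self] at h2
      exact hab (by simpa using h2.symm)
    · have h2 := getElem?_of_prefix_drop h (getElem?_marker_of_lt hk)
      rw [List.getElem?_append_right (by simp; omega), List.getElem?_replicate] at h2
      split_ifs at h2
      exact hab (by simpa using h2.symm)

lemma marked_marker [Fintype A] [MeasurableSpace A] {p : A → ℝ} {μ : Measure (ℤ → A)}
    (hp : IsProbVector p) (hμ : IsBernoulliMeasure μ p) (hab : a ≠ b) (hk : 0 < k) :
    Marked p μ (marker a b k) where
  prob := hp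
  bern := hμ
  nonOverlap := nonOverlap_marker hab
  ne_nil := by simp [marker]
  rich := by
    refine ⟨k + 2, fun g hg => ?_⟩
    obtain ⟨n, rfl⟩ := Nat.exists_eq_add_of_le hg
    refine ⟨_, _, ?_, (sig_marker_append_left hab (n + 1)).trans (by congr 1; omega),
      (sig_marker_append_right hab hk (n + 1)).trans (by congr 1; omega)⟩
    intro h
    have := (List.append_cancel_left h)
    rw [List.replicate_succ, List.replicate_succ] at this
    exact hab (List.cons.inj this).1

end Marker

section Intermediate

lemma vecEntropy_eq_sum {A : Type*} [Fintype A] (p : A → ℝ) :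
    vecEntropy p = ∑ i, Real.negMulLog (p i) := by
  simp [vecEntropy, Real.negMulLog, ← Finset.sum_neg_distrib]

lemma exists_simplex_entropy {m h c : ℝ} (hm : 0 < m) (hc : 0 ≤ c)
    (hlow : c + Real.negMulLog m < h) (hm1 : m ≤ 1) :
    ∃ (n : ℕ) (u : Fin n → ℝ), (∀ i, 0 < u i) ∧ ∑ i, u i = m ∧
      c + ∑ i, Real.negMulLog (u i) = h := by
  obtain ⟨n, hn⟩ : ∃ n : ℕ, h < m * Real.log ((n : ℝ) + 1) := by
    have h1 : Tendsto (fun n : ℕ => m * Real.log ((n : ℝ) + 1)) atTop atTop :=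
      (Real.tendsto_log_atTop.comp
        (tendsto_atTop_add_const_right _ _ tendsto_natCast_atTop_atTop)).const_mul_atTop hm
    exact (h1.eventually_gt_atTop h).exists
  have hn0 : (0 : ℝ) < n + 1 := by positivity
  set u : ℝ → Fin (n + 1) → ℝ := fun t i =>
    m * ((1 - t) * (if i = 0 then 1 else 0) + t / (n + 1)) with hu
  set E : ℝ → ℝ := fun t => c + ∑ i, Real.negMulLog (u t i) with hE
  have hcont : Continuous E := by
    refine continuous_const.add (continuous_finsetSum _ fun i _ =>
      Real.continuous_negMulLog.comp ?_)
    simp only [hu]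
    fun_prop
  have hE0 : E 0 < h := by
    have : E 0 = c + Real.negMulLog m := by
      simp only [hE, hu]
      congr 1
      rw [Finset.sum_eq_single 0 (by intro i _ hi; simp [hi]) (by simp)]
      simp
    rwa [this]
  have hE1 : h < E 1 := by
    have : E 1 = c + (m * Real.log ((n : ℝ) + 1) + Real.negMulLog m) := by
      simp only [hE, hu]
      simp only [sub_self, zero_mul, zero_add, Finset.sum_const, Finset.card_univ, Fintype.card_fin,
        nsmul_eq_mul, Real.negMulLog, Nat.cast_add, Nat.cast_one]
      rw [Real.log_mul hm.ne' (by positivity), Real.log_div one_ne_zero hn0.ne', Real.log_one]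
      field_simp
      ring
    rw [this]
    have := Real.negMulLog_nonneg hm.le hm1
    linarith
  obtain ⟨t, ht, hEt⟩ := intermediate_value_Ioo zero_le_one hcont.continuousOn ⟨hE0, hE1⟩
  refine ⟨n + 1, u t, fun i => mul_pos hm ?_, ?_, hEt⟩
  · have h1 : 0 < t / ((n : ℝ) + 1) := div_pos ht.1 hn0
    have h2 : 0 ≤ (1 - t) * (if i = 0 then 1 else 0) :=
      mul_nonneg (by linarith [ht.2]) (by split_ifs <;> norm_num)
    linarith
  · simp only [hu]
    rw [← Finset.mul_sum, Finset.sum_add_distrib, ← Finset.mul_sum]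
    simp
    field_simp
    ring

lemma exists_intermediate {a a' b b' h : ℝ} (ha : 0 < a) (ha1 : a < 1) (ha' : 0 < a')
    (hb : 0 < b) (hb1 : b < 1) (hb' : 0 < b') (hh : 0 < h) :
    ∃ (k n : ℕ) (r : Fin 3 ⊕ Fin n → ℝ), 0 < k ∧ IsProbVector r ∧ vecEntropy r = h ∧
      r (Sum.inl 0) ^ k * r (Sum.inl 1) = a ^ k * a' ∧
      r (Sum.inl 0) ^ k * r (Sum.inl 2) = b ^ k * b' := by
  have hf := Real.continuous_negMulLog
  obtain ⟨ρ, hρh, hρ⟩ : ∃ ρ, Real.negMulLog ρ + Real.negMulLog (1 - ρ) < h ∧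
      ρ ∈ Set.Ioo (max a b) 1 := by
    have h1 : Tendsto (fun ρ => Real.negMulLog ρ + Real.negMulLog (1 - ρ)) (nhdsWithin 1 (Set.Iio 1))
        (nhds 0) := by
      have : Continuous fun ρ => Real.negMulLog ρ + Real.negMulLog (1 - ρ) := by fun_prop
      simpa using (this.tendsto 1).mono_left nhdsWithin_le_nhds
    exact ((h1.eventually_lt_const hh).and (Ioo_mem_nhdsLT (max_lt ha1 hb1))).exists
  obtain ⟨hρ0, hρ1⟩ := hρ
  obtain ⟨haρ, hbρ⟩ := max_lt_iff.1 hρ0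
  have hρpos : 0 < ρ := ha.trans haρ
  have hlim : ∀ {c c' : ℝ}, 0 < c → c < ρ → Tendsto (fun k : ℕ => (c / ρ) ^ k * c') atTop (nhds 0) := by
    intro c c' hc hcρ
    simpa using (tendsto_pow_atTop_nhds_zero_of_lt_one (by positivity)
      ((div_lt_one hρpos).2 hcρ)).mul_const c'
  have hs := hlim (c' := a') ha haρ
  have hs' := hlim (c' := b') hb hbρ
  have hm := (tendsto_const_nhds (x := 1 - ρ)).sub hs |>.sub hs'
  simp only [sub_zero] at hm
  have hE := (tendsto_const_nhds (x := Real.negMulLog ρ)).add ((hf.tendsto _).comp hs) |>.add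
    ((hf.tendsto _).comp hs') |>.add ((hf.tendsto _).comp hm)
  simp only [Real.negMulLog_zero, add_zero] at hE
  obtain ⟨k, ⟨hk1, hk2⟩, hk0⟩ := ((hE.eventually_lt_const hρh).and
    (hm.eventually_const_lt (sub_pos.2 hρ1)) |>.and (eventually_gt_atTop 0)).exists
  simp only [Function.comp_apply] at hk1
  set s := (a / ρ) ^ k * a' with hs_def
  set s' := (b / ρ) ^ k * b' with hs'_def
  have hspos : 0 < s := by positivity
  have hspos' : 0 < s' := by positivity
  have hnn : 0 ≤ Real.negMulLog ρ + Real.negMulLog s + Real.negMulLog s' :=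
    add_nonneg (add_nonneg (Real.negMulLog_nonneg hρpos.le hρ1.le)
      (Real.negMulLog_nonneg hspos.le (by linarith)))
      (Real.negMulLog_nonneg hspos'.le (by linarith))
  obtain ⟨n, u, hu0, hu1, hu2⟩ := exists_simplex_entropy hk2 hnn hk1 (by linarith)
  refine ⟨k, n, Sum.elim ![ρ, s, s'] u, hk0, ⟨?_, ?_⟩, ?_, ?_, ?_⟩
  · rintro (i | i)
    · fin_cases i
      · exact hρpos
      · exact hspos
      · exact hspos'
    · exact hu0 i
  · simp [Fin.sum_univ_three, hu1]
  · rw [vecEntropy_eq_sum, ← hu2]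
    simp [Fin.sum_univ_three]
  · simp only [Sum.elim_inl, Matrix.cons_val_zero, Matrix.cons_val_one, hs_def]
    rw [← mul_assoc, ← mul_pow, mul_div_cancel₀ _ hρpos.ne']
  · simp only [Sum.elim_inl, Matrix.cons_val_zero, Matrix.cons_val, hs'_def]
    rw [← mul_assoc, ← mul_pow, mul_div_cancel₀ _ hρpos.ne']

end Intermediate

section Main
variable {A B C : Type*} [MeasurableSpace A] [MeasurableSpace B] [MeasurableSpace C]

lemma _root_.IsFactorMap.comp {μ : Measure (ℤ → A)} {ν : Measure (ℤ → B)} {κ : Measure (ℤ → C)}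
    [IsProbabilityMeasure μ] [IsProbabilityMeasure ν] {D : Set (ℤ → A)} {E : Set (ℤ → B)}
    {φ : (ℤ → A) → ℤ → B} {φ' : (ℤ → B) → ℤ → C} (h : IsFactorMap μ ν D φ)
    (h' : IsFactorMap ν κ E φ') : IsFactorMap μ κ (D ∩ φ ⁻¹' E) (φ' ∘ φ) where
  measurable_map := h'.measurable_map.comp h.measurable_map
  dom_measurable := h.dom_measurable.inter (h.measurable_map h'.dom_measurable)
  dom_shift_invariant := by
    ext x
    have hD : shift x ∈ D ↔ x ∈ D := Set.ext_iff.1 h.dom_shift_invariant x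
    have hE : shift (φ x) ∈ E ↔ φ x ∈ E := Set.ext_iff.1 h'.dom_shift_invariant (φ x)
    simp only [Set.mem_preimage, Set.mem_inter_iff, hD]
    refine and_congr_right fun hx => ?_
    rw [h.equivariant x hx, hE]
  dom_full := by
    have hE : μ (φ ⁻¹' E) = 1 := by
      rw [← Measure.map_apply h.measurable_map h'.dom_measurable, ← h.pushforward, h'.dom_full]
    have hm := h.measurable_map h'.dom_measurable
    rw [← mem_ae_iff_prob_eq_one (h.dom_measurable.inter hm)]
    exact inter_mem ((mem_ae_iff_prob_eq_one h.dom_measurable).2 h.dom_full)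
      ((mem_ae_iff_prob_eq_one hm).2 hE)
  pushforward := by
    rw [← Measure.map_map h'.measurable_map h.measurable_map, ← h.pushforward, ← h'.pushforward]
  equivariant x hx := by
    rw [Function.comp_apply, h.equivariant x hx.1, h'.equivariant _ hx.2, Function.comp_apply]

lemma exists_isomorphism_trans {μ : Measure (ℤ → A)} {ν : Measure (ℤ → B)} {κ : Measure (ℤ → C)}
    [IsProbabilityMeasure μ] [IsProbabilityMeasure ν] [IsProbabilityMeasure κ]
    (h : ∃ D E φ ψ, IsMeasurableIsomorphism μ ν D E φ ψ)
    (h' : ∃ D E φ ψ, IsMeasurableIsomorphism ν κ D E φ ψ) :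
    ∃ D E φ ψ, IsMeasurableIsomorphism μ κ D E φ ψ := by
  obtain ⟨D, E, φ, ψ, hφ, hψ, h1, h2⟩ := h
  obtain ⟨D', E', φ', ψ', hφ', hψ', h1', h2'⟩ := h'
  refine ⟨_, _, _, _, hφ.comp hφ', hψ'.comp hψ, ?_, ?_⟩
  · rintro x ⟨hx, hx'⟩
    obtain ⟨ha, hb⟩ := h1 x hx
    obtain ⟨ha', hb'⟩ := h1' _ hx'
    simp only [Function.comp_apply, Set.mem_inter_iff, Set.mem_preimage, hb']
    exact ⟨⟨ha', ha⟩, hb⟩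
  · rintro y ⟨hy, hy'⟩
    obtain ⟨ha', hb'⟩ := h2' y hy
    obtain ⟨ha, hb⟩ := h2 _ hy'
    simp only [Function.comp_apply, Set.mem_inter_iff, Set.mem_preimage, hb]
    exact ⟨⟨ha, ha'⟩, hb'⟩

lemma isFactorMap_of_subsingleton [Subsingleton A] [Subsingleton B] {μ : Measure (ℤ → A)}
    {ν : Measure (ℤ → B)} [IsProbabilityMeasure μ] [IsProbabilityMeasure ν] (y : ℤ → B) :
    IsFactorMap μ ν Set.univ fun _ => y where
  measurable_map := measurable_const
  dom_measurable := .univ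
  dom_shift_invariant := rfl
  dom_full := measure_univ
  pushforward := by
    have : IsProbabilityMeasure (μ.map fun _ => y) :=
      Measure.isProbabilityMeasure_map aemeasurable_const
    ext s _
    rcases s.eq_empty_or_nonempty with rfl | h
    · simp
    · rw [Subsingleton.eq_univ_of_nonempty h, measure_univ, measure_univ]
  equivariant _ _ := Subsingleton.elim _ _

variable [Fintype A] [Fintype B]

lemma vecEntropy_of_subsingleton [Subsingleton A] {p : A → ℝ} (hp : IsProbVector p) :
    vecEntropy p = 0 := by
  obtain ⟨a⟩ := nonempty_of_isProbVector hp
  have h := hp.2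
  rw [Fintype.sum_subsingleton _ a] at h
  rw [vecEntropy_eq_sum, Fintype.sum_subsingleton _ a, h, Real.negMulLog_one]

lemma lt_one_of_isProbVector [Nontrivial A] {p : A → ℝ} (hp : IsProbVector p) (a : A) : p a < 1 := by
  classical
  obtain ⟨b, hb⟩ := exists_ne a
  rw [← hp.2]
  exact Finset.single_lt_sum hb (Finset.mem_univ a) (Finset.mem_univ b) (hp.1 b)
    fun i _ _ => (hp.1 i).le

lemma vecEntropy_pos [Nontrivial A] {p : A → ℝ} (hp : IsProbVector p) : 0 < vecEntropy p := by
  rw [vecEntropy_eq_sum]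
  have := nonempty_of_isProbVector hp
  refine Finset.sum_pos (fun a _ => ?_) Finset.univ_nonempty
  have := mul_neg_of_pos_of_neg (hp.1 a) (Real.log_neg (hp.1 a) (lt_one_of_isProbVector hp a))
  rw [Real.negMulLog]
  linarith

end Main

end Ornstein

/-- **Ornstein's isomorphism theorem.** If `p` and `q` are strictly positive probability
vectors on finite alphabets with `H(p) = H(q)`, then `BS(p)` and `BS(q)` are measurably
isomorphic. -/
theorem measurably_isomorphic_of_entropy_eq
    {A B : Type*} [Fintype A] [Fintype B]
    [MeasurableSpace A] [DiscreteMeasurableSpace A]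
    [MeasurableSpace B] [DiscreteMeasurableSpace B]
    (p : A → ℝ) (q : B → ℝ) (hp : IsProbVector p) (hq : IsProbVector q)
    (μ : Measure (ℤ → A)) (ν : Measure (ℤ → B))
    (hμ : IsBernoulliMeasure μ p) (hν : IsBernoulliMeasure ν q)
    (hH : vecEntropy p = vecEntropy q) :
    ∃ (D : Set (ℤ → A)) (E : Set (ℤ → B))
      (φ : (ℤ → A) → (ℤ → B)) (ψ : (ℤ → B) → (ℤ → A)),
      IsMeasurableIsomorphism μ ν D E φ ψ := by
  have := Ornstein.nonempty_of_isProbVector hp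
  have := Ornstein.nonempty_of_isProbVector hq
  have := Ornstein.isProbabilityMeasure_of_bernoulli hμ ‹_›
  have := Ornstein.isProbabilityMeasure_of_bernoulli hν ‹_›
  rcases subsingleton_or_nontrivial A with hA | hA
  · rcases subsingleton_or_nontrivial B with hB | hB
    · obtain ⟨x⟩ : Nonempty (ℤ → A) := inferInstance
      obtain ⟨y⟩ : Nonempty (ℤ → B) := inferInstance
      exact ⟨_, _, _, _, Ornstein.isFactorMap_of_subsingleton y,
        Ornstein.isFactorMap_of_subsingleton x,
        fun _ _ => ⟨trivial, Subsingleton.elim _ _⟩, fun _ _ => ⟨trivial, Subsingleton.elim _ _⟩⟩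
    · exact absurd hH (Ornstein.vecEntropy_of_subsingleton hp ▸ (Ornstein.vecEntropy_pos hq).ne)
  · rcases subsingleton_or_nontrivial B with hB | hB
    · exact absurd hH (Ornstein.vecEntropy_of_subsingleton hq ▸ (Ornstein.vecEntropy_pos hp).ne')
    · obtain ⟨a, a', ha⟩ := exists_pair_ne A
      obtain ⟨b, b', hb⟩ := exists_pair_ne B
      obtain ⟨k, n, r, hk, hr, hrH, hra, hrb⟩ := Ornstein.exists_intermediate (hp.1 a)
        (Ornstein.lt_one_of_isProbVector hp a) (hp.1 a') (hq.1 b) (Ornstein.lt_one_of_isProbVector hq b)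
        (hq.1 b') (Ornstein.vecEntropy_pos hp)
      let _ : MeasurableSpace (Fin 3 ⊕ Fin n) := ⊤
      have : DiscreteMeasurableSpace (Fin 3 ⊕ Fin n) := ⟨fun _ => trivial⟩
      obtain ⟨κ, hκ⟩ := Ornstein.exists_bernoulli hr
      have := Ornstein.isProbabilityMeasure_of_bernoulli hκ ⟨Sum.inl 0⟩
      refine Ornstein.exists_isomorphism_trans (ν := κ)
        (Ornstein.exists_isomorphism_of_marked (Ornstein.marked_marker hp hμ ha hk)
          (Ornstein.marked_marker (a := Sum.inl 0) (b := Sum.inl 1) hr hκ (by simp) hk) ?_ ?_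
          hrH.symm)
        (Ornstein.exists_isomorphism_of_marked
          (Ornstein.marked_marker (a := Sum.inl 0) (b := Sum.inl 2) hr hκ (by simp) hk)
          (Ornstein.marked_marker hq hν hb hk) ?_ ?_ (hrH.trans hH))
      · simp
      · rw [Ornstein.wt_marker, Ornstein.wt_marker, hra]
      · simp
      · rw [Ornstein.wt_marker, Ornstein.wt_marker, hrb]
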